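/- arXiv:1510.05191 — 2 statements merged into one kernel-verified Lean document; each statement's English description precedes it below -/
import Mathlib

section
/- Let 0 < δ < 1/2, c₁, c₂ > 0, C₀ > 0 and let M be a positive integer. There exists a constant C > 0 such that for all real a, x, T > 0 with T ≤ x/3 and c₁·x^{1−δ} ≤ T ≤ c₂·x^{1−δ}, and every (a,x,T,C₀,M)-admissible test function φ, the following hold: |φ̌(r)| ≤ C·r^{−3/2}·e^{−r/2} for all r with 1 ≤ r ≤ a/(8x); |φ̌(r)| ≤ C·r^{−1} for all r with max(a/(8x), 1) ≤ r ≤ a/x; and |φ̌(r)| ≤ C·min(r^{−3/2}, r^{−5/2}·x/T) for all r ≥ max(a/x, 1). -/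
open Real

/-- The modified Bessel function of imaginary order:
`K_{iν}(x) = ∫_0^∞ exp(−x cosh t) cos(νt) dt`. -/
noncomputable def KBessel (ν x : ℝ) : ℝ :=
  ∫ t in Set.Ioi (0:ℝ), Real.exp (-x * Real.cosh t) * Real.cos (ν * t)

/-- `f` is piecewise monotone on at most `M` subintervals of `[0,∞)`:
there are points `0 = a 0 ≤ a 1 ≤ … ≤ a (M−1)` such that `f` is monotone or antitone
on each `[a i, a (i+1)]` for `i + 1 < M`, and on the final ray `[a (M−1), ∞)`. -/
def PiecewiseMono (f : ℝ → ℝ) (M : ℕ) : Prop :=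
  ∃ a : ℕ → ℝ, a 0 = 0 ∧ Monotone a ∧
    (∀ i : ℕ, i + 1 < M →
      MonotoneOn f (Set.Icc (a i) (a (i + 1))) ∨
        AntitoneOn f (Set.Icc (a i) (a (i + 1)))) ∧
    (MonotoneOn f (Set.Ici (a (M - 1))) ∨ AntitoneOn f (Set.Ici (a (M - 1))))

/-- An `(a,x,T,C₀,M)`-admissible test function. -/
def IsAdmissible (a x T C₀ : ℝ) (M : ℕ) (φ : ℝ → ℝ) : Prop :=
  ContDiff ℝ (⊤ : ℕ∞) φ ∧
  (∀ t : ℝ, 0 ≤ φ t ∧ φ t ≤ 1) ∧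
  (∀ t : ℝ, a / (2 * x) ≤ t → t ≤ a / x → φ t = 1) ∧
  (∀ t : ℝ, t ≤ a / (2 * x + 2 * T) → φ t = 0) ∧
  (∀ t : ℝ, a / (x - T) ≤ t → φ t = 0) ∧
  (∀ t : ℝ, 0 ≤ t → |deriv φ t| ≤ C₀ * x ^ 2 / (a * T)) ∧
  PiecewiseMono φ M ∧ PiecewiseMono (deriv φ) M

/-- The `K`-Bessel transform `φ̌(r) = cosh(πr) ∫_0^∞ K_{2ir}(u) φ(u) du/u`. -/
noncomputable def phiCheck (φ : ℝ → ℝ) (r : ℝ) : ℝ :=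
  Real.cosh (Real.pi * r) * ∫ u in Set.Ioi (0:ℝ), KBessel (2 * r) u * φ u / u


lemma intf_sub {f g : ℝ → ℝ} {μ : MeasureTheory.Measure ℝ} (hf : MeasureTheory.Integrable f μ)
    (hg : MeasureTheory.Integrable g μ) : MeasureTheory.Integrable (fun t => f t - g t) μ :=
  hf.sub hg

lemma cosh_ge_half {t : ℝ} (_ht : 0 ≤ t) : t / 2 ≤ Real.cosh t := by
  have h1 := Real.add_one_le_exp t
  have h2 := Real.exp_pos (-t)
  rw [Real.cosh_eq]; linarith

lemma pow_mul_exp_le (n : ℕ) {u y : ℝ} (hu : 0 < u) (hy : 0 ≤ y) :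
    y ^ n * Real.exp (-u * y) ≤ (n.factorial * (2 / u) ^ n) * Real.exp (-(u / 2) * y) := by
  have h := Real.pow_div_factorial_le_exp (u * y / 2) (by positivity) n
  have hf : (0:ℝ) < n.factorial := by exact_mod_cast n.factorial_pos
  rw [div_le_iff₀ hf] at h
  have e : y ^ n = (2 / u) ^ n * (u * y / 2) ^ n := by
    rw [← mul_pow]; congr 1; field_simp
  rw [e]
  have e2 : Real.exp (-(u / 2) * y) = Real.exp (u * y / 2) * Real.exp (-u * y) := by
    rw [← Real.exp_add]; congr 1; ring
  rw [e2]
  have h3 : 0 < Real.exp (-u * y) := Real.exp_pos _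
  have h4 : 0 < (2 / u) ^ n := by positivity
  calc (2 / u) ^ n * (u * y / 2) ^ n * Real.exp (-u * y)
      ≤ (2 / u) ^ n * (Real.exp (u * y / 2) * n.factorial) * Real.exp (-u * y) := by gcongr
    _ = _ := by ring

lemma cosh_pow_exp_le (n : ℕ) {u t : ℝ} (hu : 0 < u) (ht : 0 ≤ t) :
    Real.cosh t ^ n * Real.exp (-u * Real.cosh t) ≤
      (n.factorial * (2 / u) ^ n) * Real.exp (-(u / 4) * t) := by
  refine (pow_mul_exp_le n hu (Real.cosh_pos t).le).trans ?_
  have := cosh_ge_half ht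
  have h2 : -(u / 2) * Real.cosh t ≤ -(u / 4) * t := by nlinarith
  gcongr

lemma intg (n : ℕ) {u : ℝ} (hu : 0 < u) :
    MeasureTheory.IntegrableOn (fun t => Real.cosh t ^ n * Real.exp (-u * Real.cosh t))
      (Set.Ioi (0:ℝ)) := by
  have h := (exp_neg_integrableOn_Ioi 0 (b := u / 4) (by positivity)).const_mul
    (n.factorial * (2 / u) ^ n)
  refine MeasureTheory.Integrable.mono' h ?_ ?_
  · exact Continuous.aestronglyMeasurable (by fun_prop)
  · refine (MeasureTheory.ae_restrict_iff' measurableSet_Ioi).2 (Filter.Eventually.of_forall ?_)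
    intro t ht
    rw [Real.norm_of_nonneg (by have := Real.cosh_pos t; positivity)]
    exact cosh_pow_exp_le n hu (le_of_lt ht)

/-- Dominated integrability. -/
lemma intg_of_le (n : ℕ) {u : ℝ} (hu : 0 < u) {f : ℝ → ℝ} (hf : Continuous f) (C : ℝ)
    (h : ∀ t, 0 ≤ t → |f t| ≤ C * (Real.cosh t ^ n * Real.exp (-u * Real.cosh t))) :
    MeasureTheory.IntegrableOn f (Set.Ioi (0:ℝ)) := by
  refine MeasureTheory.Integrable.mono' ((intg n hu).const_mul C) hf.aestronglyMeasurable ?_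
  refine (MeasureTheory.ae_restrict_iff' measurableSet_Ioi).2 (Filter.Eventually.of_forall ?_)
  intro t ht
  exact h t (le_of_lt ht)

noncomputable def Kn (n : ℕ) (ν u : ℝ) : ℝ :=
  ∫ t in Set.Ioi (0:ℝ), Real.cosh t ^ n * Real.exp (-u * Real.cosh t) * Real.cos (ν * t)

lemma Kn_int (n : ℕ) (ν : ℝ) {u : ℝ} (hu : 0 < u) : MeasureTheory.IntegrableOn
    (fun t => Real.cosh t ^ n * Real.exp (-u * Real.cosh t) * Real.cos (ν * t))
    (Set.Ioi (0:ℝ)) := by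
  refine intg_of_le n hu (by fun_prop) 1 ?_
  intro t _
  have := Real.cosh_pos t
  rw [abs_mul, abs_of_nonneg (by positivity), one_mul]
  exact mul_le_of_le_one_right (by positivity) (Real.abs_cos_le_one _)

lemma Kn_hasDeriv (n : ℕ) (ν : ℝ) {u : ℝ} (hu : 0 < u) :
    HasDerivAt (Kn n ν) (-Kn (n + 1) ν u) u := by
  have key := hasDerivAt_integral_of_dominated_loc_of_deriv_le
    (μ := MeasureTheory.volume.restrict (Set.Ioi (0:ℝ)))
    (F := fun v t => Real.cosh t ^ n * Real.exp (-v * Real.cosh t) * Real.cos (ν * t))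
    (F' := fun v t => -(Real.cosh t ^ (n+1) * Real.exp (-v * Real.cosh t) * Real.cos (ν * t)))
    (x₀ := u) (s := Set.Ioi (u/2)) (bound := fun t => Real.cosh t ^ (n+1) * Real.exp (-(u/2) * Real.cosh t))
    (Ioi_mem_nhds (by linarith)) (Filter.Eventually.of_forall fun v =>
      Continuous.aestronglyMeasurable (by fun_prop)) (Kn_int n ν hu)
    (Continuous.aestronglyMeasurable (by fun_prop)) ?_ (intg (n+1) (by positivity)) ?_
  · have := key.2
    rw [MeasureTheory.integral_neg] at this
    exact this
  · refine Filter.Eventually.of_forall ?_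
    intro t v hv
    have hc := Real.cosh_pos t
    have hv' : u / 2 < v := hv
    rw [norm_neg, Real.norm_eq_abs, abs_mul, abs_of_nonneg (by positivity)]
    refine (mul_le_of_le_one_right (by positivity) (Real.abs_cos_le_one _)).trans ?_
    gcongr
  · refine Filter.Eventually.of_forall ?_
    intro t v hv
    have h1 : HasDerivAt (fun v : ℝ => -v * Real.cosh t) (-1 * Real.cosh t) v :=
      ((hasDerivAt_id v).neg).mul_const _
    have h2 := ((h1.exp.const_mul (Real.cosh t ^ n)).mul_const (Real.cos (ν * t)))
    exact h2.congr_deriv (by ring)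

lemma exp_cosh_tendsto (n : ℕ) {u : ℝ} (hu : 0 < u) :
    Filter.Tendsto (fun t => Real.cosh t ^ n * Real.exp (-u * Real.cosh t)) Filter.atTop (nhds 0) := by
  have h : Filter.Tendsto (fun t : ℝ => (n.factorial * (2 / u) ^ n) * Real.exp (-(u / 4) * t))
      Filter.atTop (nhds (((n.factorial * (2 / u) ^ n) * 0))) := by
    refine Filter.Tendsto.const_mul _ ?_
    exact Real.tendsto_exp_atBot.comp (Filter.tendsto_id.const_mul_atTop_of_neg (by linarith))
  rw [mul_zero] at h
  refine tendsto_of_tendsto_of_tendsto_of_le_of_le' tendsto_const_nhds h ?_ ?_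
  · filter_upwards with t
    have := Real.cosh_pos t; positivity
  · filter_upwards [Filter.eventually_ge_atTop 0] with t ht
    exact cosh_pow_exp_le n hu ht

lemma abs_sinh_le_cosh (t : ℝ) : |Real.sinh t| ≤ Real.cosh t := by
  have := Real.cosh_sq t
  exact abs_le_of_sq_le_sq (by linarith) (Real.cosh_pos t).le

lemma nuK (ν : ℝ) {u : ℝ} (hu : 0 < u) :
    ν * Kn 0 ν u = ∫ t in Set.Ioi (0:ℝ),
      u * Real.sinh t * Real.exp (-u * Real.cosh t) * Real.sin (ν * t) := by
  have i1 : MeasureTheory.IntegrableOn (fun t => u * Real.sinh t * Real.exp (-u * Real.cosh t) * Real.sin (ν * t)) (Set.Ioi (0:ℝ)) := by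
    refine intg_of_le 1 hu (by fun_prop) u ?_
    intro t _
    have h0 := Real.exp_pos (-u * Real.cosh t)
    rw [abs_mul, abs_mul, abs_mul, abs_of_pos hu, abs_of_pos h0]
    refine (mul_le_of_le_one_right (by positivity) (Real.abs_sin_le_one _)).trans ?_
    rw [mul_assoc, pow_one]
    gcongr
    exact abs_sinh_le_cosh t
  have i2 := (Kn_int 0 ν hu).const_mul ν
  have key := MeasureTheory.integral_Ioi_of_hasDerivAt_of_tendsto' (a := 0) (m := 0)
    (f := fun t => Real.exp (-u * Real.cosh t) * Real.sin (ν * t))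
    (f' := fun t => ν * (Real.cosh t ^ 0 * Real.exp (-u * Real.cosh t) * Real.cos (ν * t)) - u * Real.sinh t * Real.exp (-u * Real.cosh t) * Real.sin (ν * t))
    ?_ (intf_sub i2 i1) ?_
  · rw [MeasureTheory.integral_sub i2 i1, MeasureTheory.integral_const_mul] at key
    simp only [mul_zero, Real.sin_zero, sub_zero] at key
    unfold Kn
    linarith
  · intro t _
    have h1 := ((Real.hasDerivAt_cosh t).const_mul (-u)).exp
    have h2 := ((hasDerivAt_id t).const_mul ν).sin
    refine (h1.fun_mul h2).congr_deriv ?_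
    simp only [id]; ring
  · have h := exp_cosh_tendsto 0 hu
    refine squeeze_zero_norm ?_ h
    intro t
    have h0 := Real.exp_pos (-u * Real.cosh t)
    rw [norm_mul, Real.norm_of_nonneg h0.le, pow_zero, one_mul]
    exact mul_le_of_le_one_right h0.le (Real.abs_sin_le_one _)

lemma Kn_ode (ν : ℝ) {u : ℝ} (hu : 0 < u) :
    u ^ 2 * Kn 2 ν u - u * Kn 1 ν u - (u ^ 2 - ν ^ 2) * Kn 0 ν u = 0 := by
  have i0 := (Kn_int 0 ν hu).const_mul (u ^ 2 - ν ^ 2)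
  have i1 := (Kn_int 1 ν hu).const_mul u
  have i2 := (Kn_int 2 ν hu).const_mul (u ^ 2)
  have key := MeasureTheory.integral_Ioi_of_hasDerivAt_of_tendsto' (a := 0) (m := 0)
    (f := fun t => -u * Real.sinh t * Real.exp (-u * Real.cosh t) * Real.cos (ν * t)
      + ν * (Real.exp (-u * Real.cosh t) * Real.sin (ν * t)))
    (f' := fun t => u ^ 2 * (Real.cosh t ^ 2 * Real.exp (-u * Real.cosh t) * Real.cos (ν * t))
      - u * (Real.cosh t ^ 1 * Real.exp (-u * Real.cosh t) * Real.cos (ν * t))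
      - (u ^ 2 - ν ^ 2) * (Real.cosh t ^ 0 * Real.exp (-u * Real.cosh t) * Real.cos (ν * t)))
    ?_ (intf_sub (intf_sub i2 i1) i0) ?_
  · rw [MeasureTheory.integral_sub (intf_sub i2 i1) i0, MeasureTheory.integral_sub i2 i1,
      MeasureTheory.integral_const_mul, MeasureTheory.integral_const_mul,
      MeasureTheory.integral_const_mul] at key
    simp only [mul_zero, Real.sin_zero, Real.sinh_zero, sub_zero, zero_mul, add_zero] at key
    exact key
  · intro t _
    have h1 := ((Real.hasDerivAt_cosh t).const_mul (-u)).exp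
    have h2 := ((hasDerivAt_id t).const_mul ν).sin
    have h3 := ((hasDerivAt_id t).const_mul ν).cos
    have h4 := (Real.hasDerivAt_sinh t).const_mul (-u)
    have hs := Real.cosh_sq t
    refine (((h4.fun_mul h1).fun_mul h3).fun_add ((h1.fun_mul h2).const_mul ν)).congr_deriv ?_
    simp only [id, pow_one, pow_zero]
    linear_combination (-1) * (Real.exp (-u * Real.cosh t) * Real.cos (ν * t)) * u ^ 2 * hs
  · have ha := exp_cosh_tendsto 0 hu
    have hb := exp_cosh_tendsto 1 hu
    have h := (hb.const_mul u).add (ha.const_mul |ν|)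
    simp only [mul_zero, add_zero] at h
    refine squeeze_zero_norm ?_ h
    intro t
    have h0 := Real.exp_pos (-u * Real.cosh t)
    refine (norm_add_le _ _).trans ?_
    simp only [norm_mul, Real.norm_eq_abs, abs_neg, abs_of_pos hu, abs_of_pos h0, pow_zero, pow_one, one_mul]
    have := abs_sinh_le_cosh t
    have hc := Real.cosh_pos t
    refine add_le_add ?_ ?_
    · refine (mul_le_of_le_one_right (by positivity) (Real.abs_cos_le_one _)).trans ?_
      rw [mul_assoc]; gcongr
    · gcongr
      exact mul_le_of_le_one_right h0.le (Real.abs_sin_le_one _)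

lemma Kn_decay (ν : ℝ) : ∃ B : ℝ, 0 < B ∧ ∀ u : ℝ, 1 ≤ u → |Kn 0 ν u| ≤ B * Real.exp (-u) := by
  set J := ∫ t in Set.Ioi (0:ℝ), Real.cosh t ^ 0 * Real.exp (-1 * Real.cosh t) with hJ
  have hJ0 : 0 ≤ J := by
    apply MeasureTheory.integral_nonneg
    intro t
    simp only [Pi.zero_apply]
    positivity
  refine ⟨Real.exp 1 * (J + 1), by positivity, ?_⟩
  intro u hu
  have h : |Kn 0 ν u| ≤ ∫ t in Set.Ioi (0:ℝ), Real.exp (1 - u) * (Real.cosh t ^ 0 * Real.exp (-1 * Real.cosh t)) := by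
    unfold Kn
    rw [← Real.norm_eq_abs]
    refine MeasureTheory.norm_integral_le_of_norm_le ((intg 0 one_pos).const_mul _) ?_
    refine Filter.Eventually.of_forall ?_
    intro t
    simp only [pow_zero, one_mul]
    rw [norm_mul, Real.norm_of_nonneg (Real.exp_pos _).le]
    refine (mul_le_of_le_one_right (Real.exp_pos _).le (Real.abs_cos_le_one _)).trans ?_
    rw [← Real.exp_add]
    apply Real.exp_le_exp.2
    nlinarith [Real.one_le_cosh t]
  rw [MeasureTheory.integral_const_mul] at h
  refine h.trans ?_
  rw [Real.exp_sub, ← hJ, Real.exp_neg]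
  have h1 := Real.exp_pos 1
  have h2 := Real.exp_pos u
  rw [div_eq_mul_inv]
  have : 0 < (Real.exp u)⁻¹ := by positivity
  nlinarith [mul_pos h1 this]

open MeasureTheory Filter Topology in
lemma int_h : Integrable (fun t : ℝ => Real.exp t * Real.exp (-Real.exp t)) := by
  have h1 : IntegrableOn (fun x : ℝ => Real.exp (-x)) (Set.Ioi 0) := by
    simpa using exp_neg_integrableOn_Ioi 0 (b := 1) one_pos
  have h2 : Set.Ioi (0:ℝ) = Real.exp '' Set.univ := by
    rw [Set.image_univ, Real.range_exp]
  rw [h2, integrableOn_image_iff_integrableOn_abs_deriv_smul MeasurableSet.univ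
    (fun x _ => (Real.hasDerivAt_exp x).hasDerivWithinAt) Real.exp_injective.injOn] at h1
  simpa [Real.abs_exp] using h1

noncomputable def gB (ν u t : ℝ) : ℂ :=
  Complex.exp ((1 + ν * Complex.I) * t) * (Real.exp (-Real.exp t - u ^ 2 / 4 * Real.exp (-t)) : ℝ)

lemma gB_cont (ν u : ℝ) : Continuous (gB ν u) := by
  unfold gB; fun_prop

lemma gB_norm (ν u t : ℝ) : ‖gB ν u t‖ ≤ Real.exp t * Real.exp (-Real.exp t) := by
  unfold gB
  rw [norm_mul, Complex.norm_exp, Complex.norm_real, Real.norm_of_nonneg (Real.exp_pos _).le]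
  have : ((1 + (ν:ℂ) * Complex.I) * t).re = t := by simp
  rw [this]
  gcongr
  have := Real.exp_pos (-t)
  nlinarith [mul_nonneg (sq_nonneg u) this.le]

lemma gB_int (ν u : ℝ) : MeasureTheory.Integrable (gB ν u) :=
  MeasureTheory.Integrable.mono' int_h (gB_cont ν u).aestronglyMeasurable
    (Filter.Eventually.of_forall (gB_norm ν u))

open MeasureTheory Filter Topology in
lemma gB_zero (ν : ℝ) : ∫ t : ℝ, gB ν 0 t = Complex.Gamma (1 + ν * Complex.I) := by
  rw [Complex.Gamma_eq_integral (by simp), Complex.GammaIntegral]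
  have h2 : Set.Ioi (0:ℝ) = Real.exp '' Set.univ := by
    rw [Set.image_univ, Real.range_exp]
  rw [h2, integral_image_eq_integral_abs_deriv_smul MeasurableSet.univ
    (fun x _ => (Real.hasDerivAt_exp x).hasDerivWithinAt) Real.exp_injective.injOn]
  rw [Measure.restrict_univ]
  congr 1
  ext t
  unfold gB
  have e1 : ((Real.exp t : ℝ) : ℂ) ^ (1 + (ν:ℂ) * Complex.I - 1) = Complex.exp (ν * Complex.I * t) := by
    rw [Complex.cpow_def_of_ne_zero (by exact_mod_cast (Real.exp_pos t).ne'),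
      ← Complex.ofReal_log (Real.exp_pos t).le, Real.log_exp]
    congr 1; ring
  rw [e1, Real.abs_exp, Complex.real_smul, add_mul, Complex.exp_add, one_mul, ← Complex.ofReal_exp]
  simp
  ring

open MeasureTheory Filter Topology in
lemma gB_tendsto (ν : ℝ) :
    Tendsto (fun u : ℝ => ∫ t : ℝ, gB ν u t) (𝓝 0) (𝓝 (∫ t : ℝ, gB ν 0 t)) := by
  refine tendsto_integral_filter_of_dominated_convergence _ ?_ ?_ int_h ?_
  · exact Eventually.of_forall fun u => (gB_cont ν u).aestronglyMeasurable
  · exact Eventually.of_forall fun u => Eventually.of_forall (gB_norm ν u)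
  · refine Eventually.of_forall fun t => ?_
    have : Continuous (fun u => gB ν u t) := by unfold gB; fun_prop
    exact this.tendsto 0

lemma gB_shift (ν : ℝ) {u : ℝ} (hu : 0 < u) (t : ℝ) :
    Complex.exp (ν * Complex.I * Real.log (2 / u)) * gB ν u (t - Real.log (2 / u)) =
      (u / 2 : ℝ) * (Complex.exp ((1 + ν * Complex.I) * t) * (Real.exp (-u * Real.cosh t) : ℝ)) := by
  unfold gB
  have e1 : Real.exp (-(t - Real.log (2 / u))) = Real.exp (-t) * (2 / u) := by
    rw [neg_sub, sub_eq_add_neg, Real.exp_add, Real.exp_log (by positivity)]; ring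
  have e2 : Real.exp (t - Real.log (2 / u)) = Real.exp t * (u / 2) := by
    rw [Real.exp_sub, Real.exp_log (by positivity)]; field_simp
  have e3 : -Real.exp (t - Real.log (2 / u)) - u ^ 2 / 4 * Real.exp (-(t - Real.log (2 / u)))
      = -u * Real.cosh t := by
    rw [e1, e2, Real.cosh_eq]; field_simp; ring
  rw [e3, ← mul_assoc, ← Complex.exp_add, ← mul_assoc]
  congr 1
  have e4 : ((u / 2 : ℝ) : ℂ) = Complex.exp (-(Real.log (2 / u) : ℝ)) := by
    rw [← Complex.ofReal_neg, ← Real.log_inv, ← Complex.ofReal_exp, Real.exp_log (by positivity),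
      inv_div]
  rw [e4, ← Complex.exp_add]
  congr 1
  push_cast
  ring

open MeasureTheory Filter Topology in
lemma K_gB (ν : ℝ) {u : ℝ} (hu : 0 < u) :
    (u * Kn 1 ν u) ^ 2 + (ν * Kn 0 ν u) ^ 2 = ‖∫ t : ℝ, gB ν u t‖ ^ 2 := by
  set f : ℝ → ℂ := fun t => (u / 2 : ℝ) * (Complex.exp ((1 + ν * Complex.I) * t) * (Real.exp (-u * Real.cosh t) : ℝ)) with hf
  have hff : f = fun t => Complex.exp (ν * Complex.I * Real.log (2 / u)) * gB ν u (t - Real.log (2 / u)) := by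
    ext t; rw [gB_shift ν hu]
  have fint : Integrable f := by
    rw [hff]; exact ((gB_int ν u).comp_sub_right _).const_mul _
  have h1 : ∫ t, f t = Complex.exp (ν * Complex.I * Real.log (2 / u)) * ∫ t, gB ν u t := by
    rw [hff, integral_const_mul, integral_sub_right_eq_self (gB ν u)]
  have h2 : ‖∫ t, gB ν u t‖ = ‖∫ t, f t‖ := by
    rw [h1, norm_mul, Complex.norm_exp]
    simp
  have i1 := (Kn_int 1 ν hu).const_mul u
  have i2 : MeasureTheory.IntegrableOn (fun t => u * Real.sinh t * Real.exp (-u * Real.cosh t) * Real.sin (ν * t)) (Set.Ioi (0:ℝ)) := by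
    refine intg_of_le 1 hu (by fun_prop) u ?_
    intro t _
    have h0 := Real.exp_pos (-u * Real.cosh t)
    rw [abs_mul, abs_mul, abs_mul, abs_of_pos hu, abs_of_pos h0]
    refine (mul_le_of_le_one_right (by positivity) (Real.abs_sin_le_one _)).trans ?_
    rw [mul_assoc, pow_one]
    gcongr
    exact abs_sinh_le_cosh t
  have h3 : ∫ t, f t = (u * Kn 1 ν u : ℝ) + (ν * Kn 0 ν u : ℝ) * Complex.I := by
    rw [← integral_add_compl (s := Set.Ioi (0:ℝ)) measurableSet_Ioi fint, Set.compl_Ioi]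
    have h4 : ∫ t in Set.Iic (0:ℝ), f t = ∫ t in Set.Ioi (0:ℝ), f (-t) := by
      rw [integral_comp_neg_Ioi, neg_zero]
    rw [h4, ← integral_add fint.integrableOn fint.comp_neg.integrableOn, nuK ν hu]
    unfold Kn
    rw [← integral_const_mul, ← integral_complex_ofReal, ← integral_complex_ofReal,
      ← integral_mul_const, ← integral_add]
    · congr 1
      ext t
      simp only [hf]
      rw [Real.cosh_neg, ← mul_add, ← add_mul]
      have : Complex.exp ((1 + ν * Complex.I) * t) + Complex.exp ((1 + ν * Complex.I) * (-t : ℝ))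
        = 2 * (Complex.cosh t * Complex.cos (ν * t) + Complex.sinh t * Complex.sin (ν * t) * Complex.I) := by
        rw [← Complex.cosh_mul_I]
        have e5 : Complex.sin (ν * t) * Complex.I = Complex.sinh (ν * t * Complex.I) := by
          rw [Complex.sinh_mul_I]
        rw [mul_assoc (Complex.sinh t), e5, ← Complex.cosh_add, Complex.cosh]
        push_cast
        have e6 : (1 + (ν:ℂ) * Complex.I) * t = t + ν * t * Complex.I := by ring
        have e7 : (1 + (ν:ℂ) * Complex.I) * -t = -(t + ν * t * Complex.I) := by ring
        rw [e6, e7]; ring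
      rw [this]
      push_cast
      ring
    · exact i1.ofReal
    · exact i2.ofReal.mul_const _
  rw [h2, h3, Complex.sq_norm, Complex.normSq_add_mul_I]

lemma Gamma_sq {ν : ℝ} (hν : 0 < ν) :
    ‖Complex.Gamma (1 + ν * Complex.I)‖ ^ 2 = Real.pi * ν / Real.sinh (Real.pi * ν) := by
  have h1 := Complex.Gamma_mul_Gamma_one_sub (ν * Complex.I)
  have hne : (ν : ℂ) * Complex.I ≠ 0 := by
    simp [hν.ne']
  have h2 := Complex.Gamma_add_one _ hne
  have h3 : (1 : ℂ) - ν * Complex.I = (starRingEnd ℂ) (1 + ν * Complex.I) := by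
    simp [sub_eq_add_neg]
  have h4 : Complex.sin (Real.pi * (ν * Complex.I)) = (Real.sinh (Real.pi * ν) : ℝ) * Complex.I := by
    rw [← mul_assoc, Complex.sin_mul_I]; push_cast; rfl
  rw [h3, Complex.Gamma_conj, h4] at h1
  rw [add_comm] at h2
  have hs : 0 < Real.sinh (Real.pi * ν) := Real.sinh_pos_iff.2 (by positivity)
  have hs' : ((Real.sinh (Real.pi * ν) : ℝ) : ℂ) ≠ 0 := by exact_mod_cast hs.ne'
  have h5 : Complex.Gamma (1 + ν * Complex.I) * (starRingEnd ℂ) (Complex.Gamma (1 + ν * Complex.I))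
      = ((Real.pi * ν / Real.sinh (Real.pi * ν) : ℝ) : ℂ) := by
    nth_rewrite 1 [h2]
    rw [mul_assoc, h1]
    push_cast
    push_cast at hs'
    field_simp [Complex.I_ne_zero]
  rw [Complex.mul_conj] at h5
  rw [Complex.sq_norm]
  exact_mod_cast h5

/-- The energy bound. -/
lemma energy_bound {ν : ℝ} (hν : 0 < ν) {u : ℝ} (hu : 0 < u) :
    (u * Kn 1 ν u) ^ 2 + (ν ^ 2 - u ^ 2) * Kn 0 ν u ^ 2 ≤ Real.pi * ν / Real.sinh (Real.pi * ν) := by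
  set E : ℝ → ℝ := fun u => (u * Kn 1 ν u) ^ 2 + (ν ^ 2 - u ^ 2) * Kn 0 ν u ^ 2 with hE
  have hd : ∀ v : ℝ, 0 < v → HasDerivAt E (-2 * v * Kn 0 ν v ^ 2) v := by
    intro v hv
    have h0 := Kn_hasDeriv 0 ν hv
    have h1 := Kn_hasDeriv 1 ν hv
    have ho := Kn_ode ν hv
    refine ((((hasDerivAt_id v).fun_mul h1).fun_pow 2).fun_add
      ((((hasDerivAt_id v).fun_pow 2).const_sub (ν ^ 2)).fun_mul (h0.fun_pow 2))).congr_deriv ?_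
    simp only [id, zero_add]
    norm_num
    linear_combination (-2) * Kn 1 ν v * ho
  have hanti : AntitoneOn E (Set.Ioi 0) := by
    refine antitoneOn_of_hasDerivWithinAt_nonpos (convex_Ioi 0)
      (fun v hv => (hd v hv).continuousAt.continuousWithinAt) (f' := fun v => -2 * v * Kn 0 ν v ^ 2) ?_ ?_
    · intro v hv
      rw [interior_Ioi] at hv
      exact (hd v hv).hasDerivWithinAt
    · intro v hv
      rw [interior_Ioi] at hv
      have hv' : 0 < v := hv
      have := mul_nonneg hv'.le (sq_nonneg (Kn 0 ν v))
      linarith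
  have ht : Filter.Tendsto (fun v : ℝ => ‖∫ t : ℝ, gB ν v t‖ ^ 2) (nhdsWithin 0 (Set.Ioi 0))
      (nhds (Real.pi * ν / Real.sinh (Real.pi * ν))) := by
    rw [← Gamma_sq hν, ← gB_zero]
    exact (((gB_tendsto ν).norm).pow 2).mono_left nhdsWithin_le_nhds
  refine ge_of_tendsto ht ?_
  filter_upwards [Ioo_mem_nhdsGT hu] with v hv
  rw [← K_gB ν hv.1]
  have h1 : E u ≤ E v := hanti hv.1 hu hv.2.le
  have h2 : E v ≤ (v * Kn 1 ν v) ^ 2 + (ν * Kn 0 ν v) ^ 2 := by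
    simp only [hE]
    nlinarith [mul_nonneg (sq_nonneg v) (sq_nonneg (Kn 0 ν v))]
  exact h1.trans h2

/-- Abstract data of a normalised solution of the Bessel equation. -/
structure Sol (ν : ℝ) (k p : ℝ → ℝ) : Prop where
  dk : ∀ u : ℝ, 0 < u → HasDerivAt k (p u / u) u
  dp : ∀ u : ℝ, 0 < u → HasDerivAt p ((u ^ 2 - ν ^ 2) * k u / u) u
  en : ∀ u : ℝ, 0 < u → p u ^ 2 + (ν ^ 2 - u ^ 2) * k u ^ 2 ≤ 4 * ν
  dec : ∃ B : ℝ, 0 < B ∧ ∀ u : ℝ, 1 ≤ u → |k u| ≤ B * Real.exp (-u)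

lemma sol_K {r : ℝ} (hr : 1 ≤ r) :
    Sol (2 * r) (fun u => Real.cosh (Real.pi * r) * Kn 0 (2 * r) u)
      (fun u => -(Real.cosh (Real.pi * r) * (u * Kn 1 (2 * r) u))) := by
  set c := Real.cosh (Real.pi * r) with hc
  have hcpos : 0 < c := Real.cosh_pos _
  refine ⟨?_, ?_, ?_, ?_⟩
  · intro u hu
    refine ((Kn_hasDeriv 0 (2 * r) hu).const_mul c).congr_deriv ?_
    field_simp
  · intro u hu
    have ho := Kn_ode (2 * r) hu
    have h1 := Kn_hasDeriv 1 (2 * r) hu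
    refine ((((hasDerivAt_id u).fun_mul h1).const_mul c).fun_neg).congr_deriv ?_
    simp only [id]
    field_simp
    norm_num
    linear_combination ho
  · intro u hu
    have h := energy_bound (ν := 2 * r) (by linarith) hu
    have hpi := Real.pi_gt_three
    have hpi4 := Real.pi_lt_four
    have hx : (3:ℝ) ≤ Real.pi * r := by nlinarith
    set s := Real.sinh (Real.pi * r) with hs
    have hspos : 0 < s := Real.sinh_pos_iff.2 (by linarith)
    have hsinh : Real.sinh (Real.pi * (2 * r)) = 2 * s * c := by
      rw [hs, hc, ← Real.sinh_two_mul]; congr 1; ring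
    rw [hsinh] at h
    have hcs : c ≤ 2 * s := by
      rw [hc, hs, Real.cosh_eq, Real.sinh_eq]
      have h1 : Real.exp (-(Real.pi * r)) ≤ 1 := Real.exp_le_one_iff.2 (by linarith)
      have h2 := Real.add_one_le_exp (Real.pi * r)
      linarith
    have hm : c ^ 2 * (Real.pi * (2 * r) / (2 * s * c)) ≤ 4 * (2 * r) := by
      rw [mul_div_assoc', div_le_iff₀ (by positivity)]
      have h1 : c * Real.pi ≤ 8 * s := by nlinarith
      have : c ^ 2 * (Real.pi * (2 * r)) = (c * Real.pi) * (c * (2 * r)) := by ring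
      rw [this]
      have h3 : 0 < c * (2 * r) := by positivity
      nlinarith [mul_le_mul_of_nonneg_right h1 h3.le]
    calc _ = c ^ 2 * ((u * Kn 1 (2 * r) u) ^ 2 + ((2 * r) ^ 2 - u ^ 2) * Kn 0 (2 * r) u ^ 2) := by ring
      _ ≤ c ^ 2 * (Real.pi * (2 * r) / (2 * s * c)) := by gcongr
      _ ≤ _ := hm
  · obtain ⟨B, hB, h⟩ := Kn_decay (2 * r)
    refine ⟨c * B, by positivity, fun u hu => ?_⟩
    rw [abs_mul, abs_of_pos hcpos, mul_assoc]
    gcongr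
    exact h u hu

lemma Sol.uk_tendsto {ν : ℝ} {k p : ℝ → ℝ} (S : Sol ν k p) :
    Filter.Tendsto (fun u => u ^ 2 * k u ^ 2) Filter.atTop (nhds 0) := by
  obtain ⟨B, hB, h⟩ := S.dec
  have h1 := (Real.tendsto_pow_mul_exp_neg_atTop_nhds_zero 1).const_mul B
  have h2 := h1.pow 2
  simp only [mul_zero, ne_eq, OfNat.ofNat_ne_zero, not_false_eq_true, zero_pow] at h2
  refine squeeze_zero' (Filter.Eventually.of_forall fun u => by positivity) ?_ h2
  filter_upwards [Filter.eventually_ge_atTop 1] with u hu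
  rw [pow_one, ← mul_pow, sq_le_sq, abs_mul, abs_mul, abs_mul, abs_of_pos hB, Real.abs_exp,
    mul_left_comm]
  gcongr
  exact h u hu

/-- Monotonicity helpers. -/
lemma anti_Ici {f f' : ℝ → ℝ} {a : ℝ} (hc : ContinuousOn f (Set.Ici a))
    (hd : ∀ u, a < u → HasDerivAt f (f' u) u) (hn : ∀ u, a < u → f' u ≤ 0) :
    AntitoneOn f (Set.Ici a) := by
  refine antitoneOn_of_hasDerivWithinAt_nonpos (convex_Ici a) hc (f' := f') ?_ ?_
  · intro v hv
    rw [interior_Ici] at hv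
    exact (hd v hv).hasDerivWithinAt
  · intro v hv
    rw [interior_Ici] at hv
    exact hn v hv

lemma mono_Ici {f f' : ℝ → ℝ} {a : ℝ} (hc : ContinuousOn f (Set.Ici a))
    (hd : ∀ u, a < u → HasDerivAt f (f' u) u) (hn : ∀ u, a < u → 0 ≤ f' u) :
    MonotoneOn f (Set.Ici a) := by
  refine monotoneOn_of_hasDerivWithinAt_nonneg (convex_Ici a) hc (f' := f') ?_ ?_
  · intro v hv
    rw [interior_Ici] at hv
    exact (hd v hv).hasDerivWithinAt
  · intro v hv
    rw [interior_Ici] at hv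
    exact hn v hv

lemma Sol.kcont {ν : ℝ} {k p : ℝ → ℝ} (S : Sol ν k p) {a : ℝ} (ha : 0 < a) :
    ContinuousOn k (Set.Ici a) := fun u hu =>
  (S.dk u (lt_of_lt_of_le ha hu)).continuousAt.continuousWithinAt

lemma Sol.pcont {ν : ℝ} {k p : ℝ → ℝ} (S : Sol ν k p) {a : ℝ} (ha : 0 < a) :
    ContinuousOn p (Set.Ici a) := fun u hu =>
  (S.dp u (lt_of_lt_of_le ha hu)).continuousAt.continuousWithinAt

lemma Sol.kp_nonpos {ν : ℝ} {k p : ℝ → ℝ} (S : Sol ν k p) (hν : 0 < ν) {u : ℝ} (hu : ν ≤ u) :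
    k u * p u ≤ 0 := by
  have hm : MonotoneOn (fun u => k u * p u) (Set.Ici ν) := by
    refine mono_Ici ((S.kcont hν).mul (S.pcont hν))
      (f' := fun u => p u / u * p u + k u * ((u ^ 2 - ν ^ 2) * k u / u))
      (fun v hv => (S.dk v (by linarith)).fun_mul (S.dp v (by linarith))) ?_
    intro v hv
    have hv0 : 0 < v := by linarith
    have : p v / v * p v + k v * ((v ^ 2 - ν ^ 2) * k v / v) =
      (p v ^ 2 + (v ^ 2 - ν ^ 2) * k v ^ 2) / v := by field_simp
    rw [this]
    have h2 : 0 ≤ v ^ 2 - ν ^ 2 := by nlinarith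
    positivity
  by_contra hcon
  push Not at hcon
  have hu0 : 0 < u := by linarith
  have hm2 : MonotoneOn (fun u => k u ^ 2) (Set.Ici u) := by
    refine mono_Ici ((S.kcont hu0).pow 2) (f' := fun v => 2 * k v * (p v / v)) ?_ ?_
    · intro v hv
      refine ((S.dk v (by linarith)).fun_pow 2).congr_deriv ?_
      norm_num
    · intro v hv
      have hv0 : 0 < v := by linarith
      have h1 : k u * p u ≤ k v * p v := hm (show ν ≤ u from hu) (show ν ≤ v by linarith) hv.le
      have : 2 * k v * (p v / v) = 2 * (k v * p v) / v := by ring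
      rw [this]
      have : 0 < k v * p v := by linarith
      positivity
  have hk : 0 < k u ^ 2 := by
    have : k u ≠ 0 := by rintro h; rw [h] at hcon; simp at hcon
    positivity
  have ht := S.uk_tendsto
  have hev := (ht.eventually (gt_mem_nhds hk)).and
    ((Filter.eventually_ge_atTop u).and (Filter.eventually_ge_atTop 1))
  obtain ⟨v, h1, h2, h3⟩ := hev.exists
  have h4 : k u ^ 2 ≤ k v ^ 2 := hm2 (show u ≤ u from le_rfl) h2 h2
  nlinarith [mul_nonneg (by nlinarith : 0 ≤ v ^ 2 - 1) (sq_nonneg (k v))]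

lemma Sol.E_nonneg {ν : ℝ} {k p : ℝ → ℝ} (S : Sol ν k p) {u : ℝ} (hu : 0 < u) :
    (u ^ 2 - ν ^ 2) * k u ^ 2 ≤ p u ^ 2 := by
  have hm : AntitoneOn (fun u => p u ^ 2 + (ν ^ 2 - u ^ 2) * k u ^ 2) (Set.Ici u) := by
    refine anti_Ici (((S.pcont hu).pow 2).add (ContinuousOn.mul (by fun_prop) ((S.kcont hu).pow 2)))
      (f' := fun v => -2 * v * k v ^ 2) ?_ ?_
    · intro v hv
      have hv0 : 0 < v := by linarith
      refine (((S.dp v hv0).fun_pow 2).fun_add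
        ((((hasDerivAt_id v).fun_pow 2).const_sub (ν ^ 2)).fun_mul ((S.dk v hv0).fun_pow 2))).congr_deriv ?_
      simp only [id]
      field_simp
      norm_num
      ring
    · intro v hv
      have hv0 : 0 < v := by linarith
      have := mul_nonneg hv0.le (sq_nonneg (k v))
      linarith
  by_contra hcon
  push Not at hcon
  have hε : 0 < (u ^ 2 - ν ^ 2) * k u ^ 2 - p u ^ 2 := by linarith
  have hev := (S.uk_tendsto.eventually (gt_mem_nhds hε)).and (Filter.eventually_ge_atTop u)
  obtain ⟨v, h1, h2⟩ := hev.exists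
  have h4 : p v ^ 2 + (ν ^ 2 - v ^ 2) * k v ^ 2 ≤ p u ^ 2 + (ν ^ 2 - u ^ 2) * k u ^ 2 :=
    hm (show u ≤ u from le_rfl) h2 h2
  nlinarith [sq_nonneg (p v), mul_nonneg (sq_nonneg ν) (sq_nonneg (k v))]

lemma Sol.k_anti {ν : ℝ} {k p : ℝ → ℝ} (S : Sol ν k p) (hν : 0 < ν) :
    AntitoneOn (fun u => k u ^ 2) (Set.Ici ν) := by
  refine anti_Ici ((S.kcont hν).pow 2) (f' := fun v => 2 * (k v * p v) / v) ?_ ?_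
  · intro v hv
    refine ((S.dk v (by linarith)).fun_pow 2).congr_deriv ?_
    norm_num; ring
  · intro v hv
    have hv0 : 0 < v := by linarith
    exact div_nonpos_of_nonpos_of_nonneg (by linarith [S.kp_nonpos hν hv.le]) hv0.le

lemma Sol.p_anti {ν : ℝ} {k p : ℝ → ℝ} (S : Sol ν k p) (hν : 0 < ν) :
    AntitoneOn (fun u => p u ^ 2) (Set.Ici ν) := by
  refine anti_Ici ((S.pcont hν).pow 2)
    (f' := fun v => 2 * (v ^ 2 - ν ^ 2) / v * (k v * p v)) ?_ ?_
  · intro v hv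
    refine ((S.dp v (by linarith)).fun_pow 2).congr_deriv ?_
    norm_num; ring
  · intro v hv
    have hv0 : 0 < v := by linarith
    have h2 : 0 ≤ v ^ 2 - ν ^ 2 := by nlinarith
    exact mul_nonpos_of_nonneg_of_nonpos (by positivity) (S.kp_nonpos hν hv.le)

lemma arctan_num : Real.sqrt 5 / 2 - Real.arctan (Real.sqrt 5 / 2) ≥ 27 / 100 := by
  have hs1 : (2.236:ℝ) ≤ Real.sqrt 5 := Real.le_sqrt_of_sq_le (by norm_num)
  have hm : MonotoneOn (fun w : ℝ => w / 2 - Real.arctan w) (Set.Ici 1) := by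
    refine mono_Ici (by fun_prop) (f' := fun w => 1 / 2 - 1 / (1 + w ^ 2)) ?_ ?_
    · intro w _
      exact ((hasDerivAt_id w).div_const 2).fun_sub (Real.hasDerivAt_arctan w)
    · intro w hw
      rw [sub_nonneg, div_le_div_iff₀ (by positivity) (by norm_num)]
      nlinarith
  have h := hm (show (1:ℝ) ≤ 1 from le_rfl) (show (1:ℝ) ≤ Real.sqrt 5 / 2 by linarith) (by linarith)
  simp only [Real.arctan_one] at h
  have := Real.pi_lt_d2
  linarith

lemma Sol.exp_decay {ν : ℝ} {k p : ℝ → ℝ} (S : Sol ν k p) (hν : 0 < ν) {u : ℝ}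
    (hu : 3 / 2 * ν ≤ u) : k u ^ 2 ≤ k ν ^ 2 * Real.exp (-(54 / 100) * ν) := by
  set h : ℝ → ℝ := fun u => Real.sqrt (u ^ 2 - ν ^ 2) -
    ν * Real.arctan (Real.sqrt (u ^ 2 - ν ^ 2) / ν) with hh
  have hcont : Continuous h := by
    have : Continuous fun u : ℝ => Real.sqrt (u ^ 2 - ν ^ 2) := by fun_prop
    exact this.sub (continuous_const.mul (Real.continuous_arctan.comp (this.div_const ν)))
  have hd : ∀ v, ν < v → HasDerivAt h (Real.sqrt (v ^ 2 - ν ^ 2) / v) v := by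
    intro v hv
    have hpos : 0 < v ^ 2 - ν ^ 2 := by nlinarith
    have hv0 : 0 < v := by linarith
    have h1 : HasDerivAt (fun u : ℝ => Real.sqrt (u ^ 2 - ν ^ 2)) (v / Real.sqrt (v ^ 2 - ν ^ 2)) v := by
      refine ((((hasDerivAt_id v).fun_pow 2).sub_const (ν ^ 2)).sqrt hpos.ne').congr_deriv ?_
      have := Real.sqrt_pos.2 hpos
      simp only [id]
      field_simp
      norm_num
    have h2 := (h1.div_const ν).arctan
    refine (h1.fun_sub (h2.const_mul ν)).congr_deriv ?_
    have hw := Real.sqrt_pos.2 hpos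
    have hw2 := Real.sq_sqrt hpos.le
    set w := Real.sqrt (v ^ 2 - ν ^ 2)
    have e1 : 1 + (w / ν) ^ 2 = v ^ 2 / ν ^ 2 := by
      field_simp; linarith
    rw [e1]
    field_simp
    linarith
  have hanti : AntitoneOn (fun u => k u ^ 2 * Real.exp (2 * h u)) (Set.Ici ν) := by
    refine anti_Ici (((S.kcont hν).pow 2).mul (by fun_prop))
      (f' := fun v => 2 * (k v * p v + Real.sqrt (v ^ 2 - ν ^ 2) * k v ^ 2) / v * Real.exp (2 * h v)) ?_ ?_
    · intro v hv
      have hv0 : 0 < v := by linarith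
      refine (((S.dk v hv0).fun_pow 2).fun_mul (((hd v hv).const_mul 2).exp)).congr_deriv ?_
      norm_num
      field_simp
    · intro v hv
      have hv0 : 0 < v := by linarith
      have hpos : 0 < v ^ 2 - ν ^ 2 := by nlinarith
      have h1 := S.kp_nonpos hν hv.le
      have h2 := S.E_nonneg hv0
      have hw := Real.sqrt_pos.2 hpos
      have hw2 := Real.sq_sqrt hpos.le
      set w := Real.sqrt (v ^ 2 - ν ^ 2)
      have h3 : w * k v ^ 2 ≤ -(k v * p v) := by
        refine abs_le_of_sq_le_sq' ?_ (by linarith) |>.2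
        have : (w * k v ^ 2) ^ 2 = (v ^ 2 - ν ^ 2) * k v ^ 2 * k v ^ 2 := by rw [← hw2]; ring
        rw [this]
        nlinarith [mul_le_mul_of_nonneg_right h2 (sq_nonneg (k v))]
      have h4 : 2 * (k v * p v + w * k v ^ 2) / v ≤ 0 :=
        div_nonpos_of_nonpos_of_nonneg (by linarith) hv0.le
      exact mul_nonpos_of_nonpos_of_nonneg h4 (Real.exp_pos _).le
  have h1 := hanti (show ν ≤ ν from le_rfl) (show ν ≤ 3 / 2 * ν by linarith) (by linarith)
  have h2 : k u ^ 2 ≤ k (3 / 2 * ν) ^ 2 :=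
    S.k_anti hν (show ν ≤ 3 / 2 * ν by linarith) (show ν ≤ u by linarith) hu
  have e0 : h ν = 0 := by simp [hh]
  have e1 : 27 / 100 * ν ≤ h (3 / 2 * ν) := by
    have : Real.sqrt ((3 / 2 * ν) ^ 2 - ν ^ 2) = Real.sqrt 5 / 2 * ν := by
      rw [show (3 / 2 * ν) ^ 2 - ν ^ 2 = 5 * (ν / 2) ^ 2 by ring, Real.sqrt_mul (by norm_num),
        Real.sqrt_sq (by positivity)]
      ring
    simp only [hh, this]
    rw [mul_div_assoc, div_self hν.ne', mul_one]
    nlinarith [arctan_num]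
  simp only [e0, mul_zero, Real.exp_zero, mul_one] at h1
  have h3 : k (3 / 2 * ν) ^ 2 * Real.exp (54 / 100 * ν) ≤ k ν ^ 2 := by
    refine le_trans ?_ h1
    exact mul_le_mul_of_nonneg_left (Real.exp_le_exp.2 (by linarith)) (sq_nonneg _)
  have h4 : Real.exp (-(54 / 100) * ν) * Real.exp (54 / 100 * ν) = 1 := by
    rw [← Real.exp_add]; simp
  calc k u ^ 2 ≤ k (3 / 2 * ν) ^ 2 := h2
    _ = k (3 / 2 * ν) ^ 2 * Real.exp (54 / 100 * ν) * Real.exp (-(54 / 100) * ν) := by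
        rw [mul_assoc, mul_comm (Real.exp _), h4, mul_one]
    _ ≤ _ := by gcongr

lemma cmp_deriv {f g f' g' : ℝ → ℝ} {A B : ℝ} (hAB : A ≤ B)
    (hf : ∀ v, A ≤ v → v ≤ B → HasDerivAt f (f' v) v)
    (hg : ∀ v, A ≤ v → v ≤ B → HasDerivAt g (g' v) v)
    (h : ∀ v, A ≤ v → v ≤ B → |f' v| ≤ g' v) : |f B - f A| ≤ g B - g A := by
  have m1 : MonotoneOn (fun v => g v - f v) (Set.Icc A B) := by
    refine monotoneOn_of_hasDerivWithinAt_nonneg (convex_Icc A B) (f' := fun v => g' v - f' v) ?_ ?_ ?_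
    · exact fun v hv => ((hg v hv.1 hv.2).fun_sub (hf v hv.1 hv.2)).continuousAt.continuousWithinAt
    · intro v hv
      have hv := interior_subset hv
      exact ((hg v hv.1 hv.2).fun_sub (hf v hv.1 hv.2)).hasDerivWithinAt
    · intro v hv
      have hv := interior_subset hv
      linarith [(abs_le.1 (h v hv.1 hv.2)).2]
  have m2 : MonotoneOn (fun v => g v + f v) (Set.Icc A B) := by
    refine monotoneOn_of_hasDerivWithinAt_nonneg (convex_Icc A B) (f' := fun v => g' v + f' v) ?_ ?_ ?_
    · exact fun v hv => ((hg v hv.1 hv.2).fun_add (hf v hv.1 hv.2)).continuousAt.continuousWithinAt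
    · intro v hv
      have hv := interior_subset hv
      exact ((hg v hv.1 hv.2).fun_add (hf v hv.1 hv.2)).hasDerivWithinAt
    · intro v hv
      have hv := interior_subset hv
      linarith [(abs_le.1 (h v hv.1 hv.2)).1]
  have h1 := m1 (Set.left_mem_Icc.2 hAB) (Set.right_mem_Icc.2 hAB) hAB
  have h2 := m2 (Set.left_mem_Icc.2 hAB) (Set.right_mem_Icc.2 hAB) hAB
  simp only at h1 h2
  rw [abs_le]; constructor <;> linarith

noncomputable def Zf (ρ u : ℝ) : ℝ := (3 * ρ ^ 4 + (ρ ^ 3) ^ 2 - u ^ 2) ^ (-(1/4) : ℝ)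

lemma Zf_P {ρ u : ℝ} (hρ : 1 ≤ ρ) (hu : 0 < u) (hu2 : u ≤ ρ ^ 3) :
    3 * ρ ^ 4 ≤ 3 * ρ ^ 4 + (ρ ^ 3) ^ 2 - u ^ 2 := by nlinarith

lemma Zf_pos {ρ u : ℝ} (hρ : 1 ≤ ρ) (hu : 0 < u) (hu2 : u ≤ ρ ^ 3) : 0 < Zf ρ u := by
  have := Zf_P hρ hu hu2
  have h2 : 0 < ρ ^ 4 := by positivity
  exact Real.rpow_pos_of_pos (by linarith) _

lemma Zf_four {ρ u : ℝ} (hρ : 1 ≤ ρ) (hu : 0 < u) (hu2 : u ≤ ρ ^ 3) :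
    Zf ρ u ^ 4 * (3 * ρ ^ 4 + (ρ ^ 3) ^ 2 - u ^ 2) = 1 := by
  have := Zf_P hρ hu hu2
  have h2 : 0 < ρ ^ 4 := by positivity
  have hP : 0 < 3 * ρ ^ 4 + (ρ ^ 3) ^ 2 - u ^ 2 := by linarith
  unfold Zf
  rw [← Real.rpow_mul_natCast hP.le]
  norm_num
  rw [Real.rpow_neg_one]
  exact inv_mul_cancel₀ hP.ne'

lemma Zf_deriv {ρ u : ℝ} (hρ : 1 ≤ ρ) (hu : 0 < u) (hu2 : u ≤ ρ ^ 3) :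
    HasDerivAt (Zf ρ) (u / 2 * Zf ρ u ^ 5) u := by
  have := Zf_P hρ hu hu2
  have h2 : 0 < ρ ^ 4 := by positivity
  have hP : 0 < 3 * ρ ^ 4 + (ρ ^ 3) ^ 2 - u ^ 2 := by linarith
  unfold Zf
  refine ((((hasDerivAt_id u).fun_pow 2).const_sub (3 * ρ ^ 4 + (ρ ^ 3) ^ 2)).rpow_const
    (p := -(1/4)) (Or.inl hP.ne')).congr_deriv ?_
  simp only [id]
  rw [← Real.rpow_mul_natCast hP.le]
  rw [show (-(1/4):ℝ) - 1 = -(1/4) * (5:ℕ) by norm_num]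
  push_cast
  ring

lemma Zf_rho {ρ u : ℝ} (hρ : 1 ≤ ρ) (hu : 0 < u) (hu2 : u ≤ ρ ^ 3) : ρ * Zf ρ u ≤ 1 := by
  have h1 := Zf_P hρ hu hu2
  have h2 := Zf_four hρ hu hu2
  have h3 := Zf_pos hρ hu hu2
  have h4 : (ρ * Zf ρ u) ^ 4 ≤ 1 ^ 4 := by
    rw [mul_pow]
    have h5 : 0 < Zf ρ u ^ 4 := by positivity
    have h6 : 0 < ρ ^ 4 := by positivity
    nlinarith [mul_le_mul_of_nonneg_left h1 h5.le]
  exact le_of_pow_le_pow_left₀ (by norm_num) (by norm_num) h4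

noncomputable def Ff (ρ : ℝ) (k p : ℝ → ℝ) (u : ℝ) : ℝ :=
  p u ^ 2 * Zf ρ u ^ 2 - u ^ 2 * Zf ρ u ^ 6 * (k u * p u) +
    (((ρ ^ 3) ^ 2 - u ^ 2) * Zf ρ u ^ 2 + u ^ 2 * Zf ρ u ^ 6 + 3 / 2 * (u ^ 4 * Zf ρ u ^ 10)) * k u ^ 2

lemma Ff_deriv {ρ : ℝ} {k p : ℝ → ℝ} (S : Sol (ρ ^ 3) k p) {u : ℝ} (hρ : 1 ≤ ρ) (hu : 0 < u)
    (hu2 : u ≤ ρ ^ 3) : HasDerivAt (Ff ρ k p)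
      ((2 * ((ρ ^ 3) ^ 2 - u ^ 2) * u ^ 2 * Zf ρ u ^ 6 - 2 * u ^ 2 * Zf ρ u ^ 2 + 2 * u ^ 2 * Zf ρ u ^ 6
        + 9 * u ^ 4 * Zf ρ u ^ 10 + 15 / 2 * u ^ 6 * Zf ρ u ^ 14) * k u ^ 2 / u) u := by
  have hZ := Zf_deriv hρ hu hu2
  have hk := S.dk u hu
  have hp := S.dp u hu
  have hi := hasDerivAt_id u
  unfold Ff
  refine ((((hp.fun_pow 2).fun_mul (hZ.fun_pow 2)).fun_sub
    (((hi.fun_pow 2).fun_mul (hZ.fun_pow 6)).fun_mul (hk.fun_mul hp))).fun_add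
    ((((((hi.fun_pow 2).const_sub ((ρ ^ 3) ^ 2)).fun_mul (hZ.fun_pow 2)).fun_add
      ((hi.fun_pow 2).fun_mul (hZ.fun_pow 6))).fun_add
      (((hi.fun_pow 4).fun_mul (hZ.fun_pow 10)).const_mul (3/2))).fun_mul (hk.fun_pow 2))).congr_deriv ?_
  simp only [id]
  field_simp
  norm_num
  ring

lemma Ff_anti {ρ : ℝ} {k p : ℝ → ℝ} (S : Sol (ρ ^ 3) k p) {u v : ℝ} (hρ : 1 ≤ ρ) (hu : 0 < u)
    (huv : u ≤ v) (hv2 : v ≤ ρ ^ 3) : Ff ρ k p v ≤ Ff ρ k p u := by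
  have hA : AntitoneOn (Ff ρ k p) (Set.Icc u v) := by
    refine antitoneOn_of_hasDerivWithinAt_nonpos (convex_Icc u v)
      (f' := fun u => (2 * ((ρ ^ 3) ^ 2 - u ^ 2) * u ^ 2 * Zf ρ u ^ 6 - 2 * u ^ 2 * Zf ρ u ^ 2 + 2 * u ^ 2 * Zf ρ u ^ 6
        + 9 * u ^ 4 * Zf ρ u ^ 10 + 15 / 2 * u ^ 6 * Zf ρ u ^ 14) * k u ^ 2 / u) ?_ ?_ ?_
    · exact fun w hw => (Ff_deriv S hρ (by linarith [hw.1]) (by linarith [hw.2])).continuousAt.continuousWithinAt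
    · intro w hw
      have hw := interior_subset hw
      exact (Ff_deriv S hρ (by linarith [hw.1]) (by linarith [hw.2])).hasDerivWithinAt
    · intro w hw
      have hw := interior_subset hw
      have hw0 : 0 < w := by linarith [hw.1]
      have hw2 : w ≤ ρ ^ 3 := by linarith [hw.2]
      have hP := Zf_P hρ hw0 hw2
      have h4 := Zf_four hρ hw0 hw2
      have hz := Zf_pos hρ hw0 hw2
      set Z := Zf ρ w
      set y := w ^ 2 * Z ^ 4 with hy
      have hy0 : 0 ≤ y := by positivity
      have hyle : 3 * y ≤ ρ ^ 2 := by
        have h5 : Z ^ 4 * (3 * ρ ^ 4) ≤ 1 := by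
          rw [← h4]; gcongr
        have h6 : w ^ 2 ≤ (ρ ^ 3) ^ 2 := by gcongr
        calc 3 * y ≤ 3 * ((ρ ^ 3) ^ 2 * Z ^ 4) := by rw [hy]; gcongr
          _ = ρ ^ 2 * (Z ^ 4 * (3 * ρ ^ 4)) := by ring
          _ ≤ ρ ^ 2 * 1 := by gcongr
          _ = ρ ^ 2 := by ring
      have hρ2 : 1 ≤ ρ ^ 2 := by nlinarith
      have hmain : 1 + 9 / 2 * y + 15 / 4 * y ^ 2 ≤ 3 * ρ ^ 4 := by
        have : ρ ^ 4 = (ρ ^ 2) ^ 2 := by ring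
        rw [this]
        nlinarith
      have e : (2 * ((ρ ^ 3) ^ 2 - w ^ 2) * w ^ 2 * Z ^ 6 - 2 * w ^ 2 * Z ^ 2 + 2 * w ^ 2 * Z ^ 6
        + 9 * w ^ 4 * Z ^ 10 + 15 / 2 * w ^ 6 * Z ^ 14) =
        2 * w ^ 2 * Z ^ 6 * (1 + 9 / 2 * y + 15 / 4 * y ^ 2 - 3 * ρ ^ 4) := by
        rw [hy]
        linear_combination (-2) * w ^ 2 * Z ^ 2 * (-1) * h4
      rw [e]
      refine div_nonpos_of_nonpos_of_nonneg ?_ hw0.le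
      refine mul_nonpos_of_nonpos_of_nonneg ?_ (sq_nonneg _)
      exact mul_nonpos_of_nonneg_of_nonpos (by positivity) (by linarith)
  exact hA (Set.left_mem_Icc.2 huv) (Set.right_mem_Icc.2 huv) huv

lemma Ff_start {ρ : ℝ} {k p : ℝ → ℝ} (S : Sol (ρ ^ 3) k p) (hρ : 1 ≤ ρ) (hν : 2 ≤ ρ ^ 3) :
    Ff ρ k p (3 / 16 * ρ ^ 3) ≤ 20 := by
  set ν := ρ ^ 3 with hνd
  set u := 3 / 16 * ν with hu
  have hu0 : 0 < u := by positivity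
  have hu2 : u ≤ ρ ^ 3 := by rw [← hνd]; linarith
  have hP := Zf_P hρ hu0 hu2
  have h4 := Zf_four hρ hu0 hu2
  have hz := Zf_pos hρ hu0 hu2
  have hE := S.en u hu0
  unfold Ff
  rw [← hνd] at *
  set Z := Zf ρ u
  set q := ν ^ 2 - u ^ 2 with hq
  have hqv : q = 247 / 256 * ν ^ 2 := by rw [hq, hu]; ring
  have hq0 : 0 < q := by rw [hqv]; positivity
  set K := k u ^ 2 with hK
  have hK0 : 0 ≤ K := by positivity
  set P2 := p u ^ 2 with hP2
  have hP20 : 0 ≤ P2 := by positivity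
  have hqK : q * K ≤ 4 * ν := by linarith
  have hp4 : P2 ≤ 4 * ν := by nlinarith
  have hz4 : Z ^ 4 * q ≤ 1 := by
    rw [← h4]
    have : 0 ≤ ρ ^ 4 := by positivity
    gcongr
    linarith
  have hνZ : ν * Z ^ 2 ≤ 11 / 10 := by
    have : (ν * Z ^ 2) ^ 2 ≤ (11 / 10) ^ 2 := by
      have e : (ν * Z ^ 2) ^ 2 = 256 / 247 * (Z ^ 4 * q) := by rw [hqv]; ring
      rw [e]; linarith
    exact abs_le_of_sq_le_sq' this (by norm_num) |>.2
  have hy : u ^ 2 * Z ^ 4 ≤ 1 / 10 := by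
    have e : u ^ 2 * Z ^ 4 = 9 / 247 * (Z ^ 4 * q) := by rw [hqv, hu]; ring
    rw [e]; linarith
  have hZK : K * Z ^ 2 ≤ 2 := by
    have h1 : q * (K * Z ^ 2) ≤ 22 / 5 := by
      calc q * (K * Z ^ 2) = (q * K) * Z ^ 2 := by ring
        _ ≤ 4 * ν * Z ^ 2 := by gcongr
        _ ≤ 22 / 5 := by linarith
    have h2 : 3 ≤ q := by rw [hqv]; nlinarith
    have h3 : 0 ≤ K * Z ^ 2 := by positivity
    nlinarith
  set y := u ^ 2 * Z ^ 4 with hyd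
  have hy0 : 0 ≤ y := by positivity
  have hcross : -(u ^ 2 * Z ^ 6 * (k u * p u)) ≤ (P2 * Z ^ 2 + y ^ 2 * (K * Z ^ 2)) / 2 := by
    have e : (P2 * Z ^ 2 + y ^ 2 * (K * Z ^ 2)) / 2 + u ^ 2 * Z ^ 6 * (k u * p u) =
      (p u * Z + y * (k u * Z)) ^ 2 / 2 := by rw [hP2, hK, hyd]; ring
    have : 0 ≤ (p u * Z + y * (k u * Z)) ^ 2 / 2 := by positivity
    linarith
  have hPZ : P2 * Z ^ 2 ≤ 22 / 5 := by
    calc P2 * Z ^ 2 ≤ 4 * ν * Z ^ 2 := by gcongr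
      _ ≤ _ := by linarith
  have hqZK : q * K * Z ^ 2 ≤ 22 / 5 := by
    calc q * K * Z ^ 2 ≤ 4 * ν * Z ^ 2 := by gcongr
      _ ≤ _ := by linarith
  have hZK0 : 0 ≤ K * Z ^ 2 := by positivity
  have e2 : (q * Z ^ 2 + u ^ 2 * Z ^ 6 + 3 / 2 * (u ^ 4 * Z ^ 10)) * K =
    q * K * Z ^ 2 + y * (K * Z ^ 2) + 3 / 2 * y ^ 2 * (K * Z ^ 2) := by rw [hyd]; ring
  rw [e2]
  have h1 : y * (K * Z ^ 2) ≤ 1 / 10 * 2 := by gcongr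
  have h2 : y ^ 2 * (K * Z ^ 2) ≤ (1 / 10) ^ 2 * 2 := by gcongr
  linarith

lemma Ff_cons {ρ : ℝ} {k p : ℝ → ℝ} (S : Sol (ρ ^ 3) k p) (hρ : 1 ≤ ρ) (hν : 2 ≤ ρ ^ 3)
    {u : ℝ} (hu : 3 / 16 * ρ ^ 3 ≤ u) (hu2 : u ≤ ρ ^ 3) :
    |p u| * Zf ρ u ≤ 7 ∧ |k u| ≤ 4500 * Zf ρ u := by
  have hF := (Ff_anti S hρ (by positivity) hu hu2).trans (Ff_start S hρ hν)
  have hu0 : 0 < u := lt_of_lt_of_le (by positivity) hu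
  have hP := Zf_P hρ hu0 hu2
  have h4 := Zf_four hρ hu0 hu2
  have hz := Zf_pos hρ hu0 hu2
  unfold Ff at hF
  set Z := Zf ρ u
  set q := (ρ ^ 3) ^ 2 - u ^ 2 with hq
  have hq0 : 0 ≤ q := by rw [hq]; nlinarith
  have hPq : 3 * ρ ^ 4 + (ρ ^ 3) ^ 2 - u ^ 2 = 3 * ρ ^ 4 + q := by rw [hq]; ring
  rw [hPq] at h4 hP
  have hlow : (p u * Z) ^ 2 / 2 + (q * Z ^ 2 + u ^ 4 * Z ^ 10) * k u ^ 2 ≤ 20 := by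
    refine le_trans ?_ hF
    have : 0 ≤ (p u * Z - u ^ 2 * Z ^ 5 * k u) ^ 2 / 2 + u ^ 2 * Z ^ 6 * k u ^ 2 := by positivity
    linarith
  have hpos : 0 ≤ (q * Z ^ 2 + u ^ 4 * Z ^ 10) * k u ^ 2 := by positivity
  constructor
  · have h1 : (|p u| * Z) ^ 2 ≤ 7 ^ 2 := by
      rw [mul_pow, sq_abs, ← mul_pow]; linarith
    exact abs_le_of_sq_le_sq' h1 (by norm_num) |>.2
  · have hρ4 : 0 < ρ ^ 4 := by positivity
    have hkey : (3 * ρ ^ 4 + q) / 1000000 ≤ q + u ^ 4 * Z ^ 8 := by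
      have hnn : 0 ≤ u ^ 4 * Z ^ 8 := by positivity
      rcases le_total (3 * ρ ^ 4) q with h | h
      · linarith
      · have h5 : 1 ≤ Z ^ 4 * (6 * ρ ^ 4) := by
          rw [← h4]; gcongr; linarith
        have h6 : 1 ≤ Z ^ 8 * (36 * ρ ^ 8) := by
          calc (1:ℝ) ≤ (Z ^ 4 * (6 * ρ ^ 4)) ^ 2 := one_le_pow₀ h5
            _ = _ := by ring
        have h7 : (3 / 16 * ρ ^ 3) ^ 4 ≤ u ^ 4 := by gcongr
        have h8 : (3 / 16) ^ 4 / 36 * ρ ^ 4 ≤ u ^ 4 * Z ^ 8 := by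
          calc (3 / 16) ^ 4 / 36 * ρ ^ 4 = (3 / 16) ^ 4 / 36 * ρ ^ 4 * 1 := by ring
            _ ≤ (3 / 16) ^ 4 / 36 * ρ ^ 4 * (Z ^ 8 * (36 * ρ ^ 8)) := by gcongr
            _ = (3 / 16 * ρ ^ 3) ^ 4 * Z ^ 8 := by ring
            _ ≤ _ := by gcongr
        norm_num at h8
        linarith
    have h9 : k u ^ 2 * (Z ^ 2 * ((3 * ρ ^ 4 + q) / 1000000)) ≤ 20 := by
      calc k u ^ 2 * (Z ^ 2 * ((3 * ρ ^ 4 + q) / 1000000)) ≤ k u ^ 2 * (Z ^ 2 * (q + u ^ 4 * Z ^ 8)) := by gcongr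
        _ = (q * Z ^ 2 + u ^ 4 * Z ^ 10) * k u ^ 2 := by ring
        _ ≤ 20 := by have : 0 ≤ (p u * Z) ^ 2 / 2 := by positivity
                     linarith
    have h10 : k u ^ 2 ≤ (4500 * Z) ^ 2 := by
      have e : k u ^ 2 = (k u ^ 2 * (Z ^ 2 * ((3 * ρ ^ 4 + q) / 1000000))) * (1000000 * Z ^ 2) := by
        linear_combination (-1) * k u ^ 2 * h4
      rw [e, mul_pow]
      have : 0 ≤ Z ^ 2 := by positivity
      nlinarith [mul_le_mul_of_nonneg_right h9 this]
    exact abs_le_of_sq_le_sq h10 (by positivity)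
lemma D3_left {ρ : ℝ} {k p I : ℝ → ℝ} (S : Sol (ρ ^ 3) k p) (hρ : 1 ≤ ρ) (hν : 2 ≤ ρ ^ 3)
    (hI : ∀ u, 0 < u → HasDerivAt I (k u / u) u)
    {u : ℝ} (hu : 3 / 16 * ρ ^ 3 ≤ u) (hu2 : u ≤ ρ ^ 3) :
    |I (ρ ^ 3) - I u| ≤ 1000000 / ρ ^ 3 := by
  have hρ0 : 0 < ρ := by linarith
  have hu0 : 0 < u := lt_of_lt_of_le (by positivity) hu
  have hρ3 : 0 < ρ ^ 3 := by positivity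
  have key := cmp_deriv (A := u) (B := ρ ^ 3) hu2
    (f := fun v => I v + p v * Zf ρ v ^ 4)
    (f' := fun v => 3 * ρ ^ 4 * Zf ρ v ^ 4 * k v / v + 2 * v * p v * Zf ρ v ^ 8)
    (g := fun v => 10 * Zf ρ v ^ 3 + 768000 / ρ ^ 2 * Zf ρ v)
    (g' := fun v => 15 * v * Zf ρ v ^ 7 + 768000 / ρ ^ 2 * (v / 2 * Zf ρ v ^ 5)) ?_ ?_ ?_
  · have bd : ∀ v, u ≤ v → v ≤ ρ ^ 3 → |p v * Zf ρ v ^ 4| ≤ 7 / ρ ^ 3 ∧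
        10 * Zf ρ v ^ 3 + 768000 / ρ ^ 2 * Zf ρ v ≤ 768010 / ρ ^ 3 ∧
        0 ≤ 10 * Zf ρ v ^ 3 + 768000 / ρ ^ 2 * Zf ρ v := by
      intro v hv1 hv2
      have hv0 : 0 < v := by linarith
      have hz := Zf_pos hρ hv0 hv2
      have hr := Zf_rho hρ hv0 hv2
      have hc := (Ff_cons S hρ hν (hu.trans hv1) hv2).1
      set Z := Zf ρ v
      have hZ : Z ≤ 1 / ρ := by rw [le_div_iff₀ hρ0]; linarith
      have hZ3 : Z ^ 3 ≤ (1 / ρ) ^ 3 := by gcongr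
      rw [one_div, inv_pow] at hZ3
      refine ⟨?_, ?_, by positivity⟩
      · rw [abs_mul, abs_of_pos (by positivity : 0 < Z ^ 4)]
        calc |p v| * Z ^ 4 = (|p v| * Z) * Z ^ 3 := by ring
          _ ≤ 7 * (ρ ^ 3)⁻¹ := by gcongr
          _ = _ := by ring
      · calc 10 * Z ^ 3 + 768000 / ρ ^ 2 * Z ≤ 10 * (ρ ^ 3)⁻¹ + 768000 / ρ ^ 2 * (1 / ρ) := by gcongr
          _ = _ := by field_simp; norm_num
    obtain ⟨a1, a2, a3⟩ := bd u le_rfl hu2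
    obtain ⟨b1, b2, b3⟩ := bd (ρ ^ 3) hu2 le_rfl
    have e : I (ρ ^ 3) - I u = (I (ρ ^ 3) + p (ρ ^ 3) * Zf ρ (ρ ^ 3) ^ 4 - (I u + p u * Zf ρ u ^ 4))
      - p (ρ ^ 3) * Zf ρ (ρ ^ 3) ^ 4 + p u * Zf ρ u ^ 4 := by ring
    rw [e]
    have h7 : (1000000:ℝ) / ρ ^ 3 = 768010 / ρ ^ 3 + 7 / ρ ^ 3 + 7 / ρ ^ 3 + 231976 / ρ ^ 3 := by ring
    have h8 : (0:ℝ) ≤ 231976 / ρ ^ 3 := by positivity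
    rw [abs_le] at *
    constructor <;> linarith [a1.1, a1.2, b1.1, b1.2, key.1, key.2]
  · intro v hv1 hv2
    have hv0 : 0 < v := by linarith
    refine ((hI v hv0).fun_add ((S.dp v hv0).fun_mul ((Zf_deriv hρ hv0 hv2).fun_pow 4))).congr_deriv ?_
    have h4 := Zf_four hρ hv0 hv2
    field_simp
    norm_num
    linear_combination (-2) * k v * h4
  · intro v hv1 hv2
    have hv0 : 0 < v := by linarith
    refine ((((Zf_deriv hρ hv0 hv2).fun_pow 3).const_mul 10).fun_add
      ((Zf_deriv hρ hv0 hv2).const_mul (768000 / ρ ^ 2))).congr_deriv ?_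
    norm_num
    ring
  · intro v hv1 hv2
    have hv0 : 0 < v := by linarith
    have hz := Zf_pos hρ hv0 hv2
    obtain ⟨c1, c2⟩ := Ff_cons S hρ hν (hu.trans hv1) hv2
    set Z := Zf ρ v
    refine (abs_add_le _ _).trans ?_
    rw [abs_div, abs_mul _ (k v), abs_mul _ (Z ^ 8), abs_mul _ (p v), abs_of_pos hv0,
      abs_of_pos (by positivity : 0 < 3 * ρ ^ 4 * Z ^ 4), abs_of_pos (by positivity : 0 < 2 * v),
      abs_of_pos (by positivity : 0 < Z ^ 8)]
    have h1 : 3 * ρ ^ 4 * Z ^ 4 * |k v| / v ≤ 768000 / ρ ^ 2 * (v / 2 * Z ^ 5) := by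
      calc 3 * ρ ^ 4 * Z ^ 4 * |k v| / v ≤ 3 * ρ ^ 4 * Z ^ 4 * (4500 * Z) / v := by gcongr
        _ = Z ^ 5 * (13500 * ρ ^ 4 / v) := by ring
        _ ≤ Z ^ 5 * (768000 / ρ ^ 2 * (v / 2)) := by
            gcongr
            rw [div_mul_div_comm, div_le_div_iff₀ hv0 (by positivity)]
            have : (3 / 16 * ρ ^ 3) ^ 2 ≤ v ^ 2 := by
              have := hu.trans hv1
              gcongr
            nlinarith
        _ = _ := by ring
    have h2 : 2 * v * |p v| * Z ^ 8 ≤ 15 * v * Z ^ 7 := by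
      calc 2 * v * |p v| * Z ^ 8 = 2 * v * (|p v| * Z) * Z ^ 7 := by ring
        _ ≤ 2 * v * 7 * Z ^ 7 := by gcongr
        _ ≤ 15 * v * Z ^ 7 := by gcongr ?_ * _; linarith
    linarith

lemma D3_at {ρ : ℝ} {k p : ℝ → ℝ} (S : Sol (ρ ^ 3) k p) (hρ : 1 ≤ ρ) (hν : 2 ≤ ρ ^ 3) :
    |k (ρ ^ 3)| ≤ 4500 / ρ ∧ |p (ρ ^ 3)| ≤ 14 * ρ := by
  have hρ0 : 0 < ρ := by linarith
  have hρ3 : 0 < ρ ^ 3 := by positivity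
  have hz := Zf_pos hρ hρ3 le_rfl
  have hr := Zf_rho hρ hρ3 le_rfl
  have h4 := Zf_four hρ hρ3 le_rfl
  obtain ⟨c1, c2⟩ := Ff_cons S hρ hν (by linarith : 3 / 16 * ρ ^ 3 ≤ ρ ^ 3) le_rfl
  set Z := Zf ρ (ρ ^ 3)
  constructor
  · refine c2.trans ?_
    rw [le_div_iff₀ hρ0]; linarith
  · have h5 : 1 ≤ 2 * ρ * Z := by
      by_contra h
      push Not at h
      have : (2 * ρ * Z) ^ 4 < 1 := pow_lt_one₀ (by positivity) h (by norm_num)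
      nlinarith
    calc |p (ρ ^ 3)| = |p (ρ ^ 3)| * 1 := by ring
      _ ≤ |p (ρ ^ 3)| * (2 * ρ * Z) := by gcongr
      _ = 2 * ρ * (|p (ρ ^ 3)| * Z) := by ring
      _ ≤ 2 * ρ * 7 := by gcongr
      _ = _ := by ring

lemma D3_right1 {ρ : ℝ} {k p I : ℝ → ℝ} (S : Sol (ρ ^ 3) k p) (hρ : 1 ≤ ρ) (hν : 2 ≤ ρ ^ 3)
    (hI : ∀ u, 0 < u → HasDerivAt I (k u / u) u)
    {u : ℝ} (hu : ρ ^ 3 ≤ u) (hu2 : u ≤ ρ ^ 3 + ρ) :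
    |I u - I (ρ ^ 3)| ≤ 4500 / ρ ^ 3 := by
  have hρ0 : 0 < ρ := by linarith
  have hρ3 : 0 < ρ ^ 3 := by positivity
  have key := cmp_deriv (A := ρ ^ 3) (B := u) hu (f := I) (f' := fun v => k v / v)
    (g := fun v => 4500 / ρ ^ 4 * v) (g' := fun v => 4500 / ρ ^ 4 * 1)
    (fun v hv1 hv2 => hI v (by linarith)) (fun v _ _ => (hasDerivAt_id v).const_mul _) ?_
  · refine key.trans ?_
    calc 4500 / ρ ^ 4 * u - 4500 / ρ ^ 4 * ρ ^ 3 = 4500 / ρ ^ 4 * (u - ρ ^ 3) := by ring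
      _ ≤ 4500 / ρ ^ 4 * ρ := by gcongr; linarith
      _ = _ := by field_simp
  · intro v hv1 hv2
    have h1 := S.k_anti hρ3 (Set.mem_Ici.2 le_rfl) (Set.mem_Ici.2 hv1) hv1
    simp only at h1
    have h2 := (sq_le_sq.1 h1).trans (D3_at S hρ hν).1
    rw [abs_div, abs_of_pos (by linarith : 0 < v)]
    calc |k v| / v ≤ (4500 / ρ) / ρ ^ 3 := by gcongr
      _ = _ := by field_simp

lemma D3_right2 {ρ : ℝ} {k p I : ℝ → ℝ} (S : Sol (ρ ^ 3) k p) (hρ : 1 ≤ ρ) (hν : 2 ≤ ρ ^ 3)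
    (hI : ∀ u, 0 < u → HasDerivAt I (k u / u) u)
    {u : ℝ} (hu : ρ ^ 3 + ρ ≤ u) :
    |I u - I (ρ ^ 3 + ρ)| ≤ 50 / ρ ^ 3 := by
  have hρ0 : 0 < ρ := by linarith
  have hρ3 : 0 < ρ ^ 3 := by positivity
  have hQ : ∀ v, ρ ^ 3 + ρ ≤ v → 2 * ρ ^ 4 ≤ v ^ 2 - (ρ ^ 3) ^ 2 := by
    intro v hv
    have : (ρ ^ 3 + ρ) ^ 2 ≤ v ^ 2 := by gcongr
    nlinarith [sq_nonneg ρ]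
  have hρ4 : 0 < ρ ^ 4 := by positivity
  have hp : ∀ v, ρ ^ 3 ≤ v → |p v| ≤ 14 * ρ := by
    intro v hv
    have h1 := S.p_anti hρ3 (Set.mem_Ici.2 le_rfl) (Set.mem_Ici.2 hv) hv
    simp only at h1
    exact (sq_le_sq.1 h1).trans (D3_at S hρ hν).2
  have key := cmp_deriv (A := ρ ^ 3 + ρ) (B := u) hu
    (f := fun v => I v - p v * (v ^ 2 - (ρ ^ 3) ^ 2)⁻¹)
    (f' := fun v => 2 * v * p v / (v ^ 2 - (ρ ^ 3) ^ 2) ^ 2)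
    (g := fun v => -(14 * ρ) * (v ^ 2 - (ρ ^ 3) ^ 2)⁻¹)
    (g' := fun v => 2 * v * (14 * ρ) / (v ^ 2 - (ρ ^ 3) ^ 2) ^ 2) ?_ ?_ ?_
  · have bd : ∀ v, ρ ^ 3 + ρ ≤ v → |p v * (v ^ 2 - (ρ ^ 3) ^ 2)⁻¹| ≤ 7 / ρ ^ 3 ∧
        14 * ρ * (v ^ 2 - (ρ ^ 3) ^ 2)⁻¹ ≤ 7 / ρ ^ 3 ∧ 0 ≤ 14 * ρ * (v ^ 2 - (ρ ^ 3) ^ 2)⁻¹ := by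
      intro v hv
      have hq := hQ v hv
      have hq0 : 0 < v ^ 2 - (ρ ^ 3) ^ 2 := by linarith
      have h2 : 14 * ρ * (v ^ 2 - (ρ ^ 3) ^ 2)⁻¹ ≤ 7 / ρ ^ 3 := by
        calc 14 * ρ * (v ^ 2 - (ρ ^ 3) ^ 2)⁻¹ ≤ 14 * ρ * (2 * ρ ^ 4)⁻¹ := by gcongr
          _ = _ := by field_simp; norm_num
      refine ⟨?_, h2, by positivity⟩
      rw [abs_mul, abs_of_pos (inv_pos.2 hq0)]
      refine le_trans ?_ h2
      gcongr
      exact hp v (by linarith)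
    obtain ⟨a1, a2, a3⟩ := bd u hu
    obtain ⟨b1, b2, b3⟩ := bd _ le_rfl
    have h7 : (50:ℝ) / ρ ^ 3 = 7 / ρ ^ 3 + 7 / ρ ^ 3 + 7 / ρ ^ 3 + 29 / ρ ^ 3 := by ring
    have h8 : (0:ℝ) ≤ 29 / ρ ^ 3 := by positivity
    rw [abs_le] at *
    constructor <;> linarith [a1.1, a1.2, b1.1, b1.2, key.1, key.2]
  · intro v hv1 hv2
    have hv0 : 0 < v := by linarith
    have hq := hQ v hv1
    have hq0 : 0 < v ^ 2 - (ρ ^ 3) ^ 2 := by linarith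
    refine ((hI v hv0).fun_sub ((S.dp v hv0).fun_mul
      ((((hasDerivAt_id v).fun_pow 2).sub_const ((ρ ^ 3) ^ 2)).fun_inv hq0.ne'))).congr_deriv ?_
    simp only [id]
    generalize hQd : v ^ 2 - (ρ ^ 3) ^ 2 = Q at *
    field_simp
    norm_num
    ring
  · intro v hv1 hv2
    have hv0 : 0 < v := by linarith
    have hq := hQ v hv1
    have hq0 : 0 < v ^ 2 - (ρ ^ 3) ^ 2 := by linarith
    refine (((((hasDerivAt_id v).fun_pow 2).sub_const ((ρ ^ 3) ^ 2)).fun_inv hq0.ne').const_mul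
      (-(14 * ρ))).congr_deriv ?_
    simp only [id]
    generalize hQd : v ^ 2 - (ρ ^ 3) ^ 2 = Q at *
    field_simp
    norm_num
  · intro v hv1 hv2
    have hv0 : 0 < v := by linarith
    have hq := hQ v hv1
    have hq0 : 0 < v ^ 2 - (ρ ^ 3) ^ 2 := by linarith
    rw [abs_div, abs_mul, abs_of_pos (by positivity : 0 < 2 * v),
      abs_of_pos (by positivity : 0 < (v ^ 2 - (ρ ^ 3) ^ 2) ^ 2)]
    have := hp v (by linarith)
    gcongr

lemma D3 {ν : ℝ} {k p I : ℝ → ℝ} (S : Sol ν k p) (hν : 2 ≤ ν)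
    (hI : ∀ u, 0 < u → HasDerivAt I (k u / u) u)
    {u : ℝ} (hu : 3 / 16 * ν ≤ u) :
    |I u - I ν| ≤ 1000000 / ν ∧ |k ν| ≤ 4500 := by
  obtain ⟨ρ, hρ, e⟩ : ∃ ρ : ℝ, 1 ≤ ρ ∧ ν = ρ ^ 3 := by
    refine ⟨ν ^ (1 / 3 : ℝ), Real.one_le_rpow (by linarith) (by norm_num), ?_⟩
    rw [← Real.rpow_mul_natCast (by linarith)]
    norm_num
  subst e
  have hρ0 : 0 < ρ := by linarith
  constructor
  · rcases le_total u (ρ ^ 3) with h | h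
    · rw [abs_sub_comm]; exact D3_left S hρ hν hI hu h
    have e1 : (4500:ℝ) / ρ ^ 3 + 50 / ρ ^ 3 ≤ 1000000 / ρ ^ 3 := by
      rw [← add_div]; gcongr; norm_num
    have e2 : (0:ℝ) ≤ 50 / ρ ^ 3 := by positivity
    rcases le_total u (ρ ^ 3 + ρ) with h2 | h2
    · have := D3_right1 S hρ hν hI h h2
      linarith
    · have h3 := D3_right1 S hρ hν hI (by linarith : ρ ^ 3 ≤ ρ ^ 3 + ρ) le_rfl
      have h4 := D3_right2 S hρ hν hI h2
      have := abs_sub_le (I u) (I (ρ ^ 3 + ρ)) (I (ρ ^ 3))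
      linarith
  · refine (D3_at S hρ hν).1.trans ?_
    rw [div_le_iff₀ hρ0]; linarith
lemma piece_mono {f : ℝ → ℝ} (hf : ContDiff ℝ 1 f) {s t : ℝ} (hst : s ≤ t)
    (hm : MonotoneOn f (Set.Icc s t)) : ∫ u in s..t, |deriv f u| = f t - f s := by
  have hd : ∀ u, HasDerivAt f (deriv f u) u := fun u =>
    (hf.differentiable (by norm_num) u).hasDerivAt
  have hc : Continuous (deriv f) := hf.continuous_deriv le_rfl
  rw [← intervalIntegral.integral_eq_sub_of_hasDerivAt (fun u _ => hd u) (hc.intervalIntegrable _ _)]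
  refine intervalIntegral.integral_congr_Ioo_of_le hst ?_
  intro u hu
  refine abs_of_nonneg ?_
  rw [← derivWithin_of_mem_nhds (Icc_mem_nhds hu.1 hu.2)]
  exact hm.derivWithin_nonneg

lemma piece_var {f : ℝ → ℝ} (hf : ContDiff ℝ 1 f) {s t : ℝ} (hst : s ≤ t)
    (hm : MonotoneOn f (Set.Icc s t) ∨ AntitoneOn f (Set.Icc s t)) :
    ∫ u in s..t, |deriv f u| = |f t - f s| := by
  rcases hm with hm | hm
  · rw [piece_mono hf hst hm, abs_of_nonneg]
    linarith [hm (Set.left_mem_Icc.2 hst) (Set.right_mem_Icc.2 hst) hst]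
  · have h := piece_mono hf.neg hst hm.neg
    have e : ∀ u, |deriv (fun x => -f x) u| = |deriv f u| := by
      intro u; rw [deriv.fun_neg, abs_neg]
    simp only [e] at h
    rw [h, abs_of_nonpos]
    · ring
    · linarith [hm (Set.left_mem_Icc.2 hst) (Set.right_mem_Icc.2 hst) hst]

lemma var_bound {f : ℝ → ℝ} (hf : ContDiff ℝ 1 f) {M : ℕ} (hM : 0 < M) (hp : PiecewiseMono f M)
    {A B : ℝ} (hA : ∀ t, 0 ≤ t → A ≤ f t) (hB : ∀ t, 0 ≤ t → f t ≤ B) {l h : ℝ} (hl : 0 ≤ l)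
    (hlh : l ≤ h) : ∫ u in l..h, |deriv f u| ≤ M * (B - A) := by
  obtain ⟨a, a0, am, hpc, hlast⟩ := hp
  have hc : Continuous fun u => |deriv f u| := (hf.continuous_deriv le_rfl).abs
  have hi : ∀ s t, IntervalIntegrable (fun u => |deriv f u|) MeasureTheory.volume s t :=
    fun s t => hc.intervalIntegrable _ _
  have an : ∀ n, 0 ≤ a n := fun n => by rw [← a0]; exact am (Nat.zero_le n)
  have hosc : ∀ s t, 0 ≤ s → 0 ≤ t → |f t - f s| ≤ B - A := by
    intro s t hs ht
    rw [abs_le]; constructor <;> linarith [hA s hs, hA t ht, hB s hs, hB t ht]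
  have ind : ∀ n, n + 1 ≤ M → ∫ u in (0:ℝ)..a n, |deriv f u| ≤ n * (B - A) := by
    intro n
    induction n with
    | zero => intro _; rw [a0]; simp
    | succ n ih =>
      intro hn
      rw [← intervalIntegral.integral_add_adjacent_intervals (hi 0 (a n)) (hi _ _),
        piece_var hf (am (Nat.le_succ n)) (hpc n (by omega))]
      push_cast
      linarith [ih (by omega), hosc _ _ (an n) (an (n + 1))]
  set h' := max h (a (M - 1)) with hh'
  have hl2 : ∫ u in (a (M-1))..h', |deriv f u| ≤ B - A := by
    rw [piece_var hf (le_max_right _ _)]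
    · exact hosc _ _ (an _) ((an _).trans (le_max_right _ _))
    · rcases hlast with hq | hq
      · exact Or.inl (hq.mono Set.Icc_subset_Ici_self)
      · exact Or.inr (hq.mono Set.Icc_subset_Ici_self)
  have htot : ∫ u in (0:ℝ)..h', |deriv f u| ≤ M * (B - A) := by
    rw [← intervalIntegral.integral_add_adjacent_intervals (hi 0 (a (M-1))) (hi _ _)]
    have := ind (M - 1) (by omega)
    have e : ((M - 1 : ℕ) : ℝ) = M - 1 := by
      rw [Nat.cast_sub (by omega)]; norm_num
    rw [e] at this
    linarith
  refine le_trans ?_ htot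
  exact intervalIntegral.integral_mono_interval hl hlh (le_max_left _ _)
    (Filter.Eventually.of_forall fun u => abs_nonneg _) (hi _ _)
lemma ibp_bound {F D N g : ℝ → ℝ} {l h : ℝ} (hlh : l ≤ h)
    (hF : ∀ u ∈ Set.Icc l h, HasDerivAt F (D u - N u) u) (hl0 : F l = 0) (hh0 : F h = 0)
    (hD : ContinuousOn D (Set.Icc l h)) (hN : ContinuousOn N (Set.Icc l h))
    (hb : ∀ u ∈ Set.Icc l h, |N u| ≤ g u)
    (hg : IntervalIntegrable g MeasureTheory.volume l h) :
    |∫ u in l..h, D u| ≤ ∫ u in l..h, g u := by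
  have hDi : IntervalIntegrable D MeasureTheory.volume l h := hD.intervalIntegrable_of_Icc hlh
  have hNi : IntervalIntegrable N MeasureTheory.volume l h := hN.intervalIntegrable_of_Icc hlh
  have h1 := intervalIntegral.integral_eq_sub_of_hasDerivAt (f := F) (f' := fun u => D u - N u)
    (a := l) (b := h) (by rw [Set.uIcc_of_le hlh]; exact hF) (hDi.sub hNi)
  rw [intervalIntegral.integral_sub hDi hNi, hl0, hh0] at h1
  have h2 : ∫ u in l..h, D u = ∫ u in l..h, N u := by linarith
  rw [h2, ← Real.norm_eq_abs]
  refine intervalIntegral.norm_integral_le_of_norm_le hlh ?_ hg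
  exact Filter.Eventually.of_forall fun u hu => hb u (Set.Ioc_subset_Icc_self hu)

lemma int_lin {f g : ℝ → ℝ} (hf : Continuous f) (hg : Continuous g) (l h c d e : ℝ) :
    ∫ u in l..h, (c + d * f u + e * g u) =
      (h - l) * c + d * (∫ u in l..h, f u) + e * ∫ u in l..h, g u := by
  rw [intervalIntegral.integral_add (f := fun u => c + d * f u) (g := fun u => e * g u)
      (Continuous.intervalIntegrable (by fun_prop) _ _)
      (Continuous.intervalIntegrable (by fun_prop) _ _),
    intervalIntegral.integral_add (f := fun u => c) (g := fun u => d * f u)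
      (Continuous.intervalIntegrable (by fun_prop) _ _)
      (Continuous.intervalIntegrable (by fun_prop) _ _),
    intervalIntegral.integral_const_mul, intervalIntegral.integral_const_mul,
    intervalIntegral.integral_const, smul_eq_mul]

lemma exists_prim {k : ℝ → ℝ} (hk : ∀ u, 0 < u → ContinuousAt k u) :
    ∃ I : ℝ → ℝ, ∀ u, 0 < u → HasDerivAt I (k u / u) u := by
  refine ⟨fun u => ∫ v in (1:ℝ)..u, k v / v, ?_⟩
  intro u hu
  have hc : ContinuousOn (fun v => k v / v) (Set.Ioi 0) := by
    intro v hv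
    exact ((hk v hv).div continuousAt_id (ne_of_gt hv)).continuousWithinAt
  refine intervalIntegral.integral_hasDerivAt_right ?_ ?_ ?_
  · refine (hc.mono ?_).intervalIntegrable
    intro v hv
    exact lt_of_lt_of_le (lt_min one_pos hu) hv.1
  · exact hc.stronglyMeasurableAtFilter isOpen_Ioi u hu
  · exact hc.continuousAt (Ioi_mem_nhds hu)

lemma reg1 {ν : ℝ} {k p φ : ℝ → ℝ} (S : Sol ν k p) (hν : 2 ≤ ν) {l : ℝ} (hl : 3 / 2 * ν ≤ l)
    (hφ : ∀ t, 0 ≤ φ t ∧ φ t ≤ 1) :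
    |∫ u in l..(4 * l), k u * φ u / u| ≤ 13500 * Real.exp (-(27 / 100) * ν) := by
  have hl0 : 0 < l := by linarith
  have hk : ∀ u, l ≤ u → |k u| ≤ 4500 * Real.exp (-(27 / 100) * ν) := by
    intro u hu
    have h1 := S.exp_decay (by linarith) (hl.trans hu)
    obtain ⟨I, hI⟩ := exists_prim (fun u hu => (S.dk u hu).continuousAt)
    have h2 := (D3 S hν hI (by linarith : 3 / 16 * ν ≤ ν)).2
    refine abs_le_of_sq_le_sq ?_ (by positivity)
    refine h1.trans ?_
    rw [mul_pow, ← Real.exp_nat_mul]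
    have h3 : k ν ^ 2 ≤ 4500 ^ 2 := by rw [← sq_abs]; gcongr
    have e : ((2:ℕ):ℝ) * (-(27 / 100) * ν) = -(54 / 100) * ν := by push_cast; ring
    rw [e]
    gcongr
  have h5 := intervalIntegral.norm_integral_le_of_norm_le_const (a := l) (b := 4 * l)
    (f := fun u => k u * φ u / u) (C := 4500 * Real.exp (-(27 / 100) * ν) / l) ?_
  · rw [Real.norm_eq_abs] at h5
    refine h5.trans (le_of_eq ?_)
    rw [abs_of_nonneg (by linarith)]
    field_simp
    ring
  · intro u hu
    rw [Set.uIoc_of_le (by linarith)] at hu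
    have hu0 : 0 < u := hl0.trans hu.1
    rw [Real.norm_eq_abs, abs_div, abs_mul, abs_of_pos hu0, abs_of_nonneg (hφ u).1]
    have h6 : |k u| * φ u ≤ |k u| := mul_le_of_le_one_right (abs_nonneg _) (hφ u).2
    have h7 := hk u hu.1.le
    have h8 := hu.1.le
    have h9 : 0 ≤ |k u| * φ u := mul_nonneg (abs_nonneg _) (hφ u).1
    have h10 := h6.trans h7
    gcongr

lemma reg2 {ν : ℝ} {k p φ : ℝ → ℝ} (S : Sol ν k p) (hν : 2 ≤ ν) {l h m : ℝ}
    (hl : 3 / 16 * ν ≤ l) (hlh : l ≤ h) (hs : ContDiff ℝ 2 φ) (e1 : φ l = 0) (e2 : φ h = 0)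
    (V : ∫ u in l..h, |deriv φ u| ≤ m) :
    |∫ u in l..h, k u * φ u / u| ≤ 1000000 / ν * m := by
  have hl0 : 0 < l := by linarith
  have hd : ∀ u, HasDerivAt φ (deriv φ u) u := fun u =>
    (hs.differentiable (by norm_num) u).hasDerivAt
  have hc' : Continuous (deriv φ) := hs.continuous_deriv (by norm_num)
  have hc : Continuous φ := hs.continuous
  obtain ⟨I, hI⟩ := exists_prim (fun u hu => (S.dk u hu).continuousAt)
  have hpos : ∀ u ∈ Set.Icc l h, 0 < u := fun u hu => hl0.trans_le hu.1
  have hIc : ContinuousOn I (Set.Icc l h) := fun u hu =>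
    (hI u (hpos u hu)).continuousAt.continuousWithinAt
  have hkc : ContinuousOn k (Set.Icc l h) := (S.kcont hl0).mono Set.Icc_subset_Ici_self
  have := ibp_bound (F := fun u => (I u - I ν) * φ u) (D := fun u => k u * φ u / u)
    (N := fun u => -((I u - I ν) * deriv φ u)) (g := fun u => 1000000 / ν * |deriv φ u|) hlh
    ?_ (by simp [e1]) (by simp [e2]) ?_ ?_ ?_ ?_
  · refine this.trans ?_
    rw [intervalIntegral.integral_const_mul]
    gcongr
  · intro u hu
    refine (((hI u (hpos u hu)).sub_const (I ν)).fun_mul (hd u)).congr_deriv ?_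
    ring
  · exact (hkc.mul hc.continuousOn).div continuousOn_id fun u hu => (hpos u hu).ne'
  · exact ((hIc.sub continuousOn_const).mul hc'.continuousOn).neg
  · intro u hu
    rw [abs_neg, abs_mul]
    have := (D3 S hν hI (hl.trans hu.1)).1
    gcongr
  · exact (continuous_const.mul hc'.abs).intervalIntegrable _ _

lemma reg3a {ν : ℝ} {k p φ : ℝ → ℝ} (S : Sol ν k p) (hν : 2 ≤ ν) {l h m : ℝ}
    (hl0 : 0 < l) (hlh : l ≤ h) (hh : h ≤ 3 / 4 * ν) (hs : ContDiff ℝ 2 φ) (e1 : φ l = 0)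
    (e2 : φ h = 0) (hφ : ∀ t, 0 ≤ φ t ∧ φ t ≤ 1)
    (V : ∫ u in l..h, |deriv φ u| ≤ m) :
    |∫ u in l..h, k u * φ u / u| ≤ 5 * (3 + m) * (Real.sqrt ν / ν ^ 2) := by
  have hν0 : 0 < ν := by linarith
  have hd : ∀ u, HasDerivAt φ (deriv φ u) u := fun u =>
    (hs.differentiable (by norm_num) u).hasDerivAt
  have hc' : Continuous (deriv φ) := hs.continuous_deriv (by norm_num)
  have hc : Continuous φ := hs.continuous
  have hpos : ∀ u ∈ Set.Icc l h, 0 < u := fun u hu => hl0.trans_le hu.1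
  have hq : ∀ u ∈ Set.Icc l h, 7 / 16 * ν ^ 2 ≤ ν ^ 2 - u ^ 2 := by
    intro u hu
    have : u ^ 2 ≤ (3 / 4 * ν) ^ 2 := by
      have := hpos u hu
      have := hu.2.trans hh
      gcongr
    nlinarith
  have hq0 : ∀ u ∈ Set.Icc l h, 0 < ν ^ 2 - u ^ 2 := fun u hu =>
    lt_of_lt_of_le (by positivity) (hq u hu)
  set W := 16 / 7 / ν ^ 2 with hW
  have hW0 : 0 < W := by positivity
  have hw : ∀ u ∈ Set.Icc l h, (ν ^ 2 - u ^ 2)⁻¹ ≤ W := by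
    intro u hu
    calc (ν ^ 2 - u ^ 2)⁻¹ ≤ (7 / 16 * ν ^ 2)⁻¹ := inv_anti₀ (by positivity) (hq u hu)
      _ = W := by rw [hW]; field_simp
  have hwc : ContinuousOn (fun u => (ν ^ 2 - u ^ 2)⁻¹) (Set.Icc l h) :=
    ContinuousOn.inv₀ (by fun_prop) fun u hu => (hq0 u hu).ne'
  have hkc : ContinuousOn k (Set.Icc l h) := (S.kcont hl0).mono Set.Icc_subset_Ici_self
  have hpc : ContinuousOn p (Set.Icc l h) := (S.pcont hl0).mono Set.Icc_subset_Ici_self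
  have hp : ∀ u ∈ Set.Icc l h, |p u| ≤ 2 * Real.sqrt ν := by
    intro u hu
    refine abs_le_of_sq_le_sq ?_ (by positivity)
    rw [mul_pow, Real.sq_sqrt hν0.le]
    have := S.en u (hpos u hu)
    have := mul_nonneg (hq0 u hu).le (sq_nonneg (k u))
    linarith
  have := ibp_bound (F := fun u => -(p u * ((ν ^ 2 - u ^ 2)⁻¹ * φ u))) (D := fun u => k u * φ u / u)
    (N := fun u => p u * (2 * u * (ν ^ 2 - u ^ 2)⁻¹ ^ 2 * φ u + (ν ^ 2 - u ^ 2)⁻¹ * deriv φ u))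
    (g := fun u => 2 * Real.sqrt ν * (2 * h * W ^ 2 + W * |deriv φ u|)) hlh
    ?_ (by simp [e1]) (by simp [e2]) ?_ ?_ ?_ ?_
  · refine this.trans ?_
    rw [intervalIntegral.integral_const_mul]
    have hlin := int_lin hc'.abs hc'.abs l h (2 * h * W ^ 2) W 0
    simp only [zero_mul, add_zero] at hlin
    rw [hlin]
    have h1 : (h - l) * (2 * h * W ^ 2) ≤ 3 * W := by
      have h2 : h ^ 2 * W ≤ 9 / 7 := by
        calc h ^ 2 * W ≤ (3 / 4 * ν) ^ 2 * W := by gcongr; linarith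
          _ = 9 / 7 := by rw [hW]; field_simp; norm_num
      have h0 : 0 < h := by linarith
      calc (h - l) * (2 * h * W ^ 2) ≤ h * (2 * h * W ^ 2) := by gcongr; linarith
        _ = 2 * (h ^ 2 * W) * W := by ring
        _ ≤ 2 * (9 / 7) * W := by gcongr
        _ ≤ 3 * W := by gcongr; norm_num
    calc 2 * Real.sqrt ν * ((h - l) * (2 * h * W ^ 2) + W * ∫ u in l..h, |deriv φ u|)
        ≤ 2 * Real.sqrt ν * (3 * W + W * m) := by gcongr
      _ = (32 / 7) * (3 + m) * (Real.sqrt ν / ν ^ 2) := by rw [hW]; ring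
      _ ≤ 5 * (3 + m) * (Real.sqrt ν / ν ^ 2) := by
        have : 0 ≤ ∫ u in l..h, |deriv φ u| :=
          intervalIntegral.integral_nonneg hlh fun u _ => abs_nonneg _
        have : 0 ≤ 3 + m := by linarith
        gcongr
        norm_num
  · intro u hu
    have hu0 := hpos u hu
    have hq1 := hq0 u hu
    refine ((S.dp u hu0).fun_mul (((((hasDerivAt_id u).fun_pow 2).const_sub (ν ^ 2)).fun_inv
      hq1.ne').fun_mul (hd u))).fun_neg.congr_deriv ?_
    simp only [id]
    have e : u ^ 2 - ν ^ 2 = -(ν ^ 2 - u ^ 2) := by ring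
    rw [e]
    generalize ν ^ 2 - u ^ 2 = Q at *
    field_simp
    norm_num
    ring
  · exact (hkc.mul hc.continuousOn).div continuousOn_id fun u hu => (hpos u hu).ne'
  · exact hpc.mul ((((continuousOn_const.mul continuousOn_id).mul (hwc.pow 2)).mul hc.continuousOn).add
      (hwc.mul hc'.continuousOn))
  · intro u hu
    have hu0 := hpos u hu
    have hq1 := inv_pos.2 (hq0 u hu)
    have hw1 := hw u hu
    have hp1 := hp u hu
    obtain ⟨f1, f2⟩ := hφ u
    set w := (ν ^ 2 - u ^ 2)⁻¹
    rw [abs_mul]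
    gcongr
    refine (abs_add_le _ _).trans ?_
    rw [abs_mul w, abs_of_pos hq1, abs_of_nonneg (by positivity : 0 ≤ 2 * u * w ^ 2 * φ u)]
    have hu2 := hu.2
    have h0 : 0 < h := by linarith
    calc 2 * u * w ^ 2 * φ u + w * |deriv φ u| ≤ 2 * h * W ^ 2 * 1 + W * |deriv φ u| := by gcongr
      _ = _ := by ring
  · exact (by fun_prop : Continuous fun u => 2 * Real.sqrt ν * (2 * h * W ^ 2 + W * |deriv φ u|)).intervalIntegrable _ _

lemma reg3b {ν : ℝ} {k p φ : ℝ → ℝ} (S : Sol ν k p) (hν : 2 ≤ ν) {l h m m2 : ℝ}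
    (hl0 : 0 < l) (hlh : l ≤ h) (hh : h ≤ 3 / 4 * ν) (hs : ContDiff ℝ 2 φ) (e1 : φ l = 0)
    (e2 : φ h = 0) (e3 : deriv φ l = 0) (e4 : deriv φ h = 0) (hφ : ∀ t, 0 ≤ φ t ∧ φ t ≤ 1)
    (V : ∫ u in l..h, |deriv φ u| ≤ m) (V2 : h * ∫ u in l..h, |deriv (deriv φ) u| ≤ m2) :
    |∫ u in l..h, k u * φ u / u| ≤ 10 * (19 + 7 * m + m2) * ((Real.sqrt ν)⁻¹ / ν ^ 2) := by
  have hν0 : 0 < ν := by linarith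
  have hsν : 0 < Real.sqrt ν := Real.sqrt_pos.2 hν0
  have hd : ∀ u, HasDerivAt φ (deriv φ u) u := fun u =>
    (hs.differentiable (by norm_num) u).hasDerivAt
  have hs' : ContDiff ℝ 1 (deriv φ) := by
    have : ContDiff ℝ (1 + 1) φ := by norm_num; exact hs
    exact (contDiff_succ_iff_deriv.1 this).2.2
  have hd' : ∀ u, HasDerivAt (deriv φ) (deriv (deriv φ) u) u := fun u =>
    (hs'.differentiable (by norm_num) u).hasDerivAt
  have hc' : Continuous (deriv φ) := hs.continuous_deriv (by norm_num)
  have hc'' : Continuous (deriv (deriv φ)) := hs'.continuous_deriv le_rfl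
  have hc : Continuous φ := hs.continuous
  have hpos : ∀ u ∈ Set.Icc l h, 0 < u := fun u hu => hl0.trans_le hu.1
  have hq : ∀ u ∈ Set.Icc l h, 7 / 16 * ν ^ 2 ≤ ν ^ 2 - u ^ 2 := by
    intro u hu
    have : u ^ 2 ≤ (3 / 4 * ν) ^ 2 := by
      have := hpos u hu
      have := hu.2.trans hh
      gcongr
    nlinarith
  have hq0 : ∀ u ∈ Set.Icc l h, 0 < ν ^ 2 - u ^ 2 := fun u hu =>
    lt_of_lt_of_le (by positivity) (hq u hu)
  set W := 16 / 7 / ν ^ 2 with hW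
  have hW0 : 0 < W := by positivity
  have hw : ∀ u ∈ Set.Icc l h, (ν ^ 2 - u ^ 2)⁻¹ ≤ W := by
    intro u hu
    calc (ν ^ 2 - u ^ 2)⁻¹ ≤ (7 / 16 * ν ^ 2)⁻¹ := inv_anti₀ (by positivity) (hq u hu)
      _ = W := by rw [hW]; field_simp
  have hwc : ContinuousOn (fun u => (ν ^ 2 - u ^ 2)⁻¹) (Set.Icc l h) :=
    ContinuousOn.inv₀ (by fun_prop) fun u hu => (hq0 u hu).ne'
  have hkc : ContinuousOn k (Set.Icc l h) := (S.kcont hl0).mono Set.Icc_subset_Ici_self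
  have hk : ∀ u ∈ Set.Icc l h, |k u| ≤ 4 * (Real.sqrt ν)⁻¹ := by
    intro u hu
    refine abs_le_of_sq_le_sq ?_ (by positivity)
    rw [mul_pow, inv_pow, Real.sq_sqrt hν0.le]
    have h1 := S.en u (hpos u hu)
    have h2 := mul_le_mul_of_nonneg_right (hq u hu) (sq_nonneg (k u))
    have h3 : 7 / 16 * ν ^ 2 * k u ^ 2 ≤ 4 * ν := by nlinarith [sq_nonneg (p u)]
    have h4 : ν * k u ^ 2 ≤ 16 := by
      have : ν * (7 / 16 * (ν * k u ^ 2)) ≤ ν * 4 := by linarith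
      have := le_of_mul_le_mul_left this hν0
      linarith
    rw [← div_eq_mul_inv, le_div_iff₀ hν0]
    linarith
  have h0 : 0 < h := by linarith
  have := ibp_bound (F := fun u => -(p u * ((ν ^ 2 - u ^ 2)⁻¹ * φ u)) +
      k u * (2 * u ^ 2 * (ν ^ 2 - u ^ 2)⁻¹ ^ 2 * φ u + u * (ν ^ 2 - u ^ 2)⁻¹ * deriv φ u))
    (D := fun u => k u * φ u / u)
    (N := fun u => -(k u * ((4 * u * (ν ^ 2 - u ^ 2)⁻¹ ^ 2 + 8 * u ^ 3 * (ν ^ 2 - u ^ 2)⁻¹ ^ 3) * φ u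
      + (4 * u ^ 2 * (ν ^ 2 - u ^ 2)⁻¹ ^ 2 + (ν ^ 2 - u ^ 2)⁻¹) * deriv φ u
      + u * (ν ^ 2 - u ^ 2)⁻¹ * deriv (deriv φ) u)))
    (g := fun u => 4 * (Real.sqrt ν)⁻¹ * ((4 * h * W ^ 2 + 8 * h ^ 3 * W ^ 3)
      + (4 * h ^ 2 * W ^ 2 + W) * |deriv φ u| + h * W * |deriv (deriv φ) u|)) hlh
    ?_ (by simp [e1, e3]) (by simp [e2, e4]) ?_ ?_ ?_ ?_
  · refine this.trans ?_
    rw [intervalIntegral.integral_const_mul, int_lin hc'.abs hc''.abs]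
    have h2 : h ^ 2 * W ≤ 9 / 7 := by
      calc h ^ 2 * W ≤ (3 / 4 * ν) ^ 2 * W := by gcongr
        _ = 9 / 7 := by rw [hW]; field_simp; norm_num
    have h1 : (h - l) * (4 * h * W ^ 2 + 8 * h ^ 3 * W ^ 3) ≤ 19 * W := by
      calc (h - l) * (4 * h * W ^ 2 + 8 * h ^ 3 * W ^ 3) ≤ h * (4 * h * W ^ 2 + 8 * h ^ 3 * W ^ 3) := by
            gcongr; linarith
        _ = (4 * (h ^ 2 * W) + 8 * (h ^ 2 * W) ^ 2) * W := by ring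
        _ ≤ (4 * (9 / 7) + 8 * (9 / 7) ^ 2) * W := by gcongr
        _ ≤ 19 * W := by gcongr; norm_num
    have I1 : 0 ≤ ∫ u in l..h, |deriv φ u| :=
      intervalIntegral.integral_nonneg hlh fun u _ => abs_nonneg _
    have I2 : 0 ≤ ∫ u in l..h, |deriv (deriv φ) u| :=
      intervalIntegral.integral_nonneg hlh fun u _ => abs_nonneg _
    have hm : 0 ≤ m := by linarith
    have hm2 : 0 ≤ m2 := le_trans (by positivity) V2
    have h3 : (4 * h ^ 2 * W ^ 2 + W) * (∫ u in l..h, |deriv φ u|) ≤ 7 * W * m := by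
      have : 4 * h ^ 2 * W ^ 2 + W ≤ 7 * W := by
        calc 4 * h ^ 2 * W ^ 2 + W = (4 * (h ^ 2 * W) + 1) * W := by ring
          _ ≤ (4 * (9 / 7) + 1) * W := by gcongr
          _ ≤ 7 * W := by gcongr; norm_num
      gcongr
    have h4 : h * W * (∫ u in l..h, |deriv (deriv φ) u|) ≤ W * m2 := by
      calc h * W * (∫ u in l..h, |deriv (deriv φ) u|) = W * (h * ∫ u in l..h, |deriv (deriv φ) u|) := by
            ring
        _ ≤ _ := by gcongr
    calc _ ≤ 4 * (Real.sqrt ν)⁻¹ * (19 * W + 7 * W * m + W * m2) := by gcongr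
      _ = (64 / 7) * (19 + 7 * m + m2) * ((Real.sqrt ν)⁻¹ / ν ^ 2) := by rw [hW]; ring
      _ ≤ 10 * (19 + 7 * m + m2) * ((Real.sqrt ν)⁻¹ / ν ^ 2) := by
        gcongr
        norm_num
  · intro u hu
    have hu0 := hpos u hu
    have hq1 := hq0 u hu
    have hwd := (((hasDerivAt_id u).fun_pow 2).const_sub (ν ^ 2)).fun_inv hq1.ne'
    have hid := hasDerivAt_id u
    refine (((S.dp u hu0).fun_mul (hwd.fun_mul (hd u))).fun_neg.fun_add
      ((S.dk u hu0).fun_mul (((((hid.fun_pow 2).const_mul 2).fun_mul (hwd.fun_pow 2)).fun_mul (hd u)).fun_add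
        ((hid.fun_mul hwd).fun_mul (hd' u))))).congr_deriv ?_
    simp only [id]
    have e : u ^ 2 - ν ^ 2 = -(ν ^ 2 - u ^ 2) := by ring
    rw [e]
    generalize ν ^ 2 - u ^ 2 = Q at *
    field_simp
    norm_num
    field_simp
    ring
  · exact (hkc.mul hc.continuousOn).div continuousOn_id fun u hu => (hpos u hu).ne'
  · have e1 := hc.continuousOn (s := Set.Icc l h)
    have e2 := hc'.continuousOn (s := Set.Icc l h)
    have e3 := hc''.continuousOn (s := Set.Icc l h)
    fun_prop
  · intro u hu
    have hu0 := hpos u hu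
    have hq1 := inv_pos.2 (hq0 u hu)
    have hw1 := hw u hu
    have hp1 := hk u hu
    obtain ⟨f1, f2⟩ := hφ u
    set w := (ν ^ 2 - u ^ 2)⁻¹
    rw [abs_neg, abs_mul]
    gcongr
    refine (abs_add_le _ _).trans ?_
    refine (add_le_add_left (abs_add_le _ _) _).trans ?_
    rw [abs_mul _ (deriv φ u), abs_mul _ (deriv (deriv φ) u), abs_of_nonneg (by positivity : 0 ≤ u * w),
      abs_of_nonneg (by positivity : 0 ≤ 4 * u ^ 2 * w ^ 2 + w),
      abs_of_nonneg (by positivity : 0 ≤ (4 * u * w ^ 2 + 8 * u ^ 3 * w ^ 3) * φ u)]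
    have hu2 := hu.2
    have b1 : (4 * u * w ^ 2 + 8 * u ^ 3 * w ^ 3) * φ u ≤ (4 * h * W ^ 2 + 8 * h ^ 3 * W ^ 3) * 1 := by
      gcongr
    rw [mul_one] at b1
    gcongr
  · refine Continuous.intervalIntegrable ?_ _ _
    fun_prop
lemma phiCheck_eq {φ : ℝ → ℝ} {r l : ℝ} (hl : 0 < l) (h1 : ∀ t, t ≤ l → φ t = 0)
    (h2 : ∀ t, 4 * l ≤ t → φ t = 0) :
    phiCheck φ r = ∫ u in l..(4 * l), (Real.cosh (Real.pi * r) * Kn 0 (2 * r) u) * φ u / u := by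
  unfold phiCheck
  rw [MeasureTheory.setIntegral_eq_of_subset_of_forall_sdiff_eq_zero (s := Set.Ioc l (4 * l))
    (t := Set.Ioi 0) measurableSet_Ioi (fun u hu => hl.trans hu.1),
    intervalIntegral.integral_of_le (by linarith), ← MeasureTheory.integral_const_mul]
  · congr 1
    funext u
    have : KBessel (2 * r) u = Kn 0 (2 * r) u := by
      unfold KBessel Kn
      simp
    rw [this]; ring
  · intro u hu
    have : φ u = 0 := by
      rcases le_or_gt u l with h | h
      · exact h1 u h
      · refine h2 u ?_
        by_contra h3
        exact hu.2 ⟨h, by linarith⟩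
    simp [this]

lemma adm_facts {a x T C₀ : ℝ} {M : ℕ} {φ : ℝ → ℝ} (ha : 0 < a) (hx : 0 < x) (hT : 0 < T)
    (hTx : T ≤ x / 3) (hM : 0 < M) (h : IsAdmissible a x T C₀ M φ) {l : ℝ}
    (hl : l = 3 / 8 * (a / x)) :
    ContDiff ℝ 2 φ ∧ (∀ t, t ≤ l → φ t = 0) ∧ (∀ t, 4 * l ≤ t → φ t = 0) ∧
    deriv φ l = 0 ∧ deriv φ (4 * l) = 0 ∧ (∫ u in l..(4 * l), |deriv φ u| ≤ M) ∧
    (4 * l * ∫ u in l..(4 * l), |deriv (deriv φ) u| ≤ 3 * C₀ * M * (x / T)) := by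
  obtain ⟨hs, hb, -, hz1, hz2, hD, p1, p2⟩ := h
  have hs2 : ContDiff ℝ 2 φ := contDiff_infty.1 hs 2
  have hs' : ContDiff ℝ 1 (deriv φ) := by
    have : ContDiff ℝ (1 + 1) φ := by norm_num; exact hs2
    exact (contDiff_succ_iff_deriv.1 this).2.2
  have hl0 : 0 < l := by rw [hl]; positivity
  have z1 : ∀ t, t ≤ l → φ t = 0 := by
    intro t ht
    refine hz1 t (ht.trans ?_)
    rw [hl, le_div_iff₀ (by positivity)]
    have : 3 / 8 * (a / x) * (2 * x + 2 * T) ≤ 3 / 8 * (a / x) * (8 / 3 * x) := by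
      gcongr; linarith
    refine this.trans (le_of_eq ?_)
    field_simp
  have z2 : ∀ t, 4 * l ≤ t → φ t = 0 := by
    intro t ht
    refine hz2 t (le_trans ?_ ht)
    rw [hl, div_le_iff₀ (by linarith)]
    have : 4 * (3 / 8 * (a / x)) * (2 / 3 * x) ≤ 4 * (3 / 8 * (a / x)) * (x - T) := by
      gcongr; linarith
    refine le_trans (le_of_eq ?_) this
    field_simp
    norm_num
  have dz : ∀ t, φ t = 0 → deriv φ t = 0 := by
    intro t ht
    refine IsLocalMin.deriv_eq_zero ?_
    refine Filter.Eventually.of_forall fun s => ?_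
    show φ t ≤ φ s
    rw [ht]; exact (hb s).1
  refine ⟨hs2, z1, z2, dz _ (z1 _ le_rfl), dz _ (z2 _ le_rfl), ?_, ?_⟩
  · have := var_bound (hs2.of_le (by norm_num)) hM p1 (A := 0) (B := 1) (fun t _ => (hb t).1)
      (fun t _ => (hb t).2) hl0.le (by linarith : l ≤ 4 * l)
    simpa using this
  · have := var_bound hs' hM p2 (A := -(C₀ * x ^ 2 / (a * T))) (B := C₀ * x ^ 2 / (a * T))
      (fun t ht => (abs_le.1 (hD t ht)).1) (fun t ht => (abs_le.1 (hD t ht)).2) hl0.le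
      (by linarith : l ≤ 4 * l)
    calc 4 * l * ∫ u in l..(4 * l), |deriv (deriv φ) u|
        ≤ 4 * l * (M * (C₀ * x ^ 2 / (a * T) - -(C₀ * x ^ 2 / (a * T)))) := by gcongr
      _ = 3 * C₀ * M * (x / T) := by rw [hl]; field_simp; ring

lemma num1 {r : ℝ} (hr : 1 ≤ r) : 13500 * Real.exp (-(27 / 100) * (2 * r)) ≤
    16875000 * r ^ (-(3:ℝ)/2) * Real.exp (-r / 2) := by
  have hr0 : 0 < r := by linarith
  have h1 : (r ^ 2)⁻¹ ≤ r ^ (-(3:ℝ)/2) := by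
    have : (r ^ 2)⁻¹ = r ^ (-2 : ℝ) := by
      rw [Real.rpow_neg hr0.le]; norm_num
    rw [this]
    exact Real.rpow_le_rpow_of_exponent_le hr (by norm_num)
  have h2 : Real.exp (-(27 / 100) * (2 * r)) = Real.exp (-(r / 25)) * Real.exp (-r / 2) := by
    rw [← Real.exp_add]; congr 1; ring
  have h3 : Real.exp (-(r / 25)) ≤ 1250 * (r ^ 2)⁻¹ := by
    rw [Real.exp_neg]
    have h4 := Real.quadratic_le_exp_of_nonneg (by positivity : 0 ≤ r / 25)
    have h5 : r ^ 2 / 1250 ≤ Real.exp (r / 25) := by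
      have : 0 < r / 25 := by positivity
      nlinarith
    calc (Real.exp (r / 25))⁻¹ ≤ (r ^ 2 / 1250)⁻¹ := inv_anti₀ (by positivity) h5
      _ = _ := by field_simp
  rw [h2]
  calc 13500 * (Real.exp (-(r / 25)) * Real.exp (-r / 2))
      ≤ 13500 * (1250 * (r ^ 2)⁻¹ * Real.exp (-r / 2)) := by gcongr
    _ = 16875000 * (r ^ 2)⁻¹ * Real.exp (-r / 2) := by ring
    _ ≤ _ := by gcongr

lemma num2 {r : ℝ} (hr : 1 ≤ r) : Real.sqrt (2 * r) / (2 * r) ^ 2 ≤ r ^ (-(3:ℝ)/2) := by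
  have hr0 : 0 < r := by linarith
  have e : r ^ (-(3:ℝ)/2) = Real.sqrt r / r ^ 2 := by
    rw [Real.sqrt_eq_rpow, ← Real.rpow_natCast r 2, ← Real.rpow_sub hr0]; norm_num
  rw [e]
  have h1 : Real.sqrt (2 * r) ≤ 2 * Real.sqrt r := by
    rw [Real.sqrt_le_iff]
    refine ⟨by positivity, ?_⟩
    rw [mul_pow, Real.sq_sqrt hr0.le]; linarith
  calc Real.sqrt (2 * r) / (2 * r) ^ 2 ≤ 2 * Real.sqrt r / (2 * r) ^ 2 := by gcongr
    _ = (1 / 2) * (Real.sqrt r / r ^ 2) := by field_simp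
    _ ≤ 1 * (Real.sqrt r / r ^ 2) := by gcongr; norm_num
    _ = _ := one_mul _

lemma num3 {r : ℝ} (hr : 1 ≤ r) : (Real.sqrt (2 * r))⁻¹ / (2 * r) ^ 2 ≤ r ^ (-(5:ℝ)/2) := by
  have hr0 : 0 < r := by linarith
  have hs : 0 < Real.sqrt r := Real.sqrt_pos.2 hr0
  have e : r ^ (-(5:ℝ)/2) = (Real.sqrt r)⁻¹ / r ^ 2 := by
    rw [Real.sqrt_eq_rpow, ← Real.rpow_neg hr0.le, ← Real.rpow_natCast r 2, ← Real.rpow_sub hr0]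
    norm_num
  rw [e]
  have h1 : Real.sqrt r ≤ Real.sqrt (2 * r) := Real.sqrt_le_sqrt (by linarith)
  have h2 : (Real.sqrt (2 * r))⁻¹ ≤ (Real.sqrt r)⁻¹ := inv_anti₀ hs h1
  gcongr
  linarith

theorem statement12 :
    ∀ δ : ℝ, 0 < δ → δ < 1/2 → ∀ c₁ c₂ C₀ : ℝ, 0 < c₁ → 0 < c₂ → 0 < C₀ →
      ∀ M : ℕ, 0 < M →
        ∃ C : ℝ, 0 < C ∧
          ∀ a x T : ℝ, 0 < a → 0 < x → 0 < T → T ≤ x / 3 →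
            c₁ * x ^ (1 - δ) ≤ T → T ≤ c₂ * x ^ (1 - δ) →
            ∀ φ : ℝ → ℝ, IsAdmissible a x T C₀ M φ →
              (∀ r : ℝ, 1 ≤ r → r ≤ a / (8 * x) →
                |phiCheck φ r| ≤ C * r ^ (-(3:ℝ)/2) * Real.exp (-r / 2)) ∧
              (∀ r : ℝ, max (a / (8 * x)) 1 ≤ r → r ≤ a / x →
                |phiCheck φ r| ≤ C * r⁻¹) ∧
              (∀ r : ℝ, max (a / x) 1 ≤ r →
                |phiCheck φ r| ≤ C * min (r ^ (-(3:ℝ)/2)) (r ^ (-(5:ℝ)/2) * x / T)) := by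
  intro δ _ _ c₁ c₂ C₀ _ _ hC₀ M hM
  have hM0 : (0:ℝ) ≤ M := by positivity
  have hCM : 0 ≤ C₀ * M := by positivity
  obtain ⟨C, hC⟩ : ∃ C : ℝ, C = 16875000 + 1000000 * M + 5 * (3 + M) +
    10 * (19 + 7 * M + 3 * C₀ * M) := ⟨_, rfl⟩
  refine ⟨C, by rw [hC]; positivity, ?_⟩
  intro a x T ha hx hT hTx _ _ φ hφ
  obtain ⟨l, hl⟩ : ∃ l : ℝ, l = 3 / 8 * (a / x) := ⟨_, rfl⟩
  obtain ⟨hs, z1, z2, d1, d2, V1, V2⟩ := adm_facts ha hx hT hTx hM hφ hl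
  have hb := hφ.2.1
  have hX : 0 < a / x := by positivity
  have hl0 : 0 < l := by rw [hl]; positivity
  have hl4 : l ≤ 4 * l := by linarith
  have e8 : a / (8 * x) = a / x / 8 := by rw [div_div]; congr 1; ring
  rw [e8]
  refine ⟨?_, ?_, ?_⟩
  · intro r hr hr2
    rw [phiCheck_eq hl0 z1 z2]
    refine (reg1 (sol_K hr) (by linarith) (by rw [hl]; linarith) hb).trans ((num1 hr).trans ?_)
    gcongr
    rw [hC]; nlinarith
  · intro r hr hr2
    have hr1 : 1 ≤ r := (le_max_right _ _).trans hr
    have hr3 := (le_max_left _ _).trans hr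
    have hr0 : 0 < r := by linarith
    rw [phiCheck_eq hl0 z1 z2]
    refine (reg2 (sol_K hr1) (by linarith) (by rw [hl]; linarith) hl4 hs (z1 _ le_rfl)
      (z2 _ le_rfl) V1).trans ?_
    calc 1000000 / (2 * r) * M = 500000 * M * r⁻¹ := by field_simp; norm_num
      _ ≤ C * r⁻¹ := by
        gcongr
        rw [hC]; nlinarith
  · intro r hr
    have hr1 : 1 ≤ r := (le_max_right _ _).trans hr
    have hr3 := (le_max_left _ _).trans hr
    have hr0 : 0 < r := by linarith
    have hCpos : 0 ≤ C := by rw [hC]; positivity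
    rw [phiCheck_eq hl0 z1 z2, mul_min_of_nonneg _ _ hCpos]
    refine le_min ?_ ?_
    · refine (reg3a (sol_K hr1) (by linarith) hl0 hl4 (by rw [hl]; linarith) hs (z1 _ le_rfl)
        (z2 _ le_rfl) hb V1).trans ?_
      have := num2 hr1
      have hle : 5 * (3 + (M:ℝ)) ≤ C := by rw [hC]; nlinarith
      gcongr
    · refine (reg3b (sol_K hr1) (by linarith) hl0 hl4 (by rw [hl]; linarith) hs (z1 _ le_rfl)
        (z2 _ le_rfl) d1 d2 hb V1 V2).trans ?_
      have hR : 1 ≤ x / T := by rw [le_div_iff₀ hT]; linarith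
      have h3 := num3 hr1
      have hle : 10 * (19 + 7 * (M:ℝ) + 3 * C₀ * M * (x / T)) ≤ C * (x / T) := by
        calc 10 * (19 + 7 * (M:ℝ) + 3 * C₀ * M * (x / T))
            ≤ 10 * ((19 + 7 * (M:ℝ)) * (x / T) + 3 * C₀ * M * (x / T)) := by
              gcongr
              exact le_mul_of_one_le_right (by positivity) hR
          _ = 10 * (19 + 7 * (M:ℝ) + 3 * C₀ * M) * (x / T) := by ring
          _ ≤ C * (x / T) := by
              gcongr
              rw [hC]; nlinarith
      calc _ ≤ C * (x / T) * r ^ (-(5:ℝ)/2) := by gcongr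
        _ = _ := by ring
end

section
/- Let C₀ > 0 and let M be a positive integer. There exists a constant C > 0 such that for all real a, x, T > 0 with T ≤ x/3, every (a,x,T,C₀,M)-admissible test function φ, and every r with max(a/(8x), 1) ≤ r ≤ a/x, one has |φ̌(r)| ≤ C·r^{−1}. -/
open Real

lemma vdc1 (g g' Ψ Ψ' Ψ'' : ℝ → ℝ) (a b l : ℝ) (hab : a ≤ b) (hl : 0 < l)
    (hg : ∀ t ∈ Set.Icc a b, HasDerivAt g (g' t) t) (hgc : ContinuousOn g' (Set.Icc a b))
    (hg' : ∀ t ∈ Set.Icc a b, g' t ≤ 0) (hg0 : ∀ t ∈ Set.Icc a b, 0 ≤ g t)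
    (hΨ : ∀ t ∈ Set.Icc a b, HasDerivAt Ψ (Ψ' t) t)
    (hΨ' : ∀ t ∈ Set.Icc a b, HasDerivAt Ψ' (Ψ'' t) t)
    (hΨc : ContinuousOn Ψ'' (Set.Icc a b)) (hΨ'' : ∀ t ∈ Set.Icc a b, Ψ'' t ≤ 0)
    (h : (∀ t ∈ Set.Icc a b, l ≤ Ψ' t) ∨ (∀ t ∈ Set.Icc a b, Ψ' t ≤ -l)) :
    |∫ t in a..b, g t * sin (Ψ t)| ≤ 3 * g a / l := by
  have ha : a ∈ Set.Icc a b := ⟨le_rfl, hab⟩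
  have hb : b ∈ Set.Icc a b := ⟨hab, le_rfl⟩
  have hu : Set.uIcc a b = Set.Icc a b := Set.uIcc_of_le hab
  have habs : ∀ t ∈ Set.Icc a b, l ≤ |Ψ' t| := by
    intro t ht
    rcases h with h | h
    · exact (h t ht).trans (le_abs_self _)
    · have := h t ht
      have := neg_le_abs (Ψ' t)
      linarith
  have hne : ∀ t ∈ Set.Icc a b, Ψ' t ≠ 0 := by
    intro t ht h0
    have := habs t ht
    rw [h0, abs_zero] at this
    linarith
  have hgcont : ContinuousOn g (Set.Icc a b) := fun t ht => (hg t ht).continuousAt.continuousWithinAt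
  have hΨcont : ContinuousOn Ψ (Set.Icc a b) := fun t ht => (hΨ t ht).continuousAt.continuousWithinAt
  have hΨ'cont : ContinuousOn Ψ' (Set.Icc a b) :=
    fun t ht => (hΨ' t ht).continuousAt.continuousWithinAt
  have hganti : AntitoneOn g (Set.Icc a b) := by
    apply antitoneOn_of_deriv_nonpos (convex_Icc a b) hgcont
    · intro t ht
      exact (hg t (interior_subset ht)).differentiableAt.differentiableWithinAt
    · intro t ht
      rw [(hg t (interior_subset ht)).deriv]
      exact hg' t (interior_subset ht)
  set k' : ℝ → ℝ := fun t => (g' t * Ψ' t - g t * Ψ'' t) / (Ψ' t) ^ 2 with hk'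
  have hkd : ∀ t ∈ Set.Icc a b, HasDerivAt (fun t => g t / Ψ' t) (k' t) t := by
    intro t ht
    exact (hg t ht).div (hΨ' t ht) (hne t ht)
  have hk'c : ContinuousOn k' (Set.Icc a b) := by
    apply ContinuousOn.div
    · exact (hgc.mul hΨ'cont).sub (hgcont.mul hΨc)
    · exact hΨ'cont.pow 2
    · intro t ht
      exact pow_ne_zero 2 (hne t ht)
  set m' : ℝ → ℝ := fun t => -(g' t) / l + g a * (-(Ψ'' t) / (Ψ' t) ^ 2) with hm'
  have hmd : ∀ t ∈ Set.Icc a b, HasDerivAt (fun t => -(g t) / l + g a * (Ψ' t)⁻¹) (m' t) t := by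
    intro t ht
    exact ((hg t ht).neg.div_const l).add (((hΨ' t ht).inv (hne t ht)).const_mul (g a))
  have hm'c : ContinuousOn m' (Set.Icc a b) := by
    apply ContinuousOn.add
    · exact (hgc.neg).div_const l
    · apply ContinuousOn.mul continuousOn_const
      apply ContinuousOn.div hΨc.neg (hΨ'cont.pow 2)
      intro t ht
      exact pow_ne_zero 2 (hne t ht)
  have hkm : ∀ t ∈ Set.Icc a b, |k' t| ≤ m' t := by
    intro t ht
    have h1 : k' t = g' t / Ψ' t + g t * (-(Ψ'' t) / (Ψ' t) ^ 2) := by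
      have := hne t ht
      simp only [hk']
      field_simp
      ring
    rw [h1]
    have hq : 0 ≤ -(Ψ'' t) / (Ψ' t) ^ 2 :=
      div_nonneg (by linarith [hΨ'' t ht]) (sq_nonneg _)
    refine (abs_add_le _ _).trans ?_
    apply add_le_add
    · rw [abs_div, abs_of_nonpos (hg' t ht)]
      exact div_le_div_of_nonneg_left (by linarith [hg' t ht]) hl (habs t ht)
    · rw [abs_of_nonneg (mul_nonneg (hg0 t ht) hq)]
      exact mul_le_mul_of_nonneg_right (hganti ha ht ht.1) hq
  have hI1 : IntervalIntegrable (fun t => k' t * cos (Ψ t)) MeasureTheory.volume a b := by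
    apply ContinuousOn.intervalIntegrable
    rw [hu]
    exact hk'c.mul (continuous_cos.comp_continuousOn hΨcont)
  have hI2 : IntervalIntegrable (fun t => g t * sin (Ψ t)) MeasureTheory.volume a b := by
    apply ContinuousOn.intervalIntegrable
    rw [hu]
    exact hgcont.mul (continuous_sin.comp_continuousOn hΨcont)
  have hI3 : IntervalIntegrable m' MeasureTheory.volume a b := by
    apply ContinuousOn.intervalIntegrable
    rwa [hu]
  have e1 : ∫ t in a..b, (k' t * cos (Ψ t) - g t * sin (Ψ t)) =
      g b / Ψ' b * cos (Ψ b) - g a / Ψ' a * cos (Ψ a) := by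
    apply intervalIntegral.integral_eq_sub_of_hasDerivAt
      (f := fun t => g t / Ψ' t * cos (Ψ t))
    · intro t ht
      rw [hu] at ht
      have := (hkd t ht).mul ((hΨ t ht).cos)
      refine this.congr_deriv ?_
      have h0 := hne t ht
      have h2 : g t / Ψ' t * (-sin (Ψ t) * Ψ' t) = -(g t * sin (Ψ t)) := by field_simp
      linarith
    · exact hI1.sub hI2
  rw [intervalIntegral.integral_sub hI1 hI2] at e1
  have e2 : ∫ t in a..b, m' t = (-(g b) / l + g a * (Ψ' b)⁻¹) - (-(g a) / l + g a * (Ψ' a)⁻¹) := by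
    apply intervalIntegral.integral_eq_sub_of_hasDerivAt
      (f := fun t => -(g t) / l + g a * (Ψ' t)⁻¹) _ hI3
    intro t ht
    rw [hu] at ht
    exact hmd t ht
  have e3 : |∫ t in a..b, k' t * cos (Ψ t)| ≤ ∫ t in a..b, m' t := by
    rw [← Real.norm_eq_abs]
    apply intervalIntegral.norm_integral_le_of_norm_le hab _ hI3
    filter_upwards with t ht
    have ht' : t ∈ Set.Icc a b := ⟨ht.1.le, ht.2⟩
    rw [Real.norm_eq_abs, abs_mul]
    calc |k' t| * |cos (Ψ t)| ≤ |k' t| * 1 :=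
          mul_le_mul_of_nonneg_left (abs_cos_le_one _) (abs_nonneg _)
      _ ≤ m' t := by rw [mul_one]; exact hkm t ht'
  have hbd : ∀ t ∈ Set.Icc a b, |g t / Ψ' t * cos (Ψ t)| ≤ g t / l := by
    intro t ht
    rw [abs_mul, abs_div, abs_of_nonneg (hg0 t ht)]
    calc g t / |Ψ' t| * |cos (Ψ t)| ≤ g t / |Ψ' t| * 1 :=
          mul_le_mul_of_nonneg_left (abs_cos_le_one _) (div_nonneg (hg0 t ht) (abs_nonneg _))
      _ ≤ g t / l := by
          rw [mul_one]
          exact div_le_div_of_nonneg_left (hg0 t ht) hl (habs t ht)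
  have hinv : (Ψ' b)⁻¹ - (Ψ' a)⁻¹ ≤ 1 / l := by
    rcases h with h | h
    · have h1 : 0 < (Ψ' a)⁻¹ := inv_pos.2 (hl.trans_le (h a ha))
      have h2 : (Ψ' b)⁻¹ ≤ 1 / l := by
        rw [one_div]
        exact inv_anti₀ hl (h b hb)
      linarith
    · have h1 : (Ψ' b)⁻¹ < 0 := inv_lt_zero.2 (by linarith [h b hb])
      have h2 : (-Ψ' a)⁻¹ ≤ 1 / l := by
        rw [one_div]
        exact inv_anti₀ hl (by linarith [h a ha])
      rw [inv_neg] at h2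
      linarith
  have hinv' := mul_le_mul_of_nonneg_left hinv (hg0 a ha)
  have e4 : ∫ t in a..b, g t * sin (Ψ t) = (∫ t in a..b, k' t * cos (Ψ t)) -
      (g b / Ψ' b * cos (Ψ b)) + g a / Ψ' a * cos (Ψ a) := by linarith
  have b1 := abs_le.1 (hbd a ha)
  have b2 := abs_le.1 (hbd b hb)
  rw [e2] at e3
  have b3 := abs_le.1 e3
  have e5 : 3 * g a / l = g a / l + g a / l + g a * (1 / l) := by ring
  rw [e4, e5, abs_le]
  have e6 : -(g b) / l = - (g b / l) := by ring
  have e7 : -(g a) / l = - (g a / l) := by ring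
  rw [e6, e7] at b3
  constructor <;> linarith [b1.1, b1.2, b2.1, b2.2, b3.1, b3.2]

lemma vdc2 (g g' Ψ Ψ' Ψ'' : ℝ → ℝ) (a b m η : ℝ) (hab : a ≤ b) (hm : 0 < m) (hη : 0 < η)
    (hg : ∀ t ∈ Set.Icc a b, HasDerivAt g (g' t) t) (hgc : ContinuousOn g' (Set.Icc a b))
    (hg' : ∀ t ∈ Set.Icc a b, g' t ≤ 0) (hg0 : ∀ t ∈ Set.Icc a b, 0 ≤ g t)
    (hΨ : ∀ t ∈ Set.Icc a b, HasDerivAt Ψ (Ψ' t) t)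
    (hΨ' : ∀ t ∈ Set.Icc a b, HasDerivAt Ψ' (Ψ'' t) t)
    (hΨc : ContinuousOn Ψ'' (Set.Icc a b)) (hΨ'' : ∀ t ∈ Set.Icc a b, Ψ'' t ≤ -m) :
    |∫ t in a..b, g t * sin (Ψ t)| ≤ 2 * η * g a + 6 * g a / (m * η) := by
  have ha : a ∈ Set.Icc a b := ⟨le_rfl, hab⟩
  have hb : b ∈ Set.Icc a b := ⟨hab, le_rfl⟩
  have hgcont : ContinuousOn g (Set.Icc a b) := fun t ht => (hg t ht).continuousAt.continuousWithinAt
  have hΨcont : ContinuousOn Ψ (Set.Icc a b) := fun t ht => (hΨ t ht).continuousAt.continuousWithinAt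
  have hΨ'cont : ContinuousOn Ψ' (Set.Icc a b) :=
    fun t ht => (hΨ' t ht).continuousAt.continuousWithinAt
  have hganti : AntitoneOn g (Set.Icc a b) := by
    apply antitoneOn_of_deriv_nonpos (convex_Icc a b) hgcont
    · intro t ht
      exact (hg t (interior_subset ht)).differentiableAt.differentiableWithinAt
    · intro t ht
      rw [(hg t (interior_subset ht)).deriv]
      exact hg' t (interior_subset ht)
  have hslope : AntitoneOn (fun t => Ψ' t + m * t) (Set.Icc a b) := by
    have hd : ∀ t ∈ Set.Icc a b, HasDerivAt (fun t => Ψ' t + m * t) (Ψ'' t + m * 1) t :=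
      fun t ht => (hΨ' t ht).add ((hasDerivAt_id t).const_mul m)
    apply antitoneOn_of_deriv_nonpos (convex_Icc a b)
    · exact fun t ht => (hd t ht).continuousAt.continuousWithinAt
    · intro t ht
      exact (hd t (interior_subset ht)).differentiableAt.differentiableWithinAt
    · intro t ht
      rw [(hd t (interior_subset ht)).deriv]
      linarith [hΨ'' t (interior_subset ht)]
  obtain ⟨z, hz, hz1, hz2⟩ : ∃ z ∈ Set.Icc a b, (a < z → 0 ≤ Ψ' z) ∧ (z < b → Ψ' z ≤ 0) := by
    by_cases h1 : Ψ' a ≤ 0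
    · exact ⟨a, ha, fun h => absurd h (lt_irrefl _), fun _ => h1⟩
    by_cases h2 : 0 ≤ Ψ' b
    · exact ⟨b, hb, fun _ => h2, fun h => absurd h (lt_irrefl _)⟩
    push Not at h1 h2
    obtain ⟨z, hz, hz0⟩ := intermediate_value_Icc' hab hΨ'cont ⟨h2.le, h1.le⟩
    exact ⟨z, hz, fun _ => hz0.ge, fun _ => hz0.le⟩
  have hIntg : ∀ c d, c ∈ Set.Icc a b → d ∈ Set.Icc a b →
      IntervalIntegrable (fun t => g t * sin (Ψ t)) MeasureTheory.volume c d := by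
    intro c d hc hd
    apply ContinuousOn.intervalIntegrable
    apply ContinuousOn.mono (hgcont.mul (continuous_sin.comp_continuousOn hΨcont))
    exact Set.uIcc_subset_Icc hc hd
  have hmη : 0 < m * η := mul_pos hm hη
  have hga := hg0 a ha
  set c := max a (z - η) with hc
  set d := min b (z + η) with hd
  have hac : a ≤ c := le_max_left _ _
  have hcz : c ≤ z := max_le hz.1 (by linarith)
  have hzd : z ≤ d := le_min hz.2 (by linarith)
  have hdb : d ≤ b := min_le_left _ _
  have hcm : c ∈ Set.Icc a b := ⟨hac, hcz.trans hz.2⟩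
  have hdm : d ∈ Set.Icc a b := ⟨hz.1.trans hzd, hdb⟩
  have hnn : 0 ≤ 3 * g a / (m * η) := by positivity
  have p1 : |∫ t in a..c, g t * sin (Ψ t)| ≤ 3 * g a / (m * η) := by
    rcases le_or_gt (z - η) a with h1 | h1
    · rw [hc, max_eq_left h1, intervalIntegral.integral_same, abs_zero]
      exact hnn
    · have hcc : c = z - η := max_eq_right h1.le
      have hsub : Set.Icc a c ⊆ Set.Icc a b := Set.Icc_subset_Icc le_rfl hcm.2
      apply vdc1 g g' Ψ Ψ' Ψ'' a c (m * η) hac hmη (fun t ht => hg t (hsub ht)) (hgc.mono hsub)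
        (fun t ht => hg' t (hsub ht)) (fun t ht => hg0 t (hsub ht)) (fun t ht => hΨ t (hsub ht))
        (fun t ht => hΨ' t (hsub ht)) (hΨc.mono hsub)
        (fun t ht => (hΨ'' t (hsub ht)).trans (by linarith))
      left
      intro t ht
      have q1 := hz1 (by linarith)
      have q2 := hslope (hsub ht) hz (ht.2.trans hcz)
      have q3 : m * t ≤ m * (z - η) := mul_le_mul_of_nonneg_left (hcc ▸ ht.2) hm.le
      simp only at q2
      linarith
  have p3 : |∫ t in d..b, g t * sin (Ψ t)| ≤ 3 * g a / (m * η) := by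
    rcases le_or_gt b (z + η) with h1 | h1
    · rw [hd, min_eq_left h1, intervalIntegral.integral_same, abs_zero]
      exact hnn
    · have hcc : d = z + η := min_eq_right h1.le
      have hsub : Set.Icc d b ⊆ Set.Icc a b := Set.Icc_subset_Icc hdm.1 le_rfl
      have := vdc1 g g' Ψ Ψ' Ψ'' d b (m * η) hdb hmη (fun t ht => hg t (hsub ht)) (hgc.mono hsub)
        (fun t ht => hg' t (hsub ht)) (fun t ht => hg0 t (hsub ht)) (fun t ht => hΨ t (hsub ht))
        (fun t ht => hΨ' t (hsub ht)) (hΨc.mono hsub)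
        (fun t ht => (hΨ'' t (hsub ht)).trans (by linarith)) (by
          right
          intro t ht
          have q1 := hz2 (by linarith)
          have q2 := hslope hz (hsub ht) (hzd.trans ht.1)
          have q3 : m * (z + η) ≤ m * t := mul_le_mul_of_nonneg_left (hcc ▸ ht.1) hm.le
          simp only at q2
          linarith)
      refine this.trans ?_
      have := hganti ha hdm hdm.1
      gcongr
  have p2 : |∫ t in c..d, g t * sin (Ψ t)| ≤ 2 * η * g a := by
    have : ‖∫ t in c..d, g t * sin (Ψ t)‖ ≤ g a * |d - c| := by
      apply intervalIntegral.norm_integral_le_of_norm_le_const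
      intro t ht
      rw [Set.uIoc_of_le (hcz.trans hzd)] at ht
      have htm : t ∈ Set.Icc a b := ⟨hac.trans ht.1.le, ht.2.trans hdb⟩
      rw [Real.norm_eq_abs, abs_mul, abs_of_nonneg (hg0 t htm)]
      calc g t * |sin (Ψ t)| ≤ g t * 1 :=
            mul_le_mul_of_nonneg_left (abs_sin_le_one _) (hg0 t htm)
        _ ≤ g a := by rw [mul_one]; exact hganti ha htm htm.1
    rw [Real.norm_eq_abs] at this
    refine this.trans ?_
    have h1 : |d - c| ≤ 2 * η := by
      rw [abs_of_nonneg (by linarith)]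
      have := le_max_right a (z - η)
      have := min_le_right b (z + η)
      linarith
    nlinarith
  rw [← intervalIntegral.integral_add_adjacent_intervals (hIntg a d ha hdm) (hIntg d b hdm hb),
    ← intervalIntegral.integral_add_adjacent_intervals (hIntg a c ha hcm) (hIntg c d hcm hdm)]
  have e : 6 * g a / (m * η) = 3 * g a / (m * η) + 3 * g a / (m * η) := by ring
  rw [e]
  refine (abs_add_le _ _).trans ?_
  have := abs_add_le (∫ t in a..c, g t * sin (Ψ t)) (∫ t in c..d, g t * sin (Ψ t))
  linarith

lemma cosh_sub_one_le {t : ℝ} (h0 : 0 ≤ t) (h1 : t ≤ 1) : cosh t ≤ 1 + t ^ 2 := by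
  have h := cosh_le_exp_half_sq t
  have h2 : |t ^ 2 / 2| ≤ 1 := by
    rw [abs_of_nonneg (by positivity)]
    nlinarith
  have h3 := (abs_le.1 (abs_exp_sub_one_sub_id_le h2)).2
  nlinarith [mul_nonneg h0 h0, mul_nonneg (mul_nonneg h0 h0) (mul_nonneg (sub_nonneg.2 h1) (by linarith : 0 ≤ 1 + t))]

lemma sinh_le_mul_cosh' {t : ℝ} (h0 : 0 ≤ t) : sinh t ≤ t * cosh t := by
  have hd : ∀ t, HasDerivAt (fun t => t * cosh t - sinh t) (t * sinh t) t := by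
    intro t
    have := ((hasDerivAt_id t).mul (hasDerivAt_cosh t)).sub (hasDerivAt_sinh t)
    refine this.congr_deriv ?_
    simp
  have hm : MonotoneOn (fun t => t * cosh t - sinh t) (Set.Ici 0) := by
    apply monotoneOn_of_deriv_nonneg (convex_Ici 0)
    · exact fun t _ => (hd t).continuousAt.continuousWithinAt
    · exact fun t _ => (hd t).differentiableAt.differentiableWithinAt
    · intro t ht
      rw [(hd t).deriv]
      rw [interior_Ici] at ht
      exact mul_nonneg (le_of_lt ht) (sinh_nonneg_iff.2 (le_of_lt ht))
  have := hm (Set.mem_Ici.2 le_rfl) (Set.mem_Ici.2 h0) h0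
  simp at this
  linarith

/-- the weight -/
noncomputable def wt (q s t : ℝ) : ℝ :=
  exp (-q * cosh t) * (sinh t * cosh t / (sinh t ^ 2 + s ^ 2))

noncomputable def wt' (q s t : ℝ) : ℝ :=
  exp (-q * cosh t) * (-q * sinh t) * (sinh t * cosh t / (sinh t ^ 2 + s ^ 2)) +
  exp (-q * cosh t) * ((s ^ 2 - sinh t ^ 2 * (1 - 2 * s ^ 2)) / (sinh t ^ 2 + s ^ 2) ^ 2)

lemma wt_den {s : ℝ} (hs : 0 < s) (t : ℝ) : 0 < sinh t ^ 2 + s ^ 2 := by positivity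

lemma wt_deriv {q s : ℝ} (hs : 0 < s) (t : ℝ) : HasDerivAt (wt q s) (wt' q s t) t := by
  have hd := (wt_den hs t).ne'
  have h1 : HasDerivAt (fun t => exp (-q * cosh t)) (exp (-q * cosh t) * (-q * sinh t)) t :=
    ((hasDerivAt_cosh t).const_mul (-q)).exp
  have h2 := ((hasDerivAt_sinh t).mul (hasDerivAt_cosh t)).div
    (((hasDerivAt_sinh t).pow 2).add_const (s ^ 2)) hd
  have h3 := h1.mul h2
  refine h3.congr_deriv ?_
  simp only [wt', Pi.mul_apply, Pi.pow_apply, Pi.div_apply]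
  congr 1
  congr 1
  congr 1
  have := cosh_sq t
  push_cast
  ring_nf
  rw [this]
  ring

lemma wt'_cont {q s : ℝ} (hs : 0 < s) : Continuous (wt' q s) := by
  unfold wt'
  have hd := fun t => (wt_den hs t).ne'
  have hd2 := fun t => pow_ne_zero 2 (hd t)
  have hc := continuous_cosh
  have hsn := continuous_sinh
  fun_prop (disch := first | exact hd _ | exact hd2 _)

lemma wt_nonneg {q s t : ℝ} (ht : 0 ≤ t) : 0 ≤ wt q s t := by
  have := sinh_nonneg_iff.2 ht
  have := cosh_pos t
  unfold wt
  positivity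

lemma wt'_nonpos {q s t : ℝ} (hq : 0 ≤ q) (hs : 0 < s) (hs2 : s ≤ 1 / 2) (ht : 2 * s ≤ t) :
    wt' q s t ≤ 0 := by
  have h0 : 0 ≤ t := by linarith
  have h1 := sinh_nonneg_iff.2 h0
  have h1' := self_le_sinh_iff.2 h0
  have h2 := cosh_pos t
  have h3 := wt_den hs t
  have h4 : s ^ 2 - sinh t ^ 2 * (1 - 2 * s ^ 2) ≤ 0 := by
    have a1 : (2 * s) ^ 2 ≤ sinh t ^ 2 := pow_le_pow_left₀ (by linarith) (ht.trans h1') 2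
    have a2 : s ^ 2 ≤ 1 / 4 := by nlinarith
    nlinarith
  unfold wt'
  have e1 : exp (-q * cosh t) * (-q * sinh t) * (sinh t * cosh t / (sinh t ^ 2 + s ^ 2)) =
    - (exp (-q * cosh t) * (q * sinh t) * (sinh t * cosh t / (sinh t ^ 2 + s ^ 2))) := by ring
  have e2 : 0 ≤ exp (-q * cosh t) * (q * sinh t) * (sinh t * cosh t / (sinh t ^ 2 + s ^ 2)) := by
    positivity
  have e3 : exp (-q * cosh t) *
      ((s ^ 2 - sinh t ^ 2 * (1 - 2 * s ^ 2)) / (sinh t ^ 2 + s ^ 2) ^ 2) ≤ 0 :=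
    mul_nonpos_of_nonneg_of_nonpos (exp_pos _).le
      (div_nonpos_of_nonpos_of_nonneg h4 (by positivity))
  linarith

lemma wt_le {q s t : ℝ} (hq : 0 ≤ q) (hs : 0 < s) (ht : 0 < t) (ht1 : t ≤ 1) :
    wt q s t ≤ 2 / t := by
  have h1 := sinh_pos_iff.2 ht
  have h1' := self_le_sinh_iff.2 ht.le
  have h2 := cosh_pos t
  have h3 := wt_den hs t
  have h4 : exp (-q * cosh t) ≤ 1 := by
    rw [exp_le_one_iff]
    nlinarith
  have h5 : cosh t ≤ 2 := by
    have := cosh_sub_one_le ht.le ht1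
    nlinarith
  have h6 : sinh t * cosh t / (sinh t ^ 2 + s ^ 2) ≤ 2 / t := by
    rw [div_le_div_iff₀ h3 ht]
    nlinarith [mul_nonneg h1.le (sub_nonneg.2 h1'), mul_nonneg (mul_nonneg h1.le ht.le) (sub_nonneg.2 h5), sq_nonneg s]
  unfold wt
  calc _ ≤ 1 * (sinh t * cosh t / (sinh t ^ 2 + s ^ 2)) := by
        apply mul_le_mul_of_nonneg_right h4; positivity
    _ ≤ _ := by rwa [one_mul]

lemma osc_bound (r q s B R : ℝ) (hr : 1 ≤ r) (hq : 0 ≤ q) (hs : 0 < s) (hs2 : 24 * r * s ≤ 1)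
    (hB1 : r / 3 ≤ B) (hB2 : B ≤ 12 * r) (hR : 1 ≤ R) :
    |∫ t in (0:ℝ)..R, wt q s t * sin (2 * r * t - B * sinh t)| ≤ 120 := by
  obtain ⟨κ, hκ, hκr⟩ : ∃ κ : ℝ, 1 ≤ κ ∧ κ ^ 3 = r := by
    refine ⟨r ^ ((1:ℝ) / 3), Real.one_le_rpow hr (by norm_num), ?_⟩
    rw [← Real.rpow_natCast, ← Real.rpow_mul (by linarith)]
    norm_num
  have hκ0 : 0 < κ := by linarith
  have hr0 : 0 < r := by linarith
  have hs3 : s ≤ 1 / 2 := by nlinarith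
  set τ : ℝ := κ⁻¹ with hτ
  have hτ0 : 0 < τ := inv_pos.2 hκ0
  have hτκ : τ * κ = 1 := inv_mul_cancel₀ hκ0.ne'
  have hτ1 : τ ≤ 1 := inv_le_one_of_one_le₀ hκ
  have hκr' : κ ≤ r := by rw [← hκr]; nlinarith [mul_nonneg hκ0.le hκ0.le, sq_nonneg (κ - 1)]
  have h2s : ∀ p : ℝ, 0 < p → 1 ≤ 12 * r * p → 2 * s ≤ p := by
    intro p hp h
    by_contra hh
    push Not at hh
    nlinarith
  have h2sτ : 2 * s ≤ τ := by
    apply h2s τ hτ0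
    nlinarith
  set D : ℝ := 2 * r - B with hD
  set Ψ : ℝ → ℝ := fun t => 2 * r * t - B * sinh t with hΨ
  set Ψ' : ℝ → ℝ := fun t => 2 * r - B * cosh t with hΨ'
  set Ψ'' : ℝ → ℝ := fun t => - (B * sinh t) with hΨ''
  have hd1 : ∀ t, HasDerivAt Ψ (Ψ' t) t := by
    intro t
    have := ((hasDerivAt_id t).const_mul (2 * r)).sub ((hasDerivAt_sinh t).const_mul B)
    rw [mul_one] at this
    exact this
  have hd2 : ∀ t, HasDerivAt Ψ' (Ψ'' t) t := by
    intro t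
    exact ((hasDerivAt_cosh t).const_mul B).const_sub (2 * r)
  have hc2 : Continuous Ψ'' := (continuous_const.mul continuous_sinh).neg
  have hcΨ : Continuous Ψ := continuous_iff_continuousAt.2 fun t => (hd1 t).continuousAt
  have hcw : Continuous (wt q s) := continuous_iff_continuousAt.2 fun t => (wt_deriv hs t).continuousAt
  have hB0 : 0 < B := by linarith
  have hIntg : ∀ a b, IntervalIntegrable (fun t => wt q s t * sin (Ψ t)) MeasureTheory.volume a b :=
    fun a b => (hcw.mul (continuous_sin.comp hcΨ)).intervalIntegrable a b
  have hr2 : r * τ ^ 3 = 1 := by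
    rw [← hκr, ← mul_pow, mul_comm, hτκ, one_pow]
  have rA : ∀ p, 0 < p → p ≤ 1 →
      |∫ t in (0:ℝ)..p, wt q s t * sin (Ψ t)| ≤ (2 * |D| + 24 * r * p ^ 2) * p := by
    intro p hp hp1
    have : ‖∫ t in (0:ℝ)..p, wt q s t * sin (Ψ t)‖ ≤ (2 * |D| + 24 * r * p ^ 2) * |p - 0| := by
      apply intervalIntegral.norm_integral_le_of_norm_le_const
      intro t ht
      rw [Set.uIoc_of_le hp.le] at ht
      have ht0 := ht.1
      have ht1 := ht.2.trans hp1
      rw [Real.norm_eq_abs, abs_mul, abs_of_nonneg (wt_nonneg ht0.le)]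
      have k1 := wt_le hq hs ht0 ht1
      have k2 : |sin (Ψ t)| ≤ |Ψ t| := abs_sin_le_abs
      have k3 : |Ψ t| ≤ (|D| + 12 * r * p ^ 2) * t := by
        have e : Ψ t = D * t - B * (sinh t - t) := by simp only [hΨ, hD]; ring
        rw [e]
        refine (abs_sub _ _).trans ?_
        have j1 := self_le_sinh_iff.2 ht0.le
        have j2 := sinh_le_mul_cosh' ht0.le
        have j3 := cosh_sub_one_le ht0.le ht1
        have j4 : sinh t - t ≤ t * p ^ 2 := by
          have : t ^ 2 ≤ p ^ 2 := pow_le_pow_left₀ ht0.le ht.2 2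
          nlinarith
        rw [abs_mul, abs_mul, abs_of_pos ht0, abs_of_pos hB0, abs_of_nonneg (by linarith : 0 ≤ sinh t - t)]
        have j5 : B * (sinh t - t) ≤ 12 * r * (t * p ^ 2) :=
          mul_le_mul hB2 j4 (by linarith) (by linarith)
        linarith
      calc wt q s t * |sin (Ψ t)| ≤ 2 / t * ((|D| + 12 * r * p ^ 2) * t) :=
            mul_le_mul k1 (k2.trans k3) (abs_nonneg _) (by positivity)
        _ = 2 * |D| + 24 * r * p ^ 2 := by field_simp; ring
    rwa [Real.norm_eq_abs, sub_zero, abs_of_pos hp] at this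
  have rC : |∫ t in τ..R, wt q s t * sin (Ψ t)| ≤ 40 := by
    have hm : 0 < κ ^ 2 / 3 := by positivity
    have h := vdc2 (wt q s) (wt' q s) Ψ Ψ' Ψ'' τ R (κ ^ 2 / 3) τ (hτ1.trans hR) hm hτ0
      (fun t _ => wt_deriv hs t) (wt'_cont hs).continuousOn
      (fun t ht => wt'_nonpos hq hs hs3 (h2sτ.trans ht.1))
      (fun t ht => wt_nonneg (hτ0.le.trans ht.1))
      (fun t _ => hd1 t) (fun t _ => hd2 t) hc2.continuousOn (by
        intro t ht
        have j1 := self_le_sinh_iff.2 (hτ0.le.trans ht.1)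
        have j2 : r / 3 * τ ≤ B * sinh t :=
          mul_le_mul hB1 (ht.1.trans j1) hτ0.le hB0.le
        have j3 : r * τ = κ ^ 2 := by
          rw [← hκr]
          calc κ ^ 3 * τ = κ ^ 2 * (τ * κ) := by ring
            _ = _ := by rw [hτκ, mul_one]
        simp only [hΨ'']
        nlinarith)
    refine h.trans ?_
    have k1 := wt_le hq hs hτ0 hτ1
    have k2 : 2 * τ * wt q s τ ≤ 2 * τ * (2 / τ) := mul_le_mul_of_nonneg_left k1 (by positivity)
    have k3 : 2 * τ * (2 / τ) = 4 := by field_simp; norm_num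
    have k4 : 6 * wt q s τ / (κ ^ 2 / 3 * τ) ≤ 6 * (2 / τ) / (κ ^ 2 / 3 * τ) := by
      gcongr
    have k5 : 6 * (2 / τ) / (κ ^ 2 / 3 * τ) = 36 := by
      rw [hτ]
      field_simp
      norm_num
    linarith
  have rAB : |∫ t in (0:ℝ)..τ, wt q s t * sin (Ψ t)| ≤ 80 := by
    rcases le_or_gt (|D|) (24 * κ) with hc | hc
    · refine (rA τ hτ0 hτ1).trans ?_
      have : |D| * τ ≤ 24 := by
        calc |D| * τ ≤ 24 * κ * τ := mul_le_mul_of_nonneg_right hc hτ0.le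
          _ = 24 * (τ * κ) := by ring
          _ = 24 := by rw [hτκ, mul_one]
      nlinarith
    · have hD0 : 0 < |D| := by linarith
      set p : ℝ := |D|⁻¹ with hp
      have hp0 : 0 < p := inv_pos.2 hD0
      have hpD : |D| * p = 1 := mul_inv_cancel₀ hD0.ne'
      have hDr : |D| ≤ 12 * r := by
        rw [abs_le]; constructor <;> simp only [hD] <;> linarith
      have hpτ : p ≤ τ := inv_anti₀ hκ0 (by linarith)
      have h2sp : 2 * s ≤ p := h2s p hp0 (by
        rw [← hpD]; exact mul_le_mul_of_nonneg_right hDr hp0.le)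
      have b1 := rA p hp0 (hpτ.trans hτ1)
      have b1' : (2 * |D| + 24 * r * p ^ 2) * p ≤ 26 := by
        have : r * p ^ 3 ≤ r * τ ^ 3 := by gcongr
        nlinarith
      have b2 := vdc1 (wt q s) (wt' q s) Ψ Ψ' Ψ'' p τ (|D| / 2) hpτ (by linarith)
        (fun t _ => wt_deriv hs t) (wt'_cont hs).continuousOn
        (fun t ht => wt'_nonpos hq hs hs3 (h2sp.trans ht.1))
        (fun t ht => wt_nonneg (hp0.le.trans ht.1))
        (fun t _ => hd1 t) (fun t _ => hd2 t) hc2.continuousOn (by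
          intro t ht
          have j1 := sinh_nonneg_iff.2 (hp0.le.trans ht.1)
          simp only [hΨ'']
          nlinarith) (by
          have key : ∀ t ∈ Set.Icc p τ, B * (cosh t - 1) ≤ |D| / 2 := by
            intro t ht
            have ht0 := hp0.le.trans ht.1
            have j3 := cosh_sub_one_le ht0 (ht.2.trans hτ1)
            have j4 : t ^ 2 ≤ τ ^ 2 := pow_le_pow_left₀ ht0 ht.2 2
            have j5 : B * (cosh t - 1) ≤ 12 * r * τ ^ 2 :=
              mul_le_mul hB2 (by linarith) (by linarith [one_le_cosh t]) (by linarith)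
            have j6 : r * τ ^ 2 = κ := by
              rw [← hκr]
              calc κ ^ 3 * τ ^ 2 = κ * (τ * κ) ^ 2 := by ring
                _ = _ := by rw [hτκ]; ring
            nlinarith
          have e : ∀ t, Ψ' t = D - B * (cosh t - 1) := by
            intro t; simp only [hΨ', hD]; ring
          rcases le_or_gt 0 D with hDs | hDs
          · left
            intro t ht
            have := key t ht
            rw [abs_of_nonneg hDs] at *
            rw [e]
            linarith
          · right
            intro t ht
            have : 0 ≤ B * (cosh t - 1) := mul_nonneg hB0.le (by linarith [one_le_cosh t])
            rw [abs_of_neg hDs] at *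
            rw [e]
            linarith)
      have b3 : 3 * wt q s p / (|D| / 2) ≤ 12 := by
        have k1 := wt_le hq hs hp0 (hpτ.trans hτ1)
        have k2 : 2 / p = 2 * |D| := by rw [hp]; field_simp
        rw [k2] at k1
        rw [div_le_iff₀ (by linarith)]
        linarith
      rw [← intervalIntegral.integral_add_adjacent_intervals (hIntg 0 p) (hIntg p τ)]
      refine (abs_add_le _ _).trans ?_
      linarith
  rw [← intervalIntegral.integral_add_adjacent_intervals (hIntg 0 τ) (hIntg τ R)]
  refine (abs_add_le _ _).trans ?_
  linarith

lemma wt_cont {q s : ℝ} (hs : 0 < s) : Continuous (wt q s) :=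
  continuous_iff_continuousAt.2 fun t => (wt_deriv hs t).continuousAt

noncomputable def fC (r v : ℝ) (z : ℂ) : ℂ :=
  Complex.exp (2 * r * Complex.I * z) * (Complex.sinh z / Complex.cosh z) *
    Complex.exp (-v * Complex.cosh z)

lemma cosh_xy (x y : ℝ) : Complex.cosh (x + y * Complex.I) =
    ((cosh x * cos y : ℝ) : ℂ) + ((sinh x * sin y : ℝ) : ℂ) * Complex.I := by
  rw [Complex.cosh_add, Complex.cosh_mul_I, Complex.sinh_mul_I]
  push_cast
  ring

lemma sinh_xy (x y : ℝ) : Complex.sinh (x + y * Complex.I) =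
    ((sinh x * cos y : ℝ) : ℂ) + ((cosh x * sin y : ℝ) : ℂ) * Complex.I := by
  rw [Complex.sinh_add, Complex.cosh_mul_I, Complex.sinh_mul_I]
  push_cast
  ring

lemma cosh_re (x y : ℝ) : (Complex.cosh (x + y * Complex.I)).re = cosh x * cos y := by
  rw [cosh_xy]
  simp only [Complex.mul_im, Complex.mul_re, Complex.add_im, Complex.add_re, Complex.ofReal_re,
      Complex.ofReal_im, Complex.I_re, Complex.I_im, mul_zero, mul_one, sub_zero, add_zero, zero_add, zero_mul]

lemma exp_split (r x y : ℝ) : Complex.exp (2 * r * Complex.I * (x + y * Complex.I)) =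
    ((exp (-(2 * r * y)) : ℝ) : ℂ) * Complex.exp (((2 * r * x : ℝ) : ℂ) * Complex.I) := by
  rw [Complex.ofReal_exp, ← Complex.exp_add]
  congr 1
  push_cast
  linear_combination (2 * r * y : ℂ) * Complex.I_mul_I

lemma tanh_split (x y : ℝ) (hy : 0 < cos y) :
    Complex.sinh (x + y * Complex.I) / Complex.cosh (x + y * Complex.I) =
    ((sinh x * cosh x / (sinh x ^ 2 + cos y ^ 2) : ℝ) : ℂ) +
    ((cos y * sin y / (sinh x ^ 2 + cos y ^ 2) : ℝ) : ℂ) * Complex.I := by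
  have hne : Complex.cosh (x + y * Complex.I) ≠ 0 := by
    intro h
    have := cosh_re x y
    rw [h, Complex.zero_re] at this
    have := mul_pos (cosh_pos x) hy
    linarith
  have hd : (0:ℝ) < sinh x ^ 2 + cos y ^ 2 := by positivity
  rw [div_eq_iff hne, cosh_xy, sinh_xy]
  have h1 := cosh_sq x
  have h2 := sin_sq_add_cos_sq y
  apply Complex.ext
  · simp only [Complex.mul_im, Complex.mul_re, Complex.add_im, Complex.add_re, Complex.ofReal_re,
      Complex.ofReal_im, Complex.I_re, Complex.I_im, mul_zero, mul_one, sub_zero, add_zero, zero_add, zero_mul]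
    rw [div_mul_eq_mul_div, div_mul_eq_mul_div, ← sub_div, eq_div_iff hd.ne']
    linear_combination (-(sinh x * cos y)) * h1 + (sinh x * cos y) * h2
  · simp only [Complex.mul_im, Complex.mul_re, Complex.add_im, Complex.add_re, Complex.ofReal_re,
      Complex.ofReal_im, Complex.I_re, Complex.I_im, mul_zero, mul_one, sub_zero, add_zero, zero_add, zero_mul]
    rw [div_mul_eq_mul_div, div_mul_eq_mul_div, ← add_div, eq_div_iff hd.ne']
    ring

lemma exp_split2 (v x y : ℝ) : Complex.exp (-v * Complex.cosh (x + y * Complex.I)) =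
    ((exp (-(v * cos y) * cosh x) : ℝ) : ℂ) *
      Complex.exp (((-(v * sin y * sinh x) : ℝ) : ℂ) * Complex.I) := by
  rw [Complex.ofReal_exp, ← Complex.exp_add, cosh_xy]
  congr 1
  push_cast
  ring

lemma fC_eq (r v x y : ℝ) (hy : 0 < cos y) : fC r v (x + y * Complex.I) =
    ((exp (-(2 * r * y)) * exp (-(v * cos y) * cosh x) : ℝ) : ℂ) *
    (((sinh x * cosh x / (sinh x ^ 2 + cos y ^ 2) : ℝ) : ℂ) +
    ((cos y * sin y / (sinh x ^ 2 + cos y ^ 2) : ℝ) : ℂ) * Complex.I) *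
    Complex.exp (((2 * r * x - v * sin y * sinh x : ℝ) : ℂ) * Complex.I) := by
  have : Complex.exp (((2 * r * x - v * sin y * sinh x : ℝ) : ℂ) * Complex.I) =
      Complex.exp (((2 * r * x : ℝ) : ℂ) * Complex.I) *
      Complex.exp (((-(v * sin y * sinh x) : ℝ) : ℂ) * Complex.I) := by
    rw [← Complex.exp_add]
    congr 1
    push_cast
    ring
  rw [fC, tanh_split x y hy, exp_split, exp_split2, this]
  push_cast
  ring

lemma fC_im (r v x y : ℝ) (hy : 0 < cos y) : (fC r v (x + y * Complex.I)).im =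
    exp (-(2 * r * y)) * (wt (v * cos y) (cos y) x * sin (2 * r * x - v * sin y * sinh x) +
      exp (-(v * cos y) * cosh x) * (cos y * sin y / (sinh x ^ 2 + cos y ^ 2)) *
        cos (2 * r * x - v * sin y * sinh x)) := by
  rw [fC_eq r v x y hy, Complex.exp_mul_I, ← Complex.ofReal_cos, ← Complex.ofReal_sin]
  simp only [Complex.mul_im, Complex.mul_re, Complex.add_im, Complex.add_re, Complex.ofReal_re,
    Complex.ofReal_im, Complex.I_re, Complex.I_im, wt]
  ring

lemma fC_re_axis (r v y : ℝ) (hy : 0 < cos y) : (fC r v ((0:ℝ) + y * Complex.I)).re = 0 := by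
  rw [fC_eq r v 0 y hy]
  have e : 2 * r * 0 - v * sin y * sinh 0 = 0 := by rw [sinh_zero]; ring
  rw [e, Complex.ofReal_zero, zero_mul, Complex.exp_zero, mul_one, sinh_zero, zero_mul, zero_div]
  simp only [Complex.mul_re, Complex.add_im, Complex.add_re, Complex.ofReal_re, Complex.mul_im,
      Complex.ofReal_im, Complex.I_re, Complex.I_im, mul_zero, mul_one, sub_zero, add_zero, zero_add, zero_mul]

lemma fC_im_real (r v x : ℝ) : (fC r v (x + (0:ℝ) * Complex.I)).im =
    sin (2 * r * x) * tanh x * exp (-v * cosh x) := by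
  rw [fC_im r v x 0 (by simp), Real.tanh_eq_sinh_div_cosh, wt]
  have := cosh_pos x
  have h := cosh_sq x
  simp
  rw [← h]
  field_simp

lemma fC_norm (r v x y s : ℝ) (hr : 0 ≤ r) (hv : 0 ≤ v) (hy0 : 0 ≤ y) (hs : 0 < s) (hy : s ≤ cos y) :
    ‖fC r v (x + y * Complex.I)‖ ≤ s⁻¹ * exp (-(v * s) * cosh x) := by
  have hc := cosh_pos x
  have n1 : ‖Complex.exp (2 * r * Complex.I * (x + y * Complex.I))‖ ≤ 1 := by
    rw [exp_split, norm_mul, Complex.norm_exp_ofReal_mul_I, Complex.norm_real, mul_one,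
      Real.norm_eq_abs, abs_of_pos (exp_pos _), exp_le_one_iff]
    have : 0 ≤ 2 * r * y := by positivity
    linarith
  have n2 : ‖Complex.sinh (x + y * Complex.I) / Complex.cosh (x + y * Complex.I)‖ ≤ s⁻¹ := by
    rw [norm_div]
    have a1 : cosh x * s ≤ ‖Complex.cosh (x + y * Complex.I)‖ := by
      refine le_trans ?_ (Complex.re_le_norm _)
      rw [cosh_re]
      exact mul_le_mul_of_nonneg_left hy hc.le
    have a2 : ‖Complex.sinh (x + y * Complex.I)‖ ≤ cosh x := by
      rw [sinh_xy, Complex.norm_add_mul_I]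
      rw [sqrt_le_left hc.le]
      have h1 := cosh_sq x
      have h2 := sin_sq_add_cos_sq y
      have : (sinh x * cos y) ^ 2 + (cosh x * sin y) ^ 2 = sinh x ^ 2 + sin y ^ 2 := by
        rw [mul_pow, mul_pow, h1]
        linear_combination (sinh x ^ 2) * h2
      rw [this, h1]
      nlinarith [sq_nonneg (cos y)]
    rw [div_le_iff₀ (lt_of_lt_of_le (by positivity) a1)]
    calc _ ≤ cosh x := a2
      _ = s⁻¹ * (cosh x * s) := by field_simp
      _ ≤ _ := mul_le_mul_of_nonneg_left a1 (by positivity)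
  have n3 : ‖Complex.exp (-v * Complex.cosh (x + y * Complex.I))‖ ≤ exp (-(v * s) * cosh x) := by
    rw [exp_split2, norm_mul, Complex.norm_exp_ofReal_mul_I, Complex.norm_real, mul_one,
      Real.norm_eq_abs, abs_of_pos (exp_pos _), exp_le_exp]
    have : v * s * cosh x ≤ v * cos y * cosh x := by gcongr
    linarith
  rw [fC, norm_mul, norm_mul]
  calc _ ≤ 1 * s⁻¹ * exp (-(v * s) * cosh x) := by gcongr
    _ = _ := by ring

lemma fC_diff (r v : ℝ) (z : ℂ) (hz : 0 < cos z.im) : DifferentiableAt ℂ (fC r v) z := by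
  have hne : Complex.cosh z ≠ 0 := by
    intro h
    have := cosh_re z.re z.im
    rw [Complex.re_add_im, h, Complex.zero_re] at this
    have := mul_pos (cosh_pos z.re) hz
    linarith
  unfold fC
  have h1 : DifferentiableAt ℂ Complex.sinh z := Complex.differentiable_sinh z
  have h2 : DifferentiableAt ℂ Complex.cosh z := Complex.differentiable_cosh z
  apply DifferentiableAt.mul
  · apply DifferentiableAt.mul
    · fun_prop
    · exact h1.div h2 hne
  · exact (h2.const_mul _).cexp

lemma contour (r v θ R : ℝ) (hθ0 : 0 ≤ θ) (hθ : θ < π / 2) :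
    ∫ t in (0:ℝ)..R, sin (2 * r * t) * tanh t * exp (-v * cosh t) =
    (∫ t in (0:ℝ)..R, (fC r v (t + θ * Complex.I)).im) -
      (∫ y in (0:ℝ)..θ, fC r v (R + y * Complex.I)).re := by
  have hcos : ∀ y ∈ Set.Icc 0 θ, 0 < cos y := fun y hy =>
    cos_pos_of_mem_Ioo ⟨by linarith [hy.1, pi_pos], by linarith [hy.2]⟩
  have h := Complex.integral_boundary_rect_eq_zero_of_differentiableOn (fC r v) 0 (R + θ * Complex.I) (by
    intro z hz
    apply DifferentiableAt.differentiableWithinAt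
    apply fC_diff
    have := hz.2
    simp [Set.uIcc_of_le hθ0] at this
    exact hcos _ this)
  simp only [Complex.zero_re, Complex.zero_im, Complex.add_re, Complex.ofReal_re, Complex.mul_re, Complex.I_re,
    Complex.ofReal_im, Complex.I_im, Complex.add_im, Complex.mul_im, mul_zero, mul_one, sub_zero, add_zero, zero_add, zero_mul, smul_eq_mul] at h
  have hi1 : ∀ y ∈ Set.Icc 0 θ, Continuous (fun t : ℝ => fC r v (t + y * Complex.I)) := by
    intro y hy
    rw [continuous_iff_continuousAt]
    intro t
    have : ContinuousAt (fC r v) (t + y * Complex.I) :=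
      (fC_diff r v _ (by simpa using hcos y hy)).continuousAt
    exact ContinuousAt.comp (f := fun t : ℝ => ((t:ℂ) + y * Complex.I)) this (by fun_prop)
  have hi2 : ∀ x : ℝ, ContinuousOn (fun y : ℝ => fC r v (x + y * Complex.I)) (Set.Icc 0 θ) := by
    intro x y hy
    apply ContinuousAt.continuousWithinAt
    have : ContinuousAt (fC r v) (x + y * Complex.I) :=
      (fC_diff r v _ (by simpa using hcos y hy)).continuousAt
    exact ContinuousAt.comp (f := fun y : ℝ => ((x:ℂ) + y * Complex.I)) this (by fun_prop)
  have him : ∀ y ∈ Set.Icc 0 θ, (∫ t in (0:ℝ)..R, (fC r v (t + y * Complex.I)).im) =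
      (∫ t in (0:ℝ)..R, fC r v (t + y * Complex.I)).im := by
    intro y hy
    exact Complex.imCLM.intervalIntegral_comp_comm ((hi1 y hy).intervalIntegrable 0 R)
  have hre : (∫ y in (0:ℝ)..θ, (fC r v ((0:ℝ) + y * Complex.I)).re) =
      (∫ y in (0:ℝ)..θ, fC r v ((0:ℝ) + y * Complex.I)).re := by
    have hii : IntervalIntegrable (fun y : ℝ => fC r v ((0:ℝ) + y * Complex.I))
        MeasureTheory.volume 0 θ := by
      apply ContinuousOn.intervalIntegrable
      rw [Set.uIcc_of_le hθ0]
      exact hi2 0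
    exact Complex.reCLM.intervalIntegral_comp_comm hii
  have hre0 : (∫ y in (0:ℝ)..θ, (fC r v ((0:ℝ) + y * Complex.I)).re) = 0 := by
    rw [intervalIntegral.integral_congr (g := fun _ => (0:ℝ)), intervalIntegral.integral_zero]
    intro y hy
    rw [Set.uIcc_of_le hθ0] at hy
    exact fC_re_axis r v y (hcos y hy)
  have h2 := congrArg Complex.im h
  simp only [Complex.sub_im, Complex.add_im, Complex.mul_im, Complex.I_re, Complex.I_im, zero_mul,
    one_mul, zero_add, Complex.zero_im] at h2
  have e0 := him 0 ⟨le_rfl, hθ0⟩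
  simp only [fC_im_real] at e0
  rw [e0, him θ ⟨hθ0, le_rfl⟩]
  rw [hre0] at hre
  simp only [zero_mul, add_zero, Complex.ofReal_zero] at hre h2 ⊢
  simp only [zero_add] at hre h2 ⊢
  linarith

lemma second_bound (q s c R : ℝ) (Φ : ℝ → ℝ) (hq : 0 ≤ q) (hs : 0 < s) (hc : |c| ≤ 1)
    (hR : 0 ≤ R) :
    |∫ t in (0:ℝ)..R, exp (-q * cosh t) * (s * c / (sinh t ^ 2 + s ^ 2)) * cos (Φ t)| ≤ 2 := by
  have hI : Continuous fun t : ℝ => s * (s ^ 2 + t ^ 2)⁻¹ := by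
    have : ∀ t : ℝ, s ^ 2 + t ^ 2 ≠ 0 := fun t => by positivity
    fun_prop (disch := first | exact this _)
  have h : ‖∫ t in (0:ℝ)..R, exp (-q * cosh t) * (s * c / (sinh t ^ 2 + s ^ 2)) * cos (Φ t)‖ ≤
      ∫ t in (0:ℝ)..R, s * (s ^ 2 + t ^ 2)⁻¹ := by
    apply intervalIntegral.norm_integral_le_of_norm_le hR _ (hI.intervalIntegrable 0 R)
    filter_upwards with t ht
    have h1 := self_le_sinh_iff.2 ht.1.le
    have h2 : t ^ 2 ≤ sinh t ^ 2 := pow_le_pow_left₀ ht.1.le h1 2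
    have h3 := cosh_pos t
    have hp : 0 < s ^ 2 + t ^ 2 := by positivity
    have hp2 : 0 < sinh t ^ 2 + s ^ 2 := by positivity
    rw [Real.norm_eq_abs, abs_mul, abs_mul, abs_of_pos (exp_pos _), abs_div, abs_mul, abs_of_pos hs,
      abs_of_pos hp2]
    have k1 : exp (-q * cosh t) ≤ 1 := by
      rw [exp_le_one_iff]
      nlinarith
    have k2 : s * |c| / (sinh t ^ 2 + s ^ 2) ≤ s * (s ^ 2 + t ^ 2)⁻¹ := by
      rw [← div_eq_mul_inv]
      apply div_le_div₀ hs.le _ hp (by linarith)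
      nlinarith
    calc _ ≤ 1 * (s * (s ^ 2 + t ^ 2)⁻¹) * 1 := by
          apply mul_le_mul _ (abs_cos_le_one _) (abs_nonneg _) (by positivity)
          exact mul_le_mul k1 k2 (by positivity) zero_le_one
      _ = _ := by ring
  rw [Real.norm_eq_abs] at h
  refine h.trans ?_
  rw [intervalIntegral.integral_const_mul, integral_inv_sq_add_sq hs.ne', ← mul_assoc,
    mul_inv_cancel₀ hs.ne', one_mul, zero_div, arctan_zero, sub_zero]
  have := arctan_lt_pi_div_two (R / s)
  linarith [pi_lt_four]

lemma finite_bound (r v R : ℝ) (hr : 1 ≤ r) (hv1 : 3 * r / 8 ≤ v) (hv2 : v ≤ 12 * r) (hR : 1 ≤ R) :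
    |∫ t in (0:ℝ)..R, sin (2 * r * t) * tanh t * exp (-v * cosh t)| ≤
      400 * exp (-(π * r)) + 2 * ((sin (1 / (24 * r)))⁻¹ * exp (-(v * sin (1 / (24 * r))) * R)) := by
  set δ : ℝ := 1 / (24 * r) with hδ
  have hδ0 : 0 < δ := by positivity
  have hδr : 24 * r * δ = 1 := by rw [hδ]; field_simp
  have hδ1 : δ ≤ 1 / 24 := by nlinarith
  have hs0 : 0 < sin δ := sin_pos_of_pos_of_lt_pi hδ0 (by linarith [pi_gt_three])
  have hsδ : sin δ ≤ δ := sin_le hδ0.le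
  have hc1 : cos δ ≤ 1 := cos_le_one δ
  have hc2 : 9 / 10 ≤ cos δ := by
    have := one_sub_sq_div_two_le_cos (x := δ)
    nlinarith
  have hv0 : 0 < v := by linarith
  set θ : ℝ := π / 2 - δ with hθ
  have hθ0 : 0 ≤ θ := by linarith [pi_gt_three]
  have hcθ : cos θ = sin δ := by rw [hθ, cos_pi_div_two_sub]
  have hsθ : sin θ = cos δ := by rw [hθ, sin_pi_div_two_sub]
  have hcp : 0 < cos θ := by rwa [hcθ]
  rw [contour r v θ R hθ0 (by linarith)]
  have b1 : |∫ t in (0:ℝ)..R, (fC r v (t + θ * Complex.I)).im| ≤ 400 * exp (-(π * r)) := by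
    have e : ∀ t : ℝ, (fC r v (t + θ * Complex.I)).im = exp (-(2 * r * θ)) *
      (wt (v * sin δ) (sin δ) t * sin (2 * r * t - v * cos δ * sinh t) +
      exp (-(v * sin δ) * cosh t) * (sin δ * cos δ / (sinh t ^ 2 + sin δ ^ 2)) *
        cos (2 * r * t - v * cos δ * sinh t)) := by
      intro t
      rw [fC_im r v t θ hcp, hcθ, hsθ]
    simp only [e]
    have hq : 0 ≤ v * sin δ := by positivity
    rw [intervalIntegral.integral_const_mul, intervalIntegral.integral_add]
    · have p1 := osc_bound r (v * sin δ) (sin δ) (v * cos δ) R hr hq hs0 (by nlinarith)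
        (by nlinarith) (by nlinarith) hR
      have p2 := second_bound (v * sin δ) (sin δ) (cos δ) R
        (fun t => 2 * r * t - v * cos δ * sinh t) hq hs0 (abs_cos_le_one _) (by linarith)
      rw [abs_mul, abs_of_pos (exp_pos _)]
      have p3 := (abs_add_le _ _).trans (add_le_add p1 p2)
      have p4 : exp (-(2 * r * θ)) ≤ 3 * exp (-(π * r)) := by
        have : -(2 * r * θ) = 1 / 12 + -(π * r) := by
          rw [hθ]
          nlinarith
        rw [this, exp_add]
        have : exp (1 / 12) ≤ 3 := by
          have := exp_one_lt_d9
          have : exp (1 / 12) ≤ exp 1 := exp_le_exp.2 (by norm_num)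
          linarith
        exact mul_le_mul_of_nonneg_right this (exp_pos _).le
      calc _ ≤ (3 * exp (-(π * r))) * (120 + 2) :=
            mul_le_mul p4 p3 (abs_nonneg _) (by positivity)
        _ ≤ _ := by nlinarith [exp_pos (-(π * r))]
    · apply Continuous.intervalIntegrable
      exact (wt_cont hs0).mul (continuous_sin.comp (by
        have := continuous_sinh
        fun_prop))
    · apply Continuous.intervalIntegrable
      have h1 := continuous_sinh
      have h2 := continuous_cosh
      have hd := fun t => (wt_den hs0 t).ne'
      fun_prop (disch := first | exact hd _)
  have b2 : |(∫ y in (0:ℝ)..θ, fC r v (R + y * Complex.I)).re| ≤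
      2 * ((sin δ)⁻¹ * exp (-(v * sin δ) * R)) := by
    refine (Complex.abs_re_le_norm _).trans ?_
    have : ‖∫ y in (0:ℝ)..θ, fC r v (R + y * Complex.I)‖ ≤
        ((sin δ)⁻¹ * exp (-(v * sin δ) * R)) * |θ - 0| := by
      apply intervalIntegral.norm_integral_le_of_norm_le_const
      intro y hy
      rw [Set.uIoc_of_le hθ0] at hy
      have : sin δ ≤ cos y := by
        rw [← hcθ]
        exact cos_le_cos_of_nonneg_of_le_pi hy.1.le (by linarith [pi_gt_three]) hy.2
      refine (fC_norm r v R y (sin δ) (by linarith) hv0.le hy.1.le hs0 this).trans ?_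
      have hcR : R ≤ cosh R := by
        have := self_le_sinh_iff.2 (by linarith : 0 ≤ R)
        have := sinh_lt_cosh R
        linarith
      have : exp (-(v * sin δ) * cosh R) ≤ exp (-(v * sin δ) * R) := by
        rw [exp_le_exp]
        nlinarith [mul_pos hv0 hs0]
      gcongr
    refine this.trans ?_
    rw [sub_zero, abs_of_nonneg hθ0, mul_comm]
    gcongr
    linarith [pi_lt_four]
  exact (abs_sub _ _).trans (add_le_add b1 b2)

open MeasureTheory Filter Topology in
lemma tendsto_exp_cosh (v : ℝ) (hv : 0 < v) : Tendsto (fun t => exp (-v * cosh t)) atTop (𝓝 0) := by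
  have h1 : Tendsto (fun t : ℝ => exp (-v * t)) atTop (𝓝 0) := by
    apply tendsto_exp_atBot.comp
    exact tendsto_id.const_mul_atTop_of_neg (by linarith)
  refine squeeze_zero' (Eventually.of_forall fun t => (exp_pos _).le) ?_ h1
  filter_upwards [eventually_ge_atTop 0] with t ht
  rw [exp_le_exp]
  have := self_le_sinh_iff.2 ht
  have := sinh_lt_cosh t
  nlinarith

open MeasureTheory Filter Topology in
lemma integrable_exp_cosh (v : ℝ) (hv : 0 < v) :
    IntegrableOn (fun t => exp (-v * cosh t)) (Set.Ioi 0) := by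
  have hc := continuous_cosh
  refine Integrable.mono' (exp_neg_integrableOn_Ioi 0 hv) (by fun_prop) ?_
  rw [ae_restrict_iff' measurableSet_Ioi]
  filter_upwards with t ht
  rw [Real.norm_eq_abs, abs_of_pos (exp_pos _), exp_le_exp]
  have := self_le_sinh_iff.2 (le_of_lt ht)
  have := sinh_lt_cosh t
  nlinarith

open MeasureTheory Filter Topology in
lemma integrable_sinh_exp_cosh (v : ℝ) (hv : 0 < v) :
    IntegrableOn (fun t => sinh t * exp (-v * cosh t)) (Set.Ioi 0) := by
  have hd : ∀ t, HasDerivAt (fun t => -v⁻¹ * exp (-v * cosh t)) (sinh t * exp (-v * cosh t)) t := by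
    intro t
    refine ((((hasDerivAt_cosh t).const_mul (-v)).exp).const_mul (-v⁻¹)).congr_deriv ?_
    field_simp
  apply integrableOn_Ioi_deriv_of_nonneg (g := fun t => -v⁻¹ * exp (-v * cosh t)) (l := -v⁻¹ * 0)
  · exact (hd 0).continuousAt.continuousWithinAt
  · exact fun t _ => hd t
  · intro t ht
    have := sinh_nonneg_iff.2 (le_of_lt ht)
    positivity
  · exact (tendsto_exp_cosh v hv).const_mul _

/-- primitive of the Bessel function against `du/u` (up to sign) -/
noncomputable def Pf (r v : ℝ) : ℝ :=
  ∫ t in Set.Ioi (0:ℝ), sin (2 * r * t) * tanh t * exp (-v * cosh t)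

lemma continuous_tanh' : Continuous Real.tanh := by
  have : Real.tanh = fun x => sinh x / cosh x := by ext x; exact tanh_eq_sinh_div_cosh x
  rw [this]
  exact continuous_sinh.div continuous_cosh fun x => (cosh_pos x).ne'

open MeasureTheory Filter Topology in
lemma integrable_Pf (r v : ℝ) (hv : 0 < v) :
    IntegrableOn (fun t => sin (2 * r * t) * tanh t * exp (-v * cosh t)) (Set.Ioi 0) := by
  have hc := continuous_cosh
  have ht := continuous_tanh'
  refine Integrable.mono' (integrable_exp_cosh v hv)
    (Continuous.aestronglyMeasurable (by fun_prop)) ?_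
  filter_upwards with t
  rw [Real.norm_eq_abs, abs_mul, abs_mul, abs_of_pos (exp_pos _)]
  have h1 := abs_sin_le_one (2 * r * t)
  have h2 : |tanh t| ≤ 1 := (abs_tanh_lt_one t).le
  have : |sin (2 * r * t)| * |tanh t| ≤ 1 := mul_le_one₀ h1 (abs_nonneg _) h2
  exact mul_le_of_le_one_left (exp_pos _).le this

open MeasureTheory Filter Topology in
lemma Pf_deriv (r v : ℝ) (hv : 0 < v) :
    HasDerivAt (Pf r) (-(2 * r * (KBessel (2 * r) v / v))) v := by
  have hc := continuous_cosh
  have hsn := continuous_sinh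
  have ht := continuous_tanh'
  have key := hasDerivAt_integral_of_dominated_loc_of_deriv_le
    (μ := volume.restrict (Set.Ioi (0:ℝ)))
    (F := fun v t => sin (2 * r * t) * tanh t * exp (-v * cosh t))
    (F' := fun v t => - (sin (2 * r * t) * (sinh t * exp (-v * cosh t))))
    (x₀ := v) (s := Set.Ioi (v / 2)) (bound := fun t => sinh t * exp (-(v / 2) * cosh t))
    (Ioi_mem_nhds (by linarith))
    (Eventually.of_forall fun x => Continuous.aestronglyMeasurable (by fun_prop))
    (integrable_Pf r v hv)
    (Continuous.aestronglyMeasurable (by fun_prop))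
    (by
      rw [ae_restrict_iff' measurableSet_Ioi]
      filter_upwards with t ht x hx
      have h1 := sinh_nonneg_iff.2 (le_of_lt ht)
      rw [norm_neg, Real.norm_eq_abs, abs_mul, abs_of_nonneg (by positivity : 0 ≤ sinh t * exp (-x * cosh t))]
      have h2 : exp (-x * cosh t) ≤ exp (-(v / 2) * cosh t) := by
        rw [exp_le_exp]
        have := cosh_pos t
        have : v / 2 < x := hx
        nlinarith
      calc _ ≤ 1 * (sinh t * exp (-x * cosh t)) :=
            mul_le_mul_of_nonneg_right (abs_sin_le_one _) (by positivity)
        _ ≤ _ := by rw [one_mul]; gcongr)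
    (integrable_sinh_exp_cosh (v / 2) (by linarith))
    (by
      filter_upwards with t x _
      have := ((((hasDerivAt_id x).neg.mul_const (cosh t)).exp).const_mul (sin (2 * r * t) * tanh t))
      refine this.congr_deriv ?_
      have hc := (cosh_pos t).ne'
      rw [tanh_eq_sinh_div_cosh]
      simp
      field_simp)
  refine key.2.congr_deriv ?_
  have hi1 : IntegrableOn (fun t => exp (-v * cosh t) * cos (2 * r * t)) (Set.Ioi 0) := by
    refine Integrable.mono' (integrable_exp_cosh v hv) (Continuous.aestronglyMeasurable (by fun_prop)) ?_
    filter_upwards with t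
    rw [Real.norm_eq_abs, abs_mul, abs_of_pos (exp_pos _)]
    exact mul_le_of_le_one_right (exp_pos _).le (abs_cos_le_one _)
  have hi2 : IntegrableOn (fun t => - (sin (2 * r * t) * (sinh t * exp (-v * cosh t)))) (Set.Ioi 0) := key.1
  have hz : ∫ t in Set.Ioi (0:ℝ), (2 * r * (exp (-v * cosh t) * cos (2 * r * t)) +
      v * (- (sin (2 * r * t) * (sinh t * exp (-v * cosh t))))) = 0 - sin (2 * r * 0) * exp (-v * cosh 0) := by
    have hd : ∀ t, HasDerivAt (fun t => sin (2 * r * t) * exp (-v * cosh t))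
        (2 * r * (exp (-v * cosh t) * cos (2 * r * t)) +
      v * (- (sin (2 * r * t) * (sinh t * exp (-v * cosh t))))) t := by
      intro t
      have h1 : HasDerivAt (fun t => sin (2 * r * t)) (cos (2 * r * t) * (2 * r * 1)) t :=
        ((hasDerivAt_id t).const_mul (2 * r)).sin
      have h2 : HasDerivAt (fun t => exp (-v * cosh t)) (exp (-v * cosh t) * (-v * sinh t)) t :=
        ((hasDerivAt_cosh t).const_mul (-v)).exp
      refine (h1.mul h2).congr_deriv ?_
      ring
    apply integral_Ioi_of_hasDerivAt_of_tendsto (f := fun t => sin (2 * r * t) * exp (-v * cosh t))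
    · exact (hd 0).continuousAt.continuousWithinAt
    · exact fun t _ => hd t
    · exact (hi1.const_mul _).add (hi2.const_mul _)
    · refine squeeze_zero_norm (fun t => ?_) (tendsto_exp_cosh v hv)
      rw [Real.norm_eq_abs, abs_mul, abs_of_pos (exp_pos _)]
      exact mul_le_of_le_one_left (exp_pos _).le (abs_sin_le_one _)
  rw [integral_add (hi1.const_mul _) (hi2.const_mul _), integral_const_mul, integral_const_mul] at hz
  simp only [mul_zero, sin_zero, zero_mul, sub_zero] at hz
  have hK : KBessel (2 * r) v = ∫ t in Set.Ioi (0:ℝ), exp (-v * cosh t) * cos (2 * r * t) := rfl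
  rw [← hK] at hz
  have e : ∀ I : ℝ, 2 * r * KBessel (2 * r) v + v * I = 0 → I = -(2 * r * (KBessel (2 * r) v / v)) := by
    intro I h
    field_simp
    linarith
  exact e _ hz

open MeasureTheory Filter Topology in
lemma Pf_bound (r v : ℝ) (hr : 1 ≤ r) (hv1 : 3 * r / 8 ≤ v) (hv2 : v ≤ 12 * r) :
    |Pf r v| ≤ 400 * exp (-(π * r)) := by
  have hv : 0 < v := by linarith
  have h1 := (intervalIntegral_tendsto_integral_Ioi 0 (integrable_Pf r v hv) tendsto_id).abs
  have hs0 : 0 < sin (1 / (24 * r)) := by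
    apply sin_pos_of_pos_of_lt_pi (by positivity)
    have : 1 / (24 * r) ≤ 1 := by
      rw [div_le_one (by positivity)]
      linarith
    linarith [pi_gt_three]
  have h2 : Tendsto (fun R : ℝ => 400 * exp (-(π * r)) +
      2 * ((sin (1 / (24 * r)))⁻¹ * exp (-(v * sin (1 / (24 * r))) * R))) atTop
      (𝓝 (400 * exp (-(π * r)) + 2 * ((sin (1 / (24 * r)))⁻¹ * 0))) := by
    apply Tendsto.const_add
    apply Tendsto.const_mul
    apply Tendsto.const_mul
    apply tendsto_exp_atBot.comp
    exact tendsto_id.const_mul_atTop_of_neg (by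
      have := mul_pos hv hs0
      linarith)
  rw [mul_zero, mul_zero, add_zero] at h2
  refine le_of_tendsto_of_tendsto h1 h2 ?_
  filter_upwards [eventually_ge_atTop 1] with R hR
  exact finite_bound r v R hr hv1 hv2 hR

open MeasureTheory Filter Topology in
lemma KBessel_cont (ν : ℝ) : ContinuousOn (KBessel ν) (Set.Ioi 0) := by
  intro v hv
  have hv : 0 < v := hv
  apply ContinuousAt.continuousWithinAt
  have hc := continuous_cosh
  unfold KBessel
  apply continuousAt_of_dominated (bound := fun t => exp (-(v / 2) * cosh t))
  · exact Eventually.of_forall fun x => Continuous.aestronglyMeasurable (by fun_prop)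
  · filter_upwards [Ioi_mem_nhds (by linarith : v / 2 < v)] with x hx
    filter_upwards with t
    rw [Real.norm_eq_abs, abs_mul, abs_of_pos (exp_pos _)]
    refine (mul_le_of_le_one_right (exp_pos _).le (abs_cos_le_one _)).trans ?_
    rw [exp_le_exp]
    have := cosh_pos t
    have : v / 2 < x := hx
    nlinarith
  · exact integrable_exp_cosh (v / 2) (by linarith)
  · filter_upwards with t
    apply Continuous.continuousAt
    fun_prop

lemma piece_var_s14 (f : ℝ → ℝ) (hf : ContDiff ℝ 1 f) (h01 : ∀ t, 0 ≤ f t ∧ f t ≤ 1) (a b : ℝ)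
    (hab : a ≤ b) (h : MonotoneOn f (Set.Icc a b) ∨ AntitoneOn f (Set.Icc a b)) :
    ∫ t in a..b, |deriv f t| ≤ 1 := by
  have hc : Continuous (deriv f) := hf.continuous_deriv le_rfl
  have hd : ∀ t, HasDerivAt f (deriv f t) t := fun t =>
    (hf.differentiable (by norm_num) t).hasDerivAt
  have hI : ∫ t in a..b, deriv f t = f b - f a :=
    intervalIntegral.integral_eq_sub_of_hasDerivAt (fun t _ => hd t) (hc.intervalIntegrable a b)
  have hin : ∀ t ∈ Set.Ioo a b, derivWithin f (Set.Icc a b) t = deriv f t := fun t ht =>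
    derivWithin_of_mem_nhds (Icc_mem_nhds ht.1 ht.2)
  have hcl : ∀ (g : ℝ → ℝ), Continuous g → (∀ t ∈ Set.Ioo a b, 0 ≤ g t) → a < b →
      ∀ t ∈ Set.Icc a b, 0 ≤ g t := by
    intro g hg h hlt t ht
    rw [← closure_Ioo hlt.ne] at ht
    exact closure_minimal (t := {t | 0 ≤ g t}) h (isClosed_le continuous_const hg) ht
  have hfb := h01 b
  have hfa := h01 a
  rcases hab.eq_or_lt with rfl | hlt
  · simp
  rcases h with h | h
  · have hn := hcl (deriv f) hc (fun t ht => by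
      rw [← hin t ht]; exact h.derivWithin_nonneg) hlt
    have : ∫ t in a..b, |deriv f t| = ∫ t in a..b, deriv f t := by
      apply intervalIntegral.integral_congr
      intro t ht
      rw [Set.uIcc_of_le hab] at ht
      exact abs_of_nonneg (hn t ht)
    rw [this, hI]
    linarith
  · have hn := hcl (fun t => -deriv f t) hc.neg (fun t ht => by
      have := h.derivWithin_nonpos (x := t)
      rw [hin t ht] at this
      linarith) hlt
    have : ∫ t in a..b, |deriv f t| = ∫ t in a..b, -deriv f t := by
      apply intervalIntegral.integral_congr
      intro t ht
      rw [Set.uIcc_of_le hab] at ht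
      exact abs_of_nonpos (by linarith [hn t ht])
    rw [this, intervalIntegral.integral_neg, hI]
    linarith

lemma total_var (f : ℝ → ℝ) (hf : ContDiff ℝ 1 f) (h01 : ∀ t, 0 ≤ f t ∧ f t ≤ 1) (M : ℕ)
    (hM : 0 < M) (h : PiecewiseMono f M) (α β : ℝ) (hα : 0 ≤ α) (hαβ : α ≤ β) :
    ∫ t in α..β, |deriv f t| ≤ M := by
  obtain ⟨a, ha0, ham, hp, hl⟩ := h
  have hc : Continuous (fun t => |deriv f t|) := (hf.continuous_deriv le_rfl).abs
  have hi := fun c d => hc.intervalIntegrable (μ := MeasureTheory.volume) c d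
  have key : ∀ n : ℕ, n < M → ∫ t in (0:ℝ)..a n, |deriv f t| ≤ n := by
    intro n
    induction n with
    | zero => intro _; rw [ha0]; simp
    | succ n ih =>
      intro hn
      rw [← intervalIntegral.integral_add_adjacent_intervals (hi 0 (a n)) (hi (a n) (a (n + 1)))]
      have := ih (by omega)
      have := piece_var_s14 f hf h01 (a n) (a (n + 1)) (ham (Nat.le_succ n)) (hp n hn)
      push_cast
      linarith
  set L := max β (a (M - 1)) with hL
  have k1 := key (M - 1) (by omega)
  have k2 := piece_var_s14 f hf h01 (a (M - 1)) L (le_max_right _ _) (by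
    rcases hl with h | h
    · left; exact h.mono Set.Icc_subset_Ici_self
    · right; exact h.mono Set.Icc_subset_Ici_self)
  have k3 : ∫ t in α..β, |deriv f t| ≤ ∫ t in (0:ℝ)..L, |deriv f t| := by
    apply intervalIntegral.integral_mono_interval hα hαβ (le_max_left _ _) _ (hi 0 L)
    filter_upwards with t
    exact abs_nonneg _
  rw [← intervalIntegral.integral_add_adjacent_intervals (hi 0 (a (M - 1))) (hi (a (M - 1)) L)] at k3
  have : ((M - 1 : ℕ) : ℝ) = M - 1 := by
    rw [Nat.cast_sub (by omega)]; simp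
  linarith

theorem statement14 :
    ∀ C₀ : ℝ, 0 < C₀ → ∀ M : ℕ, 0 < M →
      ∃ C : ℝ, 0 < C ∧
        ∀ a x T : ℝ, 0 < a → 0 < x → 0 < T → T ≤ x / 3 →
          ∀ φ : ℝ → ℝ, IsAdmissible a x T C₀ M φ →
            ∀ r : ℝ, max (a / (8 * x)) 1 ≤ r → r ≤ a / x →
              |phiCheck φ r| ≤ C * r⁻¹ := by
  intro C₀ _ M hM
  have hM' : (0:ℝ) < M := by exact_mod_cast hM
  refine ⟨200 * M, by positivity, ?_⟩
  intro a x T ha hx hT hTx φ hφ r hr1 hr2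
  obtain ⟨hsm, h01, _, hlo, hhi, _, hpm, _⟩ := hφ
  have hr : 1 ≤ r := (le_max_right _ _).trans hr1
  have hr8 : a / (8 * x) ≤ r := (le_max_left _ _).trans hr1
  have hr0 : 0 < r := by linarith
  have hrx : r * x ≤ a := by rwa [le_div_iff₀ hx] at hr2
  have har : a ≤ r * (8 * x) := by rwa [div_le_iff₀ (by positivity)] at hr8
  have hxT : 0 < x - T := by linarith
  set α := a / (2 * x + 2 * T) with hα
  set β := a / (x - T) with hβ
  have hα1 : 3 * r / 8 ≤ α := by
    rw [hα, le_div_iff₀ (by positivity)]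
    nlinarith
  have hβ1 : β ≤ 12 * r := by
    rw [hβ, div_le_iff₀ hxT]
    nlinarith
  have hαβ : α ≤ β := div_le_div_of_nonneg_left ha.le hxT (by linarith)
  have hα0 : 0 < α := by linarith
  have hsm1 : ContDiff ℝ 1 φ := hsm.of_le (by exact_mod_cast le_top)
  have hdc : Continuous (deriv φ) := hsm1.continuous_deriv le_rfl
  have hdφ : ∀ t, HasDerivAt φ (deriv φ t) t := fun t =>
    (hsm1.differentiable (by norm_num) t).hasDerivAt
  have hu : Set.uIcc α β = Set.Icc α β := Set.uIcc_of_le hαβ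
  have hKc : ContinuousOn (fun u => KBessel (2 * r) u / u) (Set.Icc α β) := by
    apply ContinuousOn.div ((KBessel_cont (2 * r)).mono fun u hu => hα0.trans_le hu.1) continuousOn_id
    intro u hu
    exact (hα0.trans_le hu.1).ne'
  have e1 : ∫ u in Set.Ioi (0:ℝ), KBessel (2 * r) u * φ u / u =
      ∫ u in α..β, KBessel (2 * r) u * φ u / u := by
    rw [intervalIntegral.integral_of_le hαβ]
    apply MeasureTheory.setIntegral_eq_of_subset_of_forall_sdiff_eq_zero measurableSet_Ioi
    · intro u hu
      exact hα0.trans hu.1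
    · intro u hu
      have : φ u = 0 := by
        by_cases h : u ≤ α
        · exact hlo u h
        · apply hhi u
          by_contra h2
          push Not at h h2
          exact hu.2 ⟨h, h2.le⟩
      rw [this]; simp
  have e2 := intervalIntegral.integral_mul_deriv_eq_deriv_mul (a := α) (b := β)
    (u := φ) (v := Pf r) (u' := deriv φ) (v' := fun u => -(2 * r * (KBessel (2 * r) u / u)))
    (fun t _ => hdφ t) (fun t ht => by
      rw [hu] at ht
      exact Pf_deriv r t (hα0.trans_le ht.1)) (hdc.intervalIntegrable _ _) (by
      apply ContinuousOn.intervalIntegrable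
      rw [hu]
      exact (continuousOn_const.mul hKc).neg)
  rw [hlo α le_rfl, hhi β le_rfl] at e2
  have e3 : ∫ u in α..β, φ u * -(2 * r * (KBessel (2 * r) u / u)) =
      (-(2 * r)) * ∫ u in α..β, KBessel (2 * r) u * φ u / u := by
    rw [← intervalIntegral.integral_const_mul]
    congr 1
    ext u
    ring
  have e4 : 2 * r * ∫ u in α..β, KBessel (2 * r) u * φ u / u = ∫ u in α..β, deriv φ u * Pf r u := by
    rw [e3] at e2
    linarith
  have e5 : |∫ u in α..β, deriv φ u * Pf r u| ≤ M * (400 * exp (-(π * r))) := by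
    have hb : ‖∫ u in α..β, deriv φ u * Pf r u‖ ≤ ∫ u in α..β, |deriv φ u| * (400 * exp (-(π * r))) := by
      apply intervalIntegral.norm_integral_le_of_norm_le hαβ
      · filter_upwards with u hu
        rw [Real.norm_eq_abs, abs_mul]
        exact mul_le_mul_of_nonneg_left
          (Pf_bound r u hr (hα1.trans hu.1.le) (hu.2.trans hβ1)) (abs_nonneg _)
      · exact (hdc.abs.mul continuous_const).intervalIntegrable _ _
    rw [intervalIntegral.integral_mul_const] at hb
    refine hb.trans ?_
    exact mul_le_mul_of_nonneg_right (total_var φ hsm1 h01 M hM hpm α β hα0.le hαβ) (by positivity)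
  have hcosh : cosh (π * r) ≤ exp (π * r) := by
    rw [cosh_eq]
    have : exp (-(π * r)) ≤ exp (π * r) := exp_le_exp.2 (by nlinarith [pi_pos])
    linarith
  have e6 : ∫ u in α..β, KBessel (2 * r) u * φ u / u = (∫ u in α..β, deriv φ u * Pf r u) / (2 * r) := by
    rw [← e4]; field_simp
  rw [phiCheck, e1, e6, abs_mul, abs_div, abs_of_pos (cosh_pos _), abs_of_pos (by positivity : 0 < 2 * r)]
  calc _ ≤ exp (π * r) * (M * (400 * exp (-(π * r))) / (2 * r)) := by gcongr
    _ = (exp (π * r) * exp (-(π * r))) * (200 * M * r⁻¹) := by field_simp; ring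
    _ = _ := by rw [← exp_add, add_neg_cancel, exp_zero, one_mul]
end
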